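/- Let Ω ⊂ ℝⁿ be a simply connected, bounded Lipschitz domain, let f ∈ C²([0,∞)) be strictly convex with f(0) = f'(0) = 0, satisfying the linear growth condition νt − L ≤ f(t) ≤ L(t+1) and the bound f''(t) ≤ L(1+t)⁻¹ for all t ≥ 0, and let T₀ ∈ W^{2,∞}(Ω;ℝ^{N×n}) satisfy ‖T₀‖_{L^∞(Ω;ℝ^{N×n})} < f^∞(1). Then the dual problem associated to the minimisation of 𝔉 (with integrand F(·) = f(|·|)) possesses a unique solution σ ∈ W^{1,2}_loc(Ω;ℝ^{N×n}) ∩ L^∞_⊥(Ω;ℝ^{N×n}), and it is given by σ = f'(|∇u|)|∇u|⁻¹ ∇u − T₀ ℒⁿ-almost everywhere in Ω, where u ∈ W^{1,1}(Ω;ℝ^N) is the minimiser of 𝔉 in W^{1,1}(Ω;ℝ^N). -/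

import Mathlib

open MeasureTheory Filter Topology Set
open scoped ENNReal RealInnerProductSpace

noncomputable section

/-- Euclidean space `ℝⁿ`. -/
abbrev EVec (n : ℕ) := EuclideanSpace ℝ (Fin n)

/-- Frobenius inner product of two "matrices". -/
def mdot {ι κ : Type*} [Fintype ι] [Fintype κ] (A B : ι → κ → ℝ) : ℝ :=
  ∑ a, ∑ i, A a i * B a i

/-- Frobenius norm. -/
noncomputable def mnorm {ι κ : Type*} [Fintype ι] [Fintype κ] (A : ι → κ → ℝ) : ℝ :=
  Real.sqrt (mdot A A)

/-- Euclidean norm of a vector given as a tuple. -/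
noncomputable def vnorm {ι : Type*} [Fintype ι] (v : ι → ℝ) : ℝ :=
  Real.sqrt (∑ a, v a ^ 2)

/-- `Ω ⊆ ℝⁿ` is a (nonempty, open, connected) Lipschitz domain: every boundary point has
a neighbourhood on which `Ω` can be flattened to a half space by a bi-Lipschitz map. -/
def IsLipschitzDomain {n : ℕ} (Ω : Set (EVec n)) : Prop :=
  IsOpen Ω ∧ Ω.Nonempty ∧ IsConnected Ω ∧
  ∀ x ∈ frontier Ω, ∃ (U : Set (EVec n)) (h hinv : EVec n → EVec n) (K : NNReal)
      (e : EVec n),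
    ‖e‖ = 1 ∧ IsOpen U ∧ x ∈ U ∧ LipschitzOnWith K h U ∧
    LipschitzOnWith K hinv (h '' U) ∧ (∀ y ∈ U, hinv (h y) = y) ∧
    h '' (U ∩ Ω) = (h '' U) ∩ {y : EVec n | 0 < ⟪e, y⟫}

/-- `Du` is the weak (distributional) gradient of `u` on `Ω`, and both are integrable;
i.e. `u ∈ W^{1,1}(Ω; ℝ^ι)` with weak gradient `Du`. -/
def HasWeakDerivOn {n : ℕ} {ι : Type*} [Fintype ι] (Ω : Set (EVec n))
    (u : EVec n → ι → ℝ) (Du : EVec n → ι → Fin n → ℝ) : Prop :=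
  IntegrableOn u Ω volume ∧ IntegrableOn Du Ω volume ∧
  ∀ φ : EVec n → ℝ, ContDiff ℝ 1 φ → HasCompactSupport φ → tsupport φ ⊆ Ω →
    ∀ (a : ι) (i : Fin n),
      ∫ x in Ω, u x a * fderiv ℝ φ x (EuclideanSpace.single i 1) =
        - ∫ x in Ω, Du x a i * φ x

/-- `u ∈ W^{1,2}(Ω;ℝ^ι)` with weak gradient `Du`. -/
def MemW12 {n : ℕ} {ι : Type*} [Fintype ι] (Ω : Set (EVec n))
    (u : EVec n → ι → ℝ) (Du : EVec n → ι → Fin n → ℝ) : Prop :=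
  HasWeakDerivOn Ω u Du ∧ IntegrableOn (fun x => vnorm (u x) ^ 2) Ω volume ∧
    IntegrableOn (fun x => mnorm (Du x) ^ 2) Ω volume

/-- vanishing mean value `(u)_Ω = 0`. -/
def ZeroMean {n : ℕ} {ι : Type*} [Fintype ι] (Ω : Set (EVec n))
    (u : EVec n → ι → ℝ) : Prop :=
  ∀ a : ι, ∫ x in Ω, u x a = 0

/-- The `L^∞(Ω)` norm of a matrix field (w.r.t. the pointwise Frobenius norm). -/
noncomputable def linfNormOn {n N : ℕ} (Ω : Set (EVec n))
    (T : EVec n → Fin N → Fin n → ℝ) : ℝ≥0∞ :=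
  essSup (fun x => ENNReal.ofReal (mnorm (T x))) (volume.restrict Ω)

/-- `T ∈ W^{1,∞}(Ω)`: bounded and Lipschitz on `Ω`. -/
def MemW1inf {n N : ℕ} (Ω : Set (EVec n)) (T : EVec n → Fin N → Fin n → ℝ) : Prop :=
  ∃ C : NNReal, (∀ x ∈ Ω, ‖T x‖ ≤ C) ∧ LipschitzOnWith C T Ω

/-- `T ∈ W^{2,∞}(Ω)`: `T` is bounded with bounded Lipschitz derivative on `Ω`. -/
def MemW2inf {n N : ℕ} (Ω : Set (EVec n)) (T : EVec n → Fin N → Fin n → ℝ) : Prop :=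
  ∃ (C : NNReal) (DT : EVec n → EVec n →L[ℝ] (Fin N → Fin n → ℝ)),
    (∀ x ∈ Ω, ‖T x‖ ≤ C) ∧ (∀ x ∈ Ω, HasFDerivWithinAt T (DT x) Ω x) ∧
    (∀ x ∈ Ω, ‖DT x‖ ≤ C) ∧ LipschitzOnWith C DT Ω

/-- The nonlinear map `A(z) = f'(|z|) z / |z|` (equal to `0` at `z = 0`). -/
noncomputable def Amap {N n : ℕ} (f' : ℝ → ℝ) (z : Fin N → Fin n → ℝ) :
    Fin N → Fin n → ℝ :=
  fun a i => (f' (mnorm z) / mnorm z) * z a i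

/-- `u` is a weak solution of the Neumann problem for the integrand `f(|·|)` and datum `T₀`. -/
def IsWeakSolution {n N : ℕ} (Ω : Set (EVec n)) (f' : ℝ → ℝ)
    (T₀ : EVec n → Fin N → Fin n → ℝ)
    (u : EVec n → Fin N → ℝ) (Du : EVec n → Fin N → Fin n → ℝ) : Prop :=
  HasWeakDerivOn Ω u Du ∧
  ∀ φ Dφ, HasWeakDerivOn Ω φ Dφ →
    ∫ x in Ω, mdot (Amap f' (Du x)) (Dφ x) = ∫ x in Ω, mdot (T₀ x) (Dφ x)

/-- The functional `𝔉[w] = ∫_Ω (f(|∇w|) − T₀ · ∇w) dx` (as a function of the gradient). -/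
noncomputable def FF {n N : ℕ} (Ω : Set (EVec n)) (f : ℝ → ℝ)
    (T₀ : EVec n → Fin N → Fin n → ℝ) (Du : EVec n → Fin N → Fin n → ℝ) : ℝ :=
  ∫ x in Ω, (f (mnorm (Du x)) - mdot (T₀ x) (Du x))

/-- The regularised functional `𝔉_k[w] = 𝔉[w] + (2k)⁻¹ ∫_Ω |∇w|² dx`. -/
noncomputable def FFk {n N : ℕ} (Ω : Set (EVec n)) (f : ℝ → ℝ)
    (T₀ : EVec n → Fin N → Fin n → ℝ) (k : ℕ)
    (Du : EVec n → Fin N → Fin n → ℝ) : ℝ :=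
  FF Ω f T₀ Du + (2 * (k : ℝ))⁻¹ * ∫ x in Ω, mnorm (Du x) ^ 2

end

/-- The functional `𝓕[w] = ∫_Ω (F(∇w) − T₀·∇w) dx` for a general integrand `F`. -/
noncomputable def FFgen {n N : ℕ} (Ω : Set (EVec n)) (F : (Fin N → Fin n → ℝ) → ℝ)
    (T₀ : EVec n → Fin N → Fin n → ℝ) (Du : EVec n → Fin N → Fin n → ℝ) : ℝ :=
  ∫ x in Ω, (F (Du x) - mdot (T₀ x) (Du x))

/-- The elementary matrix with a `1` in position `(a,i)`. -/
def basisMat {N n : ℕ} (a : Fin N) (i : Fin n) : Fin N → Fin n → ℝ :=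
  fun a' i' => if a' = a ∧ i' = i then 1 else 0

/-- The gradient `D_z F(z)` of `F : ℝ^{N×n} → ℝ`, as a matrix. -/
noncomputable def DFmat {N n : ℕ} (F : (Fin N → Fin n → ℝ) → ℝ)
    (z : Fin N → Fin n → ℝ) : Fin N → Fin n → ℝ :=
  fun a i => fderiv ℝ F z (basisMat a i)

/-- `χ ∈ L^∞_⊥(Ω;ℝ^{N×n})`: a bounded measurable matrix field which annihilates all
`W^{1,1}`-gradients. -/
def MemLinfPerp {n N : ℕ} (Ω : Set (EVec n)) (χ : EVec n → Fin N → Fin n → ℝ) : Prop :=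
  AEStronglyMeasurable χ (volume.restrict Ω) ∧ (∃ C : ℝ, ∀ x ∈ Ω, mnorm (χ x) ≤ C) ∧
  ∀ (w : EVec n → Fin N → ℝ) (Dw : EVec n → Fin N → Fin n → ℝ),
    HasWeakDerivOn Ω w Dw → ∫ x in Ω, mdot (χ x) (Dw x) = 0

/-- The shifted convex conjugate `F*(z*) + F(0) = sup_w (z*·w − F(w) + F(0)) ∈ [0,∞]`,
valued in `ℝ≥0∞` so that infeasible points (`F*(z*) = ∞`) are handled correctly. -/
noncomputable def FstarShift {N n : ℕ} (F : (Fin N → Fin n → ℝ) → ℝ)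
    (z : Fin N → Fin n → ℝ) : ℝ≥0∞ :=
  ⨆ w : Fin N → Fin n → ℝ, ENNReal.ofReal (mdot z w - F w + F 0)

/-- The dual functional `ℛ_{T₀}[χ] = −∫_Ω F*(T₀+χ) dx`, valued in `EReal` (it equals
`F(0)·|Ω| − ∫_Ω (F*(T₀+χ) + F(0)) dx`, where the last integrand is nonnegative and the
value is `−∞` if `F*(T₀+χ)` is not integrable). -/
noncomputable def Rdual {n N : ℕ} (Ω : Set (EVec n)) (F : (Fin N → Fin n → ℝ) → ℝ)
    (T₀ χ : EVec n → Fin N → Fin n → ℝ) : EReal :=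
  ((F 0 * (volume Ω).toReal : ℝ) : EReal) -
    ((∫⁻ x in Ω, FstarShift F (T₀ x + χ x) : ℝ≥0∞) : EReal)

/-- Locally integrable weak (distributional) gradient on `Ω`. -/
def HasLocWeakDerivOn {n : ℕ} {ι : Type*} [Fintype ι] (Ω : Set (EVec n))
    (u : EVec n → ι → ℝ) (Du : EVec n → ι → Fin n → ℝ) : Prop :=
  (∀ K : Set (EVec n), IsCompact K → K ⊆ Ω → IntegrableOn Du K volume) ∧
  ∀ φ : EVec n → ℝ, ContDiff ℝ 1 φ → HasCompactSupport φ → tsupport φ ⊆ Ω →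
    ∀ (a : ι) (i : Fin n),
      ∫ x in Ω, u x a * fderiv ℝ φ x (EuclideanSpace.single i 1) =
        - ∫ x in Ω, Du x a i * φ x

/-!
Write `A z = f'(|z|) z / |z|` for the gradient of `F(z) = f(|z|)`. The bound `f''(t) ≤ L / (1 + t)`
makes `A` cocoercive with a weight, `(1 + |a|) |A b - A a|² ≤ 12 L ⟨A b - A a, b - a⟩`.

The Euler–Lagrange equation of `u` says that `σ = A ∇u - T₀` lies in `L^∞_⊥`. Since `T₀ + σ = A ∇u`,
the Fenchel–Young inequality is an equality at `σ`, so `σ` is a maximiser; as `A` is Lipschitz, `F*`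
is uniformly convex, and the maximiser is unique.

For the regularity, cut `u` off near a compact subset of `Ω`, mollify, and solve there the equation
`-div (A ∇v + ε ∇v - T₀) + ε v = 0` with the mollified function as boundary data. As
`‖T₀‖_∞ < f^∞(1)`, the gradients `∇v` are bounded in `L¹` uniformly in `ε`. Testing the difference
quotients of the equation with those of `v`, cocoercivity bounds the difference quotients of `A ∇v`
in `L²_loc` by `|∇v|` in `L¹`, because its weight leaves only `|∇v|² / (1 + |∇v|) ≤ |∇v|` on the
right-hand side. Cocoercivity also gives `A ∇v → A ∇u` in `L²_loc`, so the bound passes to the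
limit.
-/

/-! ### Convex integrands of linear growth on the half-line -/

section HalfLine

variable {f f' f'' : ℝ → ℝ} {L : ℝ}

theorem tangent_le_of_convexOn {s : Set ℝ} {x y c : ℝ} (hf : ConvexOn ℝ s f)
    (hx : x ∈ s) (hy : y ∈ s) (hd : HasDerivWithinAt f c s x) : f x + c * (y - x) ≤ f y := by
  rcases lt_trichotomy x y with hxy | rfl | hyx
  · have := hf.le_slope_of_hasDerivWithinAt hx hy hxy hd
    rw [slope_def_field, le_div_iff₀ (sub_pos.2 hxy)] at this
    linarith
  · simp
  · have := hf.slope_le_of_hasDerivWithinAt hy hx hyx hd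
    rw [slope_def_field, div_le_iff₀ (sub_pos.2 hyx)] at this
    linarith

theorem slope_le_of_forall_affine_le_affine {a b c d : ℝ}
    (h : ∀ t, 0 ≤ t → a + c * t ≤ b + d * t) : c ≤ d := by
  by_contra! hdc
  have hcd : 0 < c - d := sub_pos.2 hdc
  have := h ((|b - a| + 1) / (c - d)) (div_nonneg (by positivity) hcd.le)
  have : (c - d) * ((|b - a| + 1) / (c - d)) = |b - a| + 1 := mul_div_cancel₀ _ hcd.ne'
  linarith [le_abs_self (b - a)]

theorem sub_le_of_hasDerivWithinAt_le_inv
    (hderiv : ∀ t ∈ Ici (0 : ℝ), HasDerivWithinAt f' (f'' t) (Ici 0) t)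
    (hL : 0 ≤ L) (hsec : ∀ t ∈ Ici (0 : ℝ), f'' t ≤ L * (1 + t)⁻¹) {r s : ℝ} (hr : 0 ≤ r)
    (hrs : r ≤ s) : f' s - f' r ≤ L / (1 + r) * (s - r) := by
  have hsub : Icc r s ⊆ Ici 0 := fun x hx => hr.trans hx.1
  have hderivAt : ∀ x ∈ interior (Icc r s), HasDerivAt f' (f'' x) x := fun x hx => by
    rw [interior_Icc] at hx
    exact (hderiv x (hr.trans hx.1.le)).hasDerivAt (Ici_mem_nhds (hr.trans_lt hx.1))
  refine (convex_Icc r s).image_sub_le_mul_sub_of_deriv_le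
    (fun x hx => ((hderiv x (hsub hx)).mono hsub).continuousWithinAt)
    (fun x hx => (hderivAt x hx).differentiableAt.differentiableWithinAt) (fun x hx => ?_)
    r (left_mem_Icc.2 hrs) s (right_mem_Icc.2 hrs) hrs
  rw [(hderivAt x hx).deriv, div_eq_mul_inv]
  have hrx : r ≤ x := (interior_subset hx).1
  exact (hsec x (hr.trans hrx)).trans (by gcongr)

/-- A convex profile `f` on `[0, ∞)` with subderivative `f'`, such that `f'` vanishes at `0`, takes
values in `[0, L]`, and varies at the rate `1 / (1 + r)` near `r`. This is what the regularity
theory uses of `f ∈ C²` with linear growth and `f''(t) ≤ L / (1 + t)`; stating it without `f''`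
keeps the second derivative out of all later estimates. -/
structure IsLinearGrowthIntegrand (f f' : ℝ → ℝ) (L : ℝ) : Prop where
  pos : 0 < L
  map_zero : f 0 = 0
  deriv_zero : f' 0 = 0
  tangent_le ⦃r s : ℝ⦄ : 0 ≤ r → 0 ≤ s → f r + f' r * (s - r) ≤ f s
  deriv_nonneg ⦃t : ℝ⦄ : 0 ≤ t → 0 ≤ f' t
  deriv_le ⦃t : ℝ⦄ : 0 ≤ t → f' t ≤ L
  deriv_sub_mul_sub_le ⦃r s : ℝ⦄ : 0 ≤ r → 0 ≤ s →
    (f' s - f' r) * (s - r) ≤ 2 * L / (1 + r) * (s - r) ^ 2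

/-- The factor `2` absorbs the case of small `s`: there `f' r ≤ L` already suffices, while
`1 + r ≤ 2 * (1 + s)` otherwise. -/
theorem sub_mul_sub_le_of_sub_le (hL : 0 ≤ L) (hnonneg : ∀ t, 0 ≤ t → 0 ≤ f' t)
    (hle : ∀ t, 0 ≤ t → f' t ≤ L)
    (hsub : ∀ r s, 0 ≤ r → r ≤ s → f' s - f' r ≤ L / (1 + r) * (s - r)) {r s : ℝ} (hr : 0 ≤ r)
    (hs : 0 ≤ s) : (f' s - f' r) * (s - r) ≤ 2 * L / (1 + r) * (s - r) ^ 2 := by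
  rcases le_total r s with hrs | hsr
  · have hrate : f' s - f' r ≤ 2 * L / (1 + r) * (s - r) :=
      (hsub r s hr hrs).trans (by gcongr; linarith)
    nlinarith [mul_le_mul_of_nonneg_right hrate (sub_nonneg.2 hrs)]
  · suffices hrate : f' r - f' s ≤ 2 * L / (1 + r) * (r - s) by
      nlinarith [mul_le_mul_of_nonneg_right hrate (sub_nonneg.2 hsr)]
    rcases le_total (1 + r) (2 * (1 + s)) with hclose | hfar
    · have : L / (1 + s) ≤ 2 * L / (1 + r) := by
        rw [div_le_div_iff₀ (by linarith) (by linarith)]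
        nlinarith
      nlinarith [hsub s r hs hsr]
    · rw [div_mul_eq_mul_div, le_div_iff₀ (by linarith)]
      nlinarith [hle r hr, hnonneg s hs]

theorem isLinearGrowthIntegrand_of_secondDeriv_le (hL : 0 < L)
    (hderiv : ∀ t ∈ Ici (0 : ℝ), HasDerivWithinAt f (f' t) (Ici 0) t)
    (hderiv' : ∀ t ∈ Ici (0 : ℝ), HasDerivWithinAt f' (f'' t) (Ici 0) t)
    (hconv : ConvexOn ℝ (Ici 0) f) (hf0 : f 0 = 0) (hf'0 : f' 0 = 0)
    (hgrowth : ∀ t ∈ Ici (0 : ℝ), f t ≤ L * (t + 1))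
    (hsec : ∀ t ∈ Ici (0 : ℝ), f'' t ≤ L * (1 + t)⁻¹) : IsLinearGrowthIntegrand f f' L := by
  have htangent : ∀ ⦃r s⦄, 0 ≤ r → 0 ≤ s → f r + f' r * (s - r) ≤ f s := fun r s hr hs =>
    tangent_le_of_convexOn hconv hr hs (hderiv r hr)
  have hderivWithin : ∀ t ∈ Ici (0 : ℝ), derivWithin f (Ici 0) t = f' t := fun t ht =>
    (hderiv t ht).derivWithin (uniqueDiffOn_Ici 0 t ht)
  have hmono : MonotoneOn f' (Ici 0) :=
    (hconv.monotoneOn_derivWithin fun t ht => (hderiv t ht).differentiableWithinAt).congr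
      hderivWithin
  have hnonneg : ∀ t, 0 ≤ t → 0 ≤ f' t := fun t ht => hf'0 ▸ hmono self_mem_Ici ht ht
  have hle : ∀ t, 0 ≤ t → f' t ≤ L := fun t ht =>
    slope_le_of_forall_affine_le_affine (a := f t - f' t * t) (b := L) fun s hs => by
      linarith [htangent ht hs, hgrowth s hs]
  exact ⟨hL, hf0, hf'0, htangent, hnonneg, hle, fun r s => sub_mul_sub_le_of_sub_le hL.le
    hnonneg hle fun r s => sub_le_of_hasDerivWithinAt_le_inv hderiv' hL.le hsec⟩

namespace IsLinearGrowthIntegrand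

theorem nonneg (h : IsLinearGrowthIntegrand f f' L) {t : ℝ} (ht : 0 ≤ t) : 0 ≤ f t := by
  simpa [h.map_zero, h.deriv_zero] using h.tangent_le le_rfl ht

theorem deriv_div_le (h : IsLinearGrowthIntegrand f f' L) {t : ℝ} (ht : 0 < t) :
    f' t / t ≤ 2 * L / (1 + t) := by
  have := h.deriv_sub_mul_sub_le ht.le le_rfl
  rw [h.deriv_zero] at this
  rw [div_le_iff₀ ht]
  exact le_of_mul_le_mul_right (by linarith) ht

theorem exists_linear_le (h : IsLinearGrowthIntegrand f f' L) {finf θ : ℝ}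
    (hfinf : Tendsto (fun t => f t / t) atTop (𝓝 finf))
    (hθ : θ < finf) (hθ0 : 0 ≤ θ) : ∃ C, 0 ≤ C ∧ ∀ t, 0 ≤ t → θ * t - C ≤ f t := by
  obtain ⟨t₀, ht₀⟩ := eventually_atTop.1
    ((hfinf.eventually (lt_mem_nhds hθ)).and (eventually_gt_atTop 0))
  refine ⟨θ * |t₀|, by positivity, fun t ht => ?_⟩
  rcases le_total t₀ t with hlarge | hsmall
  · obtain ⟨hlt, hpos⟩ := ht₀ t hlarge
    rw [lt_div_iff₀ hpos] at hlt
    linarith [show 0 ≤ θ * |t₀| by positivity]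
  · nlinarith [h.nonneg ht, hsmall.trans (le_abs_self t₀)]

end IsLinearGrowthIntegrand

end HalfLine

/-! ### The radial integrand `f ‖z‖` and its gradient -/

section RadialGradient

variable {E : Type*} [NormedAddCommGroup E] [InnerProductSpace ℝ E]

/-- The gradient `f'(‖z‖) z / ‖z‖` of the radial integrand `z ↦ f ‖z‖` on an inner product space;
division by zero makes it `0` at `z = 0`, which is the gradient there because `f'(0) = 0`. This is
`Amap` on an arbitrary inner product space. -/
noncomputable def radialGrad (f' : ℝ → ℝ) (z : E) : E := (f' ‖z‖ / ‖z‖) • z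

@[simp]
theorem radialGrad_zero (f' : ℝ → ℝ) : radialGrad f' (0 : E) = 0 := by simp [radialGrad]

theorem inner_radialGrad_self (f' : ℝ → ℝ) (z : E) : ⟪radialGrad f' z, z⟫ = f' ‖z‖ * ‖z‖ := by
  rcases eq_or_ne z 0 with rfl | hz
  · simp
  · rw [radialGrad, real_inner_smul_left, real_inner_self_eq_norm_sq]
    field_simp

namespace IsLinearGrowthIntegrand

variable {f f' : ℝ → ℝ} {L : ℝ}

theorem norm_radialGrad (h : IsLinearGrowthIntegrand f f' L) (z : E) :
    ‖radialGrad f' z‖ = f' ‖z‖ := by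
  rcases eq_or_ne z 0 with rfl | hz
  · simp [h.deriv_zero]
  · have := h.deriv_nonneg (norm_nonneg z)
    rw [radialGrad, norm_smul, Real.norm_of_nonneg (by positivity),
      div_mul_cancel₀ _ (norm_ne_zero_iff.2 hz)]

theorem norm_radialGrad_le (h : IsLinearGrowthIntegrand f f' L) (z : E) : ‖radialGrad f' z‖ ≤ L :=
  (h.norm_radialGrad z).trans_le (h.deriv_le (norm_nonneg z))

theorem radialGrad_tangent_le (h : IsLinearGrowthIntegrand f f' L) (a b : E) :
    f ‖a‖ + ⟪radialGrad f' a, b - a⟫ ≤ f ‖b‖ := by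
  have hcs : ⟪radialGrad f' a, b⟫ ≤ f' ‖a‖ * ‖b‖ :=
    (real_inner_le_norm _ _).trans_eq (by rw [h.norm_radialGrad])
  rw [inner_sub_right, inner_radialGrad_self]
  linarith [h.tangent_le (norm_nonneg a) (norm_nonneg b)]

theorem deriv_norm_mul_sub_le (h : IsLinearGrowthIntegrand f f' L) (a b : E) :
    f' ‖a‖ * (‖b‖ - ‖a‖) ≤ ⟪radialGrad f' a, b - a⟫ + L / (1 + ‖a‖) * ‖b - a‖ ^ 2 := by
  have hL := h.pos
  rcases eq_or_ne a 0 with rfl | ha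
  · simp only [norm_zero, h.deriv_zero, radialGrad_zero, inner_zero_left, zero_mul, zero_add]
    positivity
  have hpos : 0 < ‖a‖ := norm_pos_iff.2 ha
  have hangle : 0 ≤ ‖a‖ * ‖b‖ - ⟪a, b⟫ := sub_nonneg.2 (real_inner_le_norm a b)
  have hangle_le : ‖a‖ * ‖b‖ - ⟪a, b⟫ ≤ ‖b - a‖ ^ 2 / 2 := by
    rw [norm_sub_sq_real, real_inner_comm]
    nlinarith [sq_nonneg (‖a‖ - ‖b‖)]
  calc f' ‖a‖ * (‖b‖ - ‖a‖)
      = ⟪radialGrad f' a, b - a⟫ + f' ‖a‖ / ‖a‖ * (‖a‖ * ‖b‖ - ⟪a, b⟫) := by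
        rw [inner_sub_right, inner_radialGrad_self, radialGrad, real_inner_smul_left]
        field_simp
        ring
    _ ≤ ⟪radialGrad f' a, b - a⟫ + 2 * L / (1 + ‖a‖) * (‖b - a‖ ^ 2 / 2) := by
        exact add_le_add le_rfl
          (mul_le_mul (h.deriv_div_le hpos) hangle_le hangle (by positivity))
    _ = _ := by ring

theorem le_radialGrad_tangent_add_sq (h : IsLinearGrowthIntegrand f f' L) (a b : E) :
    f ‖b‖ ≤ f ‖a‖ + ⟪radialGrad f' a, b - a⟫ + 3 * L / (1 + ‖a‖) * ‖b - a‖ ^ 2 := by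
  have hL := h.pos
  have hsq : (‖b‖ - ‖a‖) ^ 2 ≤ ‖b - a‖ ^ 2 :=
    sq_le_sq.2 ((abs_norm_sub_norm_le b a).trans (le_abs_self _))
  have htangent := h.tangent_le (norm_nonneg b) (norm_nonneg a)
  have hrate := h.deriv_sub_mul_sub_le (norm_nonneg a) (norm_nonneg b)
  calc f ‖b‖ ≤ f ‖a‖ + f' ‖a‖ * (‖b‖ - ‖a‖) + 2 * L / (1 + ‖a‖) * (‖b‖ - ‖a‖) ^ 2 := by linarith
    _ ≤ f ‖a‖ + (⟪radialGrad f' a, b - a⟫ + L / (1 + ‖a‖) * ‖b - a‖ ^ 2)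
        + 2 * L / (1 + ‖a‖) * ‖b - a‖ ^ 2 := by
      gcongr
      exact h.deriv_norm_mul_sub_le a b
    _ = _ := by ring

/-- Compare both tangent bounds at the point `b - t • d` with `d` the difference of the gradients;
`t = (1 + ‖b‖) / (6 * L)` is the optimal step. -/
theorem sq_norm_radialGrad_sub_le_bregman (h : IsLinearGrowthIntegrand f f' L) (a b : E) :
    (1 + ‖b‖) * ‖radialGrad f' b - radialGrad f' a‖ ^ 2 / (12 * L) ≤
      f ‖b‖ - f ‖a‖ - ⟪radialGrad f' a, b - a⟫ := by
  have hL := h.pos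
  set d := radialGrad f' b - radialGrad f' a with hd
  set t : ℝ := (1 + ‖b‖) / (6 * L) with ht
  have hupper := h.le_radialGrad_tangent_add_sq b (b - t • d)
  have hlower := h.radialGrad_tangent_le a (b - t • d)
  have hstep : b - t • d - b = -(t • d) := by abel
  have hquad : 3 * L / (1 + ‖b‖) * (t ^ 2 * ‖d‖ ^ 2) = t / 2 * ‖d‖ ^ 2 := by
    have : 1 + ‖b‖ ≠ 0 := by positivity
    rw [ht]; field_simp; ring
  have hdiff : t * ⟪radialGrad f' b, d⟫ - t * ⟪radialGrad f' a, d⟫ = t * ‖d‖ ^ 2 := by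
    rw [← mul_sub, ← inner_sub_left, ← hd, real_inner_self_eq_norm_sq]
  rw [hstep, inner_neg_right, real_inner_smul_right, norm_neg, norm_smul, mul_pow,
    Real.norm_eq_abs, sq_abs, hquad] at hupper
  rw [sub_right_comm, inner_sub_right, real_inner_smul_right] at hlower
  calc (1 + ‖b‖) * ‖d‖ ^ 2 / (12 * L) = t / 2 * ‖d‖ ^ 2 := by rw [ht]; field_simp; ring
    _ ≤ _ := by linarith

theorem radialGrad_cocoercive (h : IsLinearGrowthIntegrand f f' L) (a b : E) :
    (1 + ‖a‖) * ‖radialGrad f' b - radialGrad f' a‖ ^ 2 / (12 * L) ≤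
      ⟪radialGrad f' b - radialGrad f' a, b - a⟫ := by
  have hbregman := h.sq_norm_radialGrad_sub_le_bregman b a
  have htangent := h.radialGrad_tangent_le a b
  rw [norm_sub_rev, ← neg_sub b a, inner_neg_right] at hbregman
  rw [inner_sub_left]
  linarith

theorem radialGrad_monotone (h : IsLinearGrowthIntegrand f f' L) (a b : E) :
    0 ≤ ⟪radialGrad f' b - radialGrad f' a, b - a⟫ :=
  have := h.pos
  le_trans (by positivity) (h.radialGrad_cocoercive a b)

theorem lipschitzWith_radialGrad (h : IsLinearGrowthIntegrand f f' L) :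
    LipschitzWith (Real.toNNReal (12 * L)) (radialGrad f' : E → E) := by
  have hL := h.pos
  refine LipschitzWith.of_dist_le_mul fun b a => ?_
  rw [dist_eq_norm, dist_eq_norm, Real.coe_toNNReal _ (by positivity)]
  rcases (norm_nonneg (radialGrad f' b - radialGrad f' a)).eq_or_lt with hzero | hpos
  · rw [← hzero]; positivity
  refine le_of_mul_le_mul_left ?_ hpos
  calc ‖radialGrad f' b - radialGrad f' a‖ * ‖radialGrad f' b - radialGrad f' a‖
      ≤ (1 + ‖a‖) * ‖radialGrad f' b - radialGrad f' a‖ ^ 2 := by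
        nlinarith [mul_nonneg (norm_nonneg a) (sq_nonneg ‖radialGrad f' b - radialGrad f' a‖)]
    _ ≤ 12 * L * ⟪radialGrad f' b - radialGrad f' a, b - a⟫ := by
        have := h.radialGrad_cocoercive a b
        rwa [div_le_iff₀' (by positivity)] at this
    _ ≤ 12 * L * (‖radialGrad f' b - radialGrad f' a‖ * ‖b - a‖) := by
        gcongr
        exact real_inner_le_norm _ _
    _ = _ := by ring

theorem continuous_radialGrad (h : IsLinearGrowthIntegrand f f' L) :
    Continuous (radialGrad f' : E → E) :=
  h.lipschitzWith_radialGrad.continuous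

theorem map_norm_sub_le (h : IsLinearGrowthIntegrand f f' L) (a b : E) :
    f ‖b‖ - f ‖a‖ ≤ L * ‖b - a‖ := by
  have htangent := h.radialGrad_tangent_le b a
  rw [← neg_sub b a, inner_neg_right] at htangent
  have hcs : ⟪radialGrad f' b, b - a⟫ ≤ L * ‖b - a‖ :=
    (real_inner_le_norm _ _).trans (by gcongr; exact h.norm_radialGrad_le b)
  linarith

theorem lipschitzWith_map_norm (h : IsLinearGrowthIntegrand f f' L) :
    LipschitzWith (Real.toNNReal L) fun z : E => f ‖z‖ := by
  refine LipschitzWith.of_dist_le_mul fun b a => ?_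
  rw [Real.coe_toNNReal _ h.pos.le, Real.dist_eq, dist_eq_norm, abs_le]
  have hba := h.map_norm_sub_le b a
  rw [norm_sub_rev] at hba
  constructor <;> linarith [h.map_norm_sub_le a b]

end IsLinearGrowthIntegrand

end RadialGradient

/-! ### First variation -/

section FirstVariation

variable {α E : Type*} [MeasurableSpace α] {μ : Measure α} [NormedAddCommGroup E]
  [InnerProductSpace ℝ E] {f f' : ℝ → ℝ} {L C : ℝ} {S T g w : α → E}

theorem integrable_inner_of_ae_bound (hS : AEStronglyMeasurable S μ) (hC : ∀ᵐ x ∂μ, ‖S x‖ ≤ C)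
    (hg : Integrable g μ) : Integrable (fun x => ⟪S x, g x⟫) μ := by
  refine (hg.norm.const_mul C).mono' (hS.inner hg.aestronglyMeasurable) ?_
  filter_upwards [hC] with x hx
  exact (norm_inner_le_norm _ _).trans (by gcongr)

namespace IsLinearGrowthIntegrand

theorem integrable_map_norm (h : IsLinearGrowthIntegrand f f' L) (hg : Integrable g μ) :
    Integrable (fun x => f ‖g x‖) μ :=
  memLp_one_iff_integrable.1 <| h.lipschitzWith_map_norm.comp_memLp (by simp [h.map_zero])
    (memLp_one_iff_integrable.2 hg)

theorem aestronglyMeasurable_radialGrad (h : IsLinearGrowthIntegrand f f' L)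
    (hg : AEStronglyMeasurable g μ) : AEStronglyMeasurable (fun x => radialGrad f' (g x)) μ :=
  h.continuous_radialGrad.comp_aestronglyMeasurable hg

theorem ae_norm_radialGrad_sub_le (h : IsLinearGrowthIntegrand f f' L)
    (hC : ∀ᵐ x ∂μ, ‖T x‖ ≤ C) : ∀ᵐ x ∂μ, ‖radialGrad f' (g x) - T x‖ ≤ L + C := by
  filter_upwards [hC] with x hx
  exact (norm_sub_le _ _).trans (add_le_add (h.norm_radialGrad_le _) hx)

theorem integral_inner_radialGrad_add_smul_nonneg (h : IsLinearGrowthIntegrand f f' L)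
    (hT : AEStronglyMeasurable T μ) (hC : ∀ᵐ x ∂μ, ‖T x‖ ≤ C) (hg : Integrable g μ)
    (hw : Integrable w μ) {t : ℝ} (ht : 0 < t)
    (hmin : ∫ x, (f ‖g x‖ - ⟪T x, g x⟫) ∂μ ≤
      ∫ x, (f ‖g x + t • w x‖ - ⟪T x, g x + t • w x⟫) ∂μ) :
    0 ≤ ∫ x, ⟪radialGrad f' (g x + t • w x) - T x, w x⟫ ∂μ := by
  have hgt : Integrable (fun x => g x + t • w x) μ := hg.add (hw.smul t)
  have henergy {v : α → E} (hv : Integrable v μ) :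
      Integrable (fun x => f ‖v x‖ - ⟪T x, v x⟫) μ :=
    (h.integrable_map_norm hv).sub (integrable_inner_of_ae_bound hT hC hv)
  have hslope : Integrable (fun x => ⟪radialGrad f' (g x + t • w x) - T x, w x⟫) μ :=
    integrable_inner_of_ae_bound
      ((h.aestronglyMeasurable_radialGrad hgt.aestronglyMeasurable).sub hT)
      (h.ae_norm_radialGrad_sub_le hC) hw
  refine nonneg_of_mul_nonneg_right (b := ∫ x, ⟪radialGrad f' (g x + t • w x) - T x, w x⟫ ∂μ)
    ?_ ht
  calc 0 ≤ ∫ x, (f ‖g x + t • w x‖ - ⟪T x, g x + t • w x⟫ - (f ‖g x‖ - ⟪T x, g x⟫)) ∂μ := by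
        rw [integral_sub (henergy hgt) (henergy hg)]
        exact sub_nonneg.2 hmin
    _ ≤ ∫ x, t * ⟪radialGrad f' (g x + t • w x) - T x, w x⟫ ∂μ := by
        refine integral_mono ((henergy hgt).sub (henergy hg)) (hslope.const_mul t) fun x => ?_
        have htangent := h.radialGrad_tangent_le (g x + t • w x) (g x)
        simp only [sub_add_cancel_left, inner_neg_right, real_inner_smul_right, inner_sub_left,
          inner_add_right] at htangent ⊢
        linarith
    _ = t * ∫ x, ⟪radialGrad f' (g x + t • w x) - T x, w x⟫ ∂μ := integral_const_mul _ _

theorem tendsto_integral_inner_radialGrad_add_smul (h : IsLinearGrowthIntegrand f f' L)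
    (hT : AEStronglyMeasurable T μ) (hC : ∀ᵐ x ∂μ, ‖T x‖ ≤ C) (hg : Integrable g μ)
    (hw : Integrable w μ) :
    Tendsto (fun t : ℝ => ∫ x, ⟪radialGrad f' (g x + t • w x) - T x, w x⟫ ∂μ) (𝓝 0)
      (𝓝 (∫ x, ⟪radialGrad f' (g x) - T x, w x⟫ ∂μ)) := by
  refine tendsto_integral_filter_of_dominated_convergence (fun x => (L + C) * ‖w x‖)
    (Eventually.of_forall fun t => ?_) (Eventually.of_forall fun t => ?_) (hw.norm.const_mul _)
    (ae_of_all _ fun x => ?_)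
  · exact ((h.aestronglyMeasurable_radialGrad (hg.add (hw.smul t)).aestronglyMeasurable).sub
      hT).inner hw.aestronglyMeasurable
  · filter_upwards [h.ae_norm_radialGrad_sub_le (g := fun x => g x + t • w x) hC] with x hx
    exact (norm_inner_le_norm _ _).trans (by gcongr)
  · have hcont : Continuous fun t : ℝ => ⟪radialGrad f' (g x + t • w x) - T x, w x⟫ := by
      have := h.continuous_radialGrad (E := E)
      fun_prop
    simpa using hcont.tendsto 0

theorem integral_inner_radialGrad_nonneg_of_minimal (h : IsLinearGrowthIntegrand f f' L)
    (hT : AEStronglyMeasurable T μ) (hC : ∀ᵐ x ∂μ, ‖T x‖ ≤ C) (hg : Integrable g μ)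
    (hw : Integrable w μ)
    (hmin : ∀ t : ℝ, ∫ x, (f ‖g x‖ - ⟪T x, g x⟫) ∂μ ≤
      ∫ x, (f ‖g x + t • w x‖ - ⟪T x, g x + t • w x⟫) ∂μ) :
    0 ≤ ∫ x, ⟪radialGrad f' (g x) - T x, w x⟫ ∂μ :=
  ge_of_tendsto ((h.tendsto_integral_inner_radialGrad_add_smul hT hC hg hw).mono_left
      (nhdsWithin_le_nhds (s := Ioi 0))) <| by
    filter_upwards [self_mem_nhdsWithin] with t ht using
      h.integral_inner_radialGrad_add_smul_nonneg hT hC hg hw ht (hmin t)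

theorem integral_inner_radialGrad_eq_zero_of_minimal (h : IsLinearGrowthIntegrand f f' L)
    (hT : AEStronglyMeasurable T μ) (hC : ∀ᵐ x ∂μ, ‖T x‖ ≤ C) (hg : Integrable g μ)
    (hw : Integrable w μ)
    (hmin : ∀ t : ℝ, ∫ x, (f ‖g x‖ - ⟪T x, g x⟫) ∂μ ≤
      ∫ x, (f ‖g x + t • w x‖ - ⟪T x, g x + t • w x⟫) ∂μ) :
    ∫ x, ⟪radialGrad f' (g x) - T x, w x⟫ ∂μ = 0 := by
  have hneg := h.integral_inner_radialGrad_nonneg_of_minimal hT hC hg hw.neg fun t => by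
    simpa using hmin (-t)
  simp only [Pi.neg_apply, inner_neg_right, integral_neg] at hneg
  exact le_antisymm (neg_nonneg.1 hneg)
    (h.integral_inner_radialGrad_nonneg_of_minimal hT hC hg hw hmin)

end IsLinearGrowthIntegrand

end FirstVariation

/-! ### The convex conjugate -/

section Conjugate

variable {E : Type*} [NormedAddCommGroup E] [InnerProductSpace ℝ E] {f f' : ℝ → ℝ} {L : ℝ}

/-- The convex conjugate of `w ↦ f ‖w‖` on an inner product space. Values are truncated to
`ℝ≥0∞`, which loses nothing when `f 0 = 0`, since `w = 0` already contributes `0`. -/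
noncomputable def radialConj (f : ℝ → ℝ) (z : E) : ℝ≥0∞ :=
  ⨆ w : E, ENNReal.ofReal (⟪z, w⟫ - f ‖w‖)

theorem ofReal_inner_sub_le_radialConj (f : ℝ → ℝ) (z w : E) :
    ENNReal.ofReal (⟪z, w⟫ - f ‖w‖) ≤ radialConj f z :=
  le_iSup (fun w : E => ENNReal.ofReal (⟪z, w⟫ - f ‖w‖)) w

theorem lowerSemicontinuous_radialConj (f : ℝ → ℝ) :
    LowerSemicontinuous (radialConj f : E → ℝ≥0∞) :=
  lowerSemicontinuous_iSup fun w =>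
    (ENNReal.continuous_ofReal.comp
      (by fun_prop : Continuous fun z : E => ⟪z, w⟫ - f ‖w‖)).lowerSemicontinuous

namespace IsLinearGrowthIntegrand

theorem radialConj_radialGrad (h : IsLinearGrowthIntegrand f f' L) (w : E) :
    radialConj f (radialGrad f' w) = ENNReal.ofReal (⟪radialGrad f' w, w⟫ - f ‖w‖) := by
  refine le_antisymm (iSup_le fun v => ENNReal.ofReal_le_ofReal ?_)
    (ofReal_inner_sub_le_radialConj f _ w)
  have := h.radialGrad_tangent_le w v
  rw [inner_sub_right] at this
  linarith

theorem inner_radialGrad_sub_nonneg (h : IsLinearGrowthIntegrand f f' L) (w : E) :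
    0 ≤ ⟪radialGrad f' w, w⟫ - f ‖w‖ := by
  have := h.radialGrad_tangent_le w 0
  simp only [zero_sub, inner_neg_right, norm_zero, h.map_zero] at this
  linarith

/- Testing the supremum at `w + d / (6L)`, where `d = z - ∇F(w)`, gains `‖d‖² / (12L)` over its
value at `w`. -/
theorem eq_radialGrad_of_radialConj_le (h : IsLinearGrowthIntegrand f f' L) {z w : E}
    (hle : radialConj f z ≤ ENNReal.ofReal (⟪z, w⟫ - f ‖w‖)) (hnonneg : 0 ≤ ⟪z, w⟫ - f ‖w‖) :
    z = radialGrad f' w := by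
  have hL := h.pos
  set d := z - radialGrad f' w with hd
  have htest := (ofReal_inner_sub_le_radialConj f z (w + (6 * L)⁻¹ • d)).trans hle
  rw [ENNReal.ofReal_le_ofReal_iff hnonneg] at htest
  have hupper := h.le_radialGrad_tangent_add_sq w (w + (6 * L)⁻¹ • d)
  simp only [add_sub_cancel_left, inner_add_right, real_inner_smul_right] at htest hupper
  have hinner : ⟪z, d⟫ - ⟪radialGrad f' w, d⟫ = ‖d‖ ^ 2 := by
    rw [← inner_sub_left, ← hd, real_inner_self_eq_norm_sq]
  have hquad : 3 * L / (1 + ‖w‖) * ‖(6 * L)⁻¹ • d‖ ^ 2 ≤ (6 * L)⁻¹ * (‖d‖ ^ 2 / 2) := calc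
    _ ≤ 3 * L * ((6 * L)⁻¹ * ‖d‖) ^ 2 := by
      rw [norm_smul, Real.norm_of_nonneg (by positivity)]
      gcongr
      exact div_le_self (by positivity) (by linarith [norm_nonneg w])
    _ = (6 * L)⁻¹ * (‖d‖ ^ 2 / 2) := by field
  have hsq : (6 * L)⁻¹ * ‖d‖ ^ 2 ≤ (6 * L)⁻¹ * (‖d‖ ^ 2 / 2) := by
    rw [← hinner, mul_sub]
    rw [← hinner] at hquad
    linarith
  have hzero : ‖d‖ ^ 2 ≤ 0 := by linarith [le_of_mul_le_mul_left hsq (by positivity)]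
  exact sub_eq_zero.1 (norm_eq_zero.1 (pow_eq_zero_iff two_ne_zero |>.1
    (le_antisymm hzero (sq_nonneg _))))

end IsLinearGrowthIntegrand

variable {α : Type*} [MeasurableSpace α] {μ : Measure α}

theorem ofReal_integral_le_lintegral_ofReal {φ : α → ℝ} (hφ : Integrable φ μ) :
    ENNReal.ofReal (∫ x, φ x ∂μ) ≤ ∫⁻ x, ENNReal.ofReal (φ x) ∂μ := by
  refine (ENNReal.ofReal_le_ofReal (integral_mono hφ hφ.pos_part fun x => le_max_left _ 0)).trans ?_
  rw [ofReal_integral_eq_lintegral_ofReal hφ.pos_part (ae_of_all _ fun x => le_max_right _ _)]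
  exact lintegral_mono fun x => by simp [ENNReal.ofReal_max]

theorem ae_nonneg_of_lintegral_ofReal_le {φ : α → ℝ} (hφ : Integrable φ μ)
    (hnonneg : 0 ≤ ∫ x, φ x ∂μ)
    (hle : ∫⁻ x, ENNReal.ofReal (φ x) ∂μ ≤ ENNReal.ofReal (∫ x, φ x ∂μ)) : 0 ≤ᵐ[μ] φ := by
  have hpos : ∫ x, max (φ x) 0 ∂μ ≤ ∫ x, φ x ∂μ := by
    rw [← ENNReal.ofReal_le_ofReal_iff hnonneg,
      ofReal_integral_eq_lintegral_ofReal hφ.pos_part (ae_of_all _ fun x => le_max_right _ _)]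
    simpa [ENNReal.ofReal_max] using hle
  have heq : φ =ᵐ[μ] fun x => max (φ x) 0 :=
    ((integral_eq_iff_of_ae_le hφ hφ.pos_part (ae_of_all _ fun x => le_max_left _ 0)).1
      (le_antisymm (integral_mono hφ hφ.pos_part fun x => le_max_left _ 0) hpos))
  filter_upwards [heq] with x hx
  rw [hx]
  exact le_max_right _ _

namespace IsLinearGrowthIntegrand

variable {S g : α → E}

theorem lintegral_radialConj_radialGrad (h : IsLinearGrowthIntegrand f f' L)
    (hg : Integrable g μ) :
    ∫⁻ x, radialConj f (radialGrad f' (g x)) ∂μ =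
      ENNReal.ofReal (∫ x, (⟪radialGrad f' (g x), g x⟫ - f ‖g x‖) ∂μ) := by
  simp only [h.radialConj_radialGrad]
  refine (ofReal_integral_eq_lintegral_ofReal (.sub ?_ (h.integrable_map_norm hg))
    (ae_of_all _ fun x => h.inner_radialGrad_sub_nonneg (g x))).symm
  exact integrable_inner_of_ae_bound (h.aestronglyMeasurable_radialGrad hg.aestronglyMeasurable)
    (ae_of_all _ fun x => h.norm_radialGrad_le (g x)) hg

theorem ofReal_integral_le_lintegral_radialConj (h : IsLinearGrowthIntegrand f f' L)
    (hg : Integrable g μ) (hSg : Integrable (fun x => ⟪S x, g x⟫) μ) :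
    ENNReal.ofReal (∫ x, (⟪S x, g x⟫ - f ‖g x‖) ∂μ) ≤ ∫⁻ x, radialConj f (S x) ∂μ :=
  (ofReal_integral_le_lintegral_ofReal (hSg.sub (h.integrable_map_norm hg))).trans
    (lintegral_mono fun _ => ofReal_inner_sub_le_radialConj f _ _)

theorem ae_eq_radialGrad_of_lintegral_radialConj_le [MeasurableSpace E] [BorelSpace E]
    (h : IsLinearGrowthIntegrand f f' L)
    (hg : Integrable g μ) (hS : AEMeasurable S μ) (hSg : Integrable (fun x => ⟪S x, g x⟫) μ)
    (hnonneg : 0 ≤ ∫ x, (⟪S x, g x⟫ - f ‖g x‖) ∂μ)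
    (hle : ∫⁻ x, radialConj f (S x) ∂μ ≤
      ENNReal.ofReal (∫ x, (⟪S x, g x⟫ - f ‖g x‖) ∂μ)) :
    S =ᵐ[μ] fun x => radialGrad f' (g x) := by
  have hint : Integrable (fun x => ⟪S x, g x⟫ - f ‖g x‖) μ := hSg.sub (h.integrable_map_norm hg)
  have hFY (x : α) := ofReal_inner_sub_le_radialConj f (S x) (g x)
  have hlower := ofReal_integral_le_lintegral_ofReal hint
  have hupper := (lintegral_mono hFY (μ := μ)).trans hle
  have hae := ae_eq_of_ae_le_of_lintegral_le (ae_of_all μ hFY)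
    (hupper.trans_lt ENNReal.ofReal_lt_top).ne
    ((lowerSemicontinuous_radialConj f).measurable.comp_aemeasurable hS) (hle.trans hlower)
  filter_upwards [hae, ae_nonneg_of_lintegral_ofReal_le hint hnonneg hupper] with x hx hx0
  exact h.eq_radialGrad_of_radialConj_le hx.ge hx0

end IsLinearGrowthIntegrand

end Conjugate

/-! ### Solution of the dual problem -/

section Flatten

variable {ι κ : Type*} [Fintype ι] [Fintype κ]

/-- Matrices given as curried families, regarded as elements of the Euclidean space of their
entries, so that `mdot` and `mnorm` become its inner product and norm. -/
noncomputable def flatten : (ι → κ → ℝ) ≃L[ℝ] EuclideanSpace ℝ (ι × κ) :=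
  LinearEquiv.toContinuousLinearEquiv
    { toFun := fun z => WithLp.toLp 2 fun p => z p.1 p.2
      invFun := fun m a i => m (a, i)
      map_add' := fun _ _ => rfl
      map_smul' := fun _ _ => rfl
      left_inv := fun _ => rfl
      right_inv := fun _ => rfl }

@[simp]
theorem flatten_apply (z : ι → κ → ℝ) (p : ι × κ) : flatten z p = z p.1 p.2 := rfl

theorem mdot_eq_inner_flatten (A B : ι → κ → ℝ) : mdot A B = ⟪flatten A, flatten B⟫ := by
  rw [mdot, PiLp.inner_apply, Fintype.sum_prod_type]
  simp [mul_comm]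

theorem mnorm_eq_norm_flatten (A : ι → κ → ℝ) : mnorm A = ‖flatten A‖ := by
  rw [mnorm, mdot_eq_inner_flatten, real_inner_self_eq_norm_sq, Real.sqrt_sq (norm_nonneg _)]

end Flatten

section Dual

variable {n N : ℕ} {Ω : Set (EVec n)} {f f' : ℝ → ℝ} {L : ℝ}

theorem flatten_Amap (f' : ℝ → ℝ) (z : Fin N → Fin n → ℝ) :
    flatten (Amap f' z) = radialGrad f' (flatten z) := by
  ext p
  simp [Amap, radialGrad, mnorm_eq_norm_flatten]

theorem hasWeakDerivOn_add_smul {ι : Type*} [Fintype ι] {u w : EVec n → ι → ℝ}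
    {Du Dw : EVec n → ι → Fin n → ℝ} (hu : HasWeakDerivOn Ω u Du) (hw : HasWeakDerivOn Ω w Dw)
    (t : ℝ) : HasWeakDerivOn Ω (fun x => u x + t • w x) (fun x => Du x + t • Dw x) := by
  refine ⟨hu.1.add (hw.1.smul t), hu.2.1.add (hw.2.1.smul t), fun φ hφ hc hs a i => ?_⟩
  have hdφ : Continuous fun x => fderiv ℝ φ x (EuclideanSpace.single i 1) :=
    (hφ.continuous_fderiv one_ne_zero).clm_apply continuous_const
  obtain ⟨C, hC⟩ := hdφ.bounded_above_of_compact_support (hc.fderiv_apply (𝕜 := ℝ) _)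
  obtain ⟨C', hC'⟩ := hφ.continuous.bounded_above_of_compact_support hc
  have hleft {v : EVec n → ι → ℝ} (hv : IntegrableOn v Ω) :
      Integrable (fun x => v x a * fderiv ℝ φ x (EuclideanSpace.single i 1))
        (volume.restrict Ω) :=
    Integrable.mul_bdd (hv.eval a) hdφ.aestronglyMeasurable (ae_of_all _ hC)
  have hright {Dv : EVec n → ι → Fin n → ℝ} (hv : IntegrableOn Dv Ω) :
      Integrable (fun x => Dv x a i * φ x) (volume.restrict Ω) :=
    Integrable.mul_bdd ((hv.eval a).eval i) hφ.continuous.aestronglyMeasurable (ae_of_all _ hC')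
  simp only [Pi.add_apply, Pi.smul_apply, smul_eq_mul, add_mul, mul_assoc]
  rw [integral_add (hleft hu.1) ((hleft hw.1).const_mul t), integral_const_mul,
    integral_add (hright hu.2.1) ((hright hw.2.1).const_mul t), integral_const_mul,
    hu.2.2 φ hφ hc hs a i, hw.2.2 φ hφ hc hs a i]
  ring

theorem FFgen_map_mnorm (f : ℝ → ℝ) (T₀ Dw : EVec n → Fin N → Fin n → ℝ) :
    FFgen Ω (fun z => f (mnorm z)) T₀ Dw =
      ∫ x in Ω, (f ‖flatten (Dw x)‖ - ⟪flatten (T₀ x), flatten (Dw x)⟫) := by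
  simp only [FFgen, mnorm_eq_norm_flatten, mdot_eq_inner_flatten]

theorem aestronglyMeasurable_flatten {X : EVec n → Fin N → Fin n → ℝ}
    (hX : AEStronglyMeasurable X (volume.restrict Ω)) :
    AEStronglyMeasurable (fun x => flatten (X x)) (volume.restrict Ω) :=
  flatten.continuous.comp_aestronglyMeasurable hX

theorem integrable_flatten {X : EVec n → Fin N → Fin n → ℝ} (hX : IntegrableOn X Ω) :
    Integrable (fun x => flatten (X x)) (volume.restrict Ω) :=
  flatten.toContinuousLinearMap.integrable_comp hX

theorem aestronglyMeasurable_of_memW2inf (hΩ : IsOpen Ω) {T₀ : EVec n → Fin N → Fin n → ℝ}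
    (hT : MemW2inf Ω T₀) : AEStronglyMeasurable T₀ (volume.restrict Ω) := by
  obtain ⟨_, _, -, hderiv, -⟩ := hT
  exact ContinuousOn.aestronglyMeasurable (fun x hx => (hderiv x hx).continuousWithinAt)
    hΩ.measurableSet

theorem exists_norm_flatten_le_of_memW2inf {T₀ : EVec n → Fin N → Fin n → ℝ}
    (hT : MemW2inf Ω T₀) : ∃ C, ∀ x ∈ Ω, ‖flatten (T₀ x)‖ ≤ C := by
  obtain ⟨C, _, hC, -⟩ := hT
  let A := (flatten (ι := Fin N) (κ := Fin n)).toContinuousLinearMap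
  exact ⟨‖A‖ * C, fun x hx => A.le_opNorm_of_le (hC x hx)⟩

theorem integrable_inner_flatten_of_memLinfPerp (hΩ : MeasurableSet Ω)
    {χ Dw : EVec n → Fin N → Fin n → ℝ} (hχ : MemLinfPerp Ω χ) (hDw : IntegrableOn Dw Ω) :
    Integrable (fun x => ⟪flatten (χ x), flatten (Dw x)⟫) (volume.restrict Ω) := by
  obtain ⟨hmeas, ⟨C, hC⟩, -⟩ := hχ
  refine integrable_inner_of_ae_bound (C := C) (aestronglyMeasurable_flatten hmeas)
    (ae_restrict_of_forall_mem hΩ fun x hx => ?_) (integrable_flatten hDw)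
  rw [← mnorm_eq_norm_flatten]
  exact hC x hx

theorem integrable_inner_flatten_of_memW2inf (hΩ : IsOpen Ω)
    {T₀ Dw : EVec n → Fin N → Fin n → ℝ} (hT : MemW2inf Ω T₀) (hDw : IntegrableOn Dw Ω) :
    Integrable (fun x => ⟪flatten (T₀ x), flatten (Dw x)⟫) (volume.restrict Ω) := by
  obtain ⟨C, hC⟩ := exists_norm_flatten_le_of_memW2inf hT
  exact integrable_inner_of_ae_bound
    (aestronglyMeasurable_flatten (aestronglyMeasurable_of_memW2inf hΩ hT))
    (ae_restrict_of_forall_mem hΩ.measurableSet hC) (integrable_flatten hDw)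

namespace IsLinearGrowthIntegrand

theorem FstarShift_eq_radialConj (h : IsLinearGrowthIntegrand f f' L) (z : Fin N → Fin n → ℝ) :
    FstarShift (fun z => f (mnorm z)) z = radialConj f (flatten z) := by
  simp only [FstarShift, radialConj, mdot_eq_inner_flatten, mnorm_eq_norm_flatten,
    ContinuousLinearEquiv.map_zero, norm_zero, h.map_zero, add_zero]
  exact flatten.surjective.iSup_comp fun w => ENNReal.ofReal (⟪flatten z, w⟫ - f ‖w‖)

theorem Rdual_eq_neg_lintegral (h : IsLinearGrowthIntegrand f f' L)
    (T₀ χ : EVec n → Fin N → Fin n → ℝ) :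
    Rdual Ω (fun z => f (mnorm z)) T₀ χ =
      -((∫⁻ x in Ω, radialConj f (flatten (T₀ x + χ x)) : ℝ≥0∞) : EReal) := by
  simp only [Rdual, h.FstarShift_eq_radialConj]
  simp [mnorm_eq_norm_flatten, h.map_zero]

theorem memLinfPerp_of_minimal (h : IsLinearGrowthIntegrand f f' L) (hΩ : IsOpen Ω)
    {T₀ : EVec n → Fin N → Fin n → ℝ} (hT : MemW2inf Ω T₀)
    {u : EVec n → Fin N → ℝ} {Du : EVec n → Fin N → Fin n → ℝ} (hu : HasWeakDerivOn Ω u Du)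
    (hmin : ∀ w Dw, HasWeakDerivOn Ω w Dw →
      FFgen Ω (fun z => f (mnorm z)) T₀ Du ≤ FFgen Ω (fun z => f (mnorm z)) T₀ Dw) :
    MemLinfPerp Ω fun x => Amap f' (Du x) - T₀ x := by
  have hTmeas := aestronglyMeasurable_of_memW2inf hΩ hT
  obtain ⟨C, hC⟩ := exists_norm_flatten_le_of_memW2inf hT
  refine ⟨?_, ⟨L + C, fun x hx => ?_⟩, fun w Dw hw => ?_⟩
  · refine AEStronglyMeasurable.sub ?_ hTmeas
    have hAmap (x : EVec n) : Amap f' (Du x) = flatten.symm (radialGrad f' (flatten (Du x))) := by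
      rw [← flatten_Amap, flatten.symm_apply_apply]
    simp only [hAmap]
    exact flatten.symm.continuous.comp_aestronglyMeasurable
      (h.aestronglyMeasurable_radialGrad (integrable_flatten hu.2.1).aestronglyMeasurable)
  · rw [mnorm_eq_norm_flatten, map_sub, flatten_Amap]
    exact (norm_sub_le _ _).trans (add_le_add (h.norm_radialGrad_le _) (hC x hx))
  · simp only [mdot_eq_inner_flatten, map_sub, flatten_Amap]
    refine h.integral_inner_radialGrad_eq_zero_of_minimal (aestronglyMeasurable_flatten hTmeas)
      (ae_restrict_of_forall_mem hΩ.measurableSet hC) (integrable_flatten hu.2.1)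
      (integrable_flatten hw.2.1) fun t => ?_
    simpa only [FFgen_map_mnorm, map_add, map_smul] using
      hmin _ _ (hasWeakDerivOn_add_smul hu hw t)

section Maximality

variable {T₀ χ : EVec n → Fin N → Fin n → ℝ} {u : EVec n → Fin N → ℝ}
  {Du : EVec n → Fin N → Fin n → ℝ}

theorem integrable_inner_flatten_add (hΩ : IsOpen Ω) (hT : MemW2inf Ω T₀)
    (hu : HasWeakDerivOn Ω u Du) (hχ : MemLinfPerp Ω χ) :
    Integrable (fun x => ⟪flatten (T₀ x + χ x), flatten (Du x)⟫) (volume.restrict Ω) := by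
  simp only [map_add, inner_add_left]
  exact (integrable_inner_flatten_of_memW2inf hΩ hT hu.2.1).add
    (integrable_inner_flatten_of_memLinfPerp hΩ.measurableSet hχ hu.2.1)

theorem integral_inner_flatten_add (hΩ : IsOpen Ω) (hT : MemW2inf Ω T₀)
    (hu : HasWeakDerivOn Ω u Du) (hχ : MemLinfPerp Ω χ) :
    ∫ x in Ω, ⟪flatten (T₀ x + χ x), flatten (Du x)⟫ =
      ∫ x in Ω, ⟪flatten (T₀ x), flatten (Du x)⟫ := by
  have horth := hχ.2.2 u Du hu
  simp only [mdot_eq_inner_flatten] at horth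
  simp only [map_add, inner_add_left]
  rw [integral_add (integrable_inner_flatten_of_memW2inf hΩ hT hu.2.1)
    (integrable_inner_flatten_of_memLinfPerp hΩ.measurableSet hχ hu.2.1), horth, add_zero]

theorem lintegral_radialConj_eq (h : IsLinearGrowthIntegrand f f' L) (hΩ : IsOpen Ω)
    (hT : MemW2inf Ω T₀) (hu : HasWeakDerivOn Ω u Du)
    (hσ : MemLinfPerp Ω fun x => Amap f' (Du x) - T₀ x) (hχ : MemLinfPerp Ω χ) :
    ∫⁻ x in Ω, radialConj f (flatten (T₀ x + (Amap f' (Du x) - T₀ x))) =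
      ENNReal.ofReal
        (∫ x in Ω, (⟪flatten (T₀ x + χ x), flatten (Du x)⟫ - f ‖flatten (Du x)‖)) := by
  have hmap := h.integrable_map_norm (integrable_flatten hu.2.1)
  have hσint := integral_inner_flatten_add hΩ hT hu hσ
  have hσintegrable := integrable_inner_flatten_add hΩ hT hu hσ
  simp only [add_sub_cancel, flatten_Amap] at hσint hσintegrable ⊢
  rw [h.lintegral_radialConj_radialGrad (integrable_flatten hu.2.1),
    integral_sub hσintegrable hmap, hσint,
    integral_sub (integrable_inner_flatten_add hΩ hT hu hχ) hmap,
    integral_inner_flatten_add hΩ hT hu hχ]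

theorem Rdual_le (h : IsLinearGrowthIntegrand f f' L) (hΩ : IsOpen Ω) (hT : MemW2inf Ω T₀)
    (hu : HasWeakDerivOn Ω u Du) (hσ : MemLinfPerp Ω fun x => Amap f' (Du x) - T₀ x)
    (hχ : MemLinfPerp Ω χ) :
    Rdual Ω (fun z => f (mnorm z)) T₀ χ ≤
      Rdual Ω (fun z => f (mnorm z)) T₀ fun x => Amap f' (Du x) - T₀ x := by
  rw [h.Rdual_eq_neg_lintegral, h.Rdual_eq_neg_lintegral, EReal.neg_le_neg_iff,
    EReal.coe_ennreal_le_coe_ennreal_iff, h.lintegral_radialConj_eq hΩ hT hu hσ hχ]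
  exact h.ofReal_integral_le_lintegral_radialConj (integrable_flatten hu.2.1)
    (integrable_inner_flatten_add hΩ hT hu hχ)

theorem ae_eq_of_Rdual_eq (h : IsLinearGrowthIntegrand f f' L) (hΩ : IsOpen Ω)
    (hT : MemW2inf Ω T₀) (hu : HasWeakDerivOn Ω u Du)
    (hσ : MemLinfPerp Ω fun x => Amap f' (Du x) - T₀ x) (hχ : MemLinfPerp Ω χ)
    (heq : Rdual Ω (fun z => f (mnorm z)) T₀ χ =
      Rdual Ω (fun z => f (mnorm z)) T₀ fun x => Amap f' (Du x) - T₀ x) :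
    χ =ᵐ[volume.restrict Ω] fun x => Amap f' (Du x) - T₀ x := by
  rw [h.Rdual_eq_neg_lintegral, h.Rdual_eq_neg_lintegral, neg_inj,
    EReal.coe_ennreal_eq_coe_ennreal_iff, h.lintegral_radialConj_eq hΩ hT hu hσ hχ] at heq
  have hnonneg : 0 ≤ ∫ x in Ω,
      (⟪flatten (T₀ x + χ x), flatten (Du x)⟫ - f ‖flatten (Du x)‖) := by
    have hmap := h.integrable_map_norm (integrable_flatten hu.2.1)
    have hσint := integral_inner_flatten_add hΩ hT hu hσ
    have hσintegrable := integrable_inner_flatten_add hΩ hT hu hσ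
    simp only [add_sub_cancel, flatten_Amap] at hσint hσintegrable
    rw [integral_sub (integrable_inner_flatten_add hΩ hT hu hχ) hmap,
      integral_inner_flatten_add hΩ hT hu hχ, ← hσint, ← integral_sub hσintegrable hmap]
    exact integral_nonneg fun x => h.inner_radialGrad_sub_nonneg _
  have hmeas : AEMeasurable (fun x => flatten (T₀ x + χ x)) (volume.restrict Ω) :=
    (aestronglyMeasurable_flatten
      ((aestronglyMeasurable_of_memW2inf hΩ hT).add hχ.1)).aemeasurable
  filter_upwards [h.ae_eq_radialGrad_of_lintegral_radialConj_le (integrable_flatten hu.2.1) hmeas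
    (integrable_inner_flatten_add hΩ hT hu hχ) hnonneg heq.le] with x hx
  rw [← flatten_Amap] at hx
  rw [← flatten.injective hx, add_sub_cancel_left]

end Maximality

end IsLinearGrowthIntegrand

end Dual

/-! ### Weak gradients -/

section WeakGradient

variable {n : ℕ} {ι : Type*}

/-- The `i`-th standard basis vector of `ℝⁿ`. -/
noncomputable abbrev stdVec (i : Fin n) : EVec n := EuclideanSpace.single i 1

/-- The Jacobians of maps `ℝⁿ → ℝ^ι`, with the Frobenius inner product and norm. -/
abbrev Jac (ι : Type*) (n : ℕ) := EuclideanSpace ℝ (ι × Fin n)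

/-- `g` is the distributional gradient of `v` on `S`, tested with `C¹` functions compactly supported
in `S`. In contrast to `HasWeakDerivOn`, this carries no integrability. -/
def HasWeakGradOn (S : Set (EVec n)) (v : EVec n → EuclideanSpace ℝ ι) (g : EVec n → Jac ι n) :
    Prop :=
  ∀ φ : EVec n → ℝ, ContDiff ℝ 1 φ → HasCompactSupport φ → tsupport φ ⊆ S → ∀ (a : ι) (i : Fin n),
    ∫ x, v x a * fderiv ℝ φ x (stdVec i) = -∫ x, g x (a, i) * φ x

/-- The rank-one matrix `v ⊗ ξ`. -/
noncomputable def outer (v : EuclideanSpace ℝ ι) (ξ : EVec n) : Jac ι n :=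
  WithLp.toLp 2 fun p => v p.1 * ξ p.2

@[simp]
theorem outer_apply (v : EuclideanSpace ℝ ι) (ξ : EVec n) (p : ι × Fin n) :
    outer v ξ p = v p.1 * ξ p.2 := rfl

theorem norm_outer [Fintype ι] (v : EuclideanSpace ℝ ι) (ξ : EVec n) : ‖outer v ξ‖ = ‖v‖ * ‖ξ‖ := by
  rw [EuclideanSpace.norm_eq, EuclideanSpace.norm_eq, EuclideanSpace.norm_eq,
    ← Real.sqrt_mul (by positivity), Fintype.sum_prod_type, Finset.sum_mul_sum]
  simp [mul_pow]

theorem continuous_outer : Continuous fun q : EuclideanSpace ℝ ι × EVec n => outer q.1 q.2 :=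
  (PiLp.continuous_toLp 2 _).comp (continuous_pi fun p => by fun_prop)

theorem continuous_fderiv_apply_of_contDiff {X : Type*} [NormedAddCommGroup X] [NormedSpace ℝ X]
    {φ : X → ℝ} (hφ : ContDiff ℝ 1 φ) (e : X) : Continuous fun x => fderiv ℝ φ x e :=
  (hφ.continuous_fderiv one_ne_zero).clm_apply continuous_const

theorem continuous_gradient_of_contDiff {η : EVec n → ℝ} (hη : ContDiff ℝ 1 η) :
    Continuous (gradient η) :=
  (InnerProductSpace.toDual ℝ (EVec n)).symm.continuous.comp (hη.continuous_fderiv one_ne_zero)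

theorem gradient_apply_coord (η : EVec n → ℝ) (x : EVec n) (i : Fin n) :
    gradient η x i = fderiv ℝ η x (stdVec i) := by
  rw [← inner_gradient_left, EuclideanSpace.inner_single_right]
  simp

theorem integrable_coord_mul_of_hasCompactSupport [Fintype ι] {v : EVec n → EuclideanSpace ℝ ι}
    (hv : LocallyIntegrable v) {ψ : EVec n → ℝ} (hψ : Continuous ψ) (hc : HasCompactSupport ψ)
    (a : ι) : Integrable fun x => v x a * ψ x := by
  refine ((EuclideanSpace.proj (𝕜 := ℝ) a).integrable_comp
    (hv.integrable_smul_left_of_hasCompactSupport hψ hc)).congr (ae_of_all _ fun x => ?_)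
  simp [mul_comm]

theorem integrable_coord_mul_fderiv [Fintype ι] {v : EVec n → EuclideanSpace ℝ ι}
    (hv : LocallyIntegrable v)
    {φ : EVec n → ℝ} (hφ : ContDiff ℝ 1 φ) (hc : HasCompactSupport φ) (a : ι) (e : EVec n) :
    Integrable fun x => v x a * fderiv ℝ φ x e :=
  integrable_coord_mul_of_hasCompactSupport hv (continuous_fderiv_apply_of_contDiff hφ e)
    (hc.fderiv_apply (𝕜 := ℝ) e) a

namespace HasWeakGradOn

variable {S : Set (EVec n)} {v v' : EVec n → EuclideanSpace ℝ ι} {g g' : EVec n → Jac ι n}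

theorem congr_ae (h : HasWeakGradOn S v g) (hv : v =ᵐ[volume] v') (hg : g =ᵐ[volume] g') :
    HasWeakGradOn S v' g' := by
  intro φ hφ hc hS a i
  have hv' : ∫ x, v x a * fderiv ℝ φ x (stdVec i) = ∫ x, v' x a * fderiv ℝ φ x (stdVec i) :=
    integral_congr_ae (hv.mono fun x hx => by simp only [hx])
  have hg' : ∫ x, g x (a, i) * φ x = ∫ x, g' x (a, i) * φ x :=
    integral_congr_ae (hg.mono fun x hx => by simp only [hx])
  rw [← hv', ← hg', h φ hφ hc hS a i]

theorem add [Fintype ι] (h : HasWeakGradOn S v g) (h' : HasWeakGradOn S v' g')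
    (hv : LocallyIntegrable v)
    (hv' : LocallyIntegrable v') (hg : LocallyIntegrable g) (hg' : LocallyIntegrable g') :
    HasWeakGradOn S (v + v') (g + g') := by
  intro φ hφ hc hS a i
  simp only [Pi.add_apply, PiLp.add_apply, add_mul]
  rw [integral_add (integrable_coord_mul_fderiv hv hφ hc a _)
      (integrable_coord_mul_fderiv hv' hφ hc a _),
    integral_add (integrable_coord_mul_of_hasCompactSupport hg hφ.continuous hc _)
      (integrable_coord_mul_of_hasCompactSupport hg' hφ.continuous hc _),
    h φ hφ hc hS a i, h' φ hφ hc hS a i, neg_add]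

theorem const_smul (h : HasWeakGradOn S v g) (c : ℝ) : HasWeakGradOn S (c • v) (c • g) := by
  intro φ hφ hc hS a i
  simp only [Pi.smul_apply, PiLp.smul_apply, smul_eq_mul, mul_assoc]
  rw [integral_const_mul, integral_const_mul, h φ hφ hc hS a i, mul_neg]

theorem comp_add_right (h : HasWeakGradOn univ v g) (c : EVec n) :
    HasWeakGradOn univ (fun x => v (x + c)) (fun x => g (x + c)) := by
  intro φ hφ hc _ a i
  rw [← integral_sub_right_eq_self (fun x => v (x + c) a * fderiv ℝ φ x (stdVec i)) c,
    ← integral_sub_right_eq_self (fun x => g (x + c) (a, i) * φ x) c]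
  simpa only [sub_add_cancel, fderiv_comp_sub] using
    h (fun x => φ (x - c)) (hφ.comp (contDiff_id.sub contDiff_const))
      (hc.comp_homeomorph (Homeomorph.subRight c)) (subset_univ _) a i

theorem smul_of_hasCompactSupport [Fintype ι] (h : HasWeakGradOn S v g) (hv : LocallyIntegrable v)
    (hg : LocallyIntegrable g) {ζ : EVec n → ℝ} (hζ : ContDiff ℝ 1 ζ) (hζc : HasCompactSupport ζ)
    (hζS : tsupport ζ ⊆ S) :
    HasWeakGradOn univ (fun x => ζ x • v x) (fun x => ζ x • g x + outer (v x) (gradient ζ x)) := by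
  intro φ hφ hc _ a i
  have hprod := h (fun x => ζ x * φ x) (hζ.mul hφ) hζc.mul_right
    (tsupport_mul_subset_left.trans hζS) a i
  have hfderiv (x : EVec n) : fderiv ℝ (fun x => ζ x * φ x) x (stdVec i) =
      ζ x * fderiv ℝ φ x (stdVec i) + φ x * fderiv ℝ ζ x (stdVec i) := by
    rw [fderiv_fun_mul (hζ.differentiable one_ne_zero x) (hφ.differentiable one_ne_zero x)]
    simp
  have hint_φ : Integrable fun x => v x a * (ζ x * fderiv ℝ φ x (stdVec i)) :=
    integrable_coord_mul_of_hasCompactSupport hv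
      (hζ.continuous.mul (continuous_fderiv_apply_of_contDiff hφ _)) hζc.mul_right a
  have hint_ζ : Integrable fun x => v x a * (φ x * fderiv ℝ ζ x (stdVec i)) :=
    integrable_coord_mul_of_hasCompactSupport hv
      (hφ.continuous.mul (continuous_fderiv_apply_of_contDiff hζ _)) hc.mul_right a
  have hint_g : Integrable fun x => g x (a, i) * (ζ x * φ x) :=
    integrable_coord_mul_of_hasCompactSupport hg (hζ.continuous.mul hφ.continuous) hζc.mul_right _
  simp only [hfderiv, mul_add] at hprod
  rw [integral_add hint_φ hint_ζ] at hprod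
  calc ∫ x, (ζ x • v x) a * fderiv ℝ φ x (stdVec i)
      = ∫ x, v x a * (ζ x * fderiv ℝ φ x (stdVec i)) := by
        congr 1 with x
        simp only [PiLp.smul_apply, smul_eq_mul]
        ring
    _ = -∫ x, (g x (a, i) * (ζ x * φ x) + v x a * (φ x * fderiv ℝ ζ x (stdVec i))) := by
        rw [integral_add hint_g hint_ζ]
        linarith
    _ = -∫ x, (ζ x • g x + outer (v x) (gradient ζ x)) (a, i) * φ x := by
        congr 2 with x
        simp only [PiLp.add_apply, PiLp.smul_apply, outer_apply, smul_eq_mul, gradient_apply_coord]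
        ring

end HasWeakGradOn

end WeakGradient

/-! ### Strongly monotone equations in Hilbert spaces -/

section StronglyMonotone

variable {H H₂ : Type*} [NormedAddCommGroup H] [InnerProductSpace ℝ H]
  [NormedAddCommGroup H₂] [InnerProductSpace ℝ H₂] {K : NNReal} {ε : ℝ}

theorem norm_sub_smul_sq_le_of_le_inner {a b : H} {M : ℝ} (hM : 0 < M) (hε : 0 ≤ ε)
    (hb : ‖b‖ ≤ M * ‖a‖) (hab : ε * ‖a‖ ^ 2 ≤ ⟪b, a⟫) :
    ‖a - (ε / M ^ 2) • b‖ ^ 2 ≤ (1 - ε ^ 2 / M ^ 2) * ‖a‖ ^ 2 := by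
  have hb_sq : (ε / M ^ 2) ^ 2 * ‖b‖ ^ 2 ≤ (ε / M ^ 2) ^ 2 * (M * ‖a‖) ^ 2 := by gcongr
  have hab' : ε / M ^ 2 * (ε * ‖a‖ ^ 2) ≤ ε / M ^ 2 * ⟪b, a⟫ := by gcongr
  have hstep : (ε / M ^ 2) ^ 2 * (M * ‖a‖) ^ 2 = ε ^ 2 / M ^ 2 * ‖a‖ ^ 2 := by field_simp
  have hgain : ε / M ^ 2 * (ε * ‖a‖ ^ 2) = ε ^ 2 / M ^ 2 * ‖a‖ ^ 2 := by ring
  rw [norm_sub_sq_real, real_inner_smul_right, real_inner_comm, norm_smul, mul_pow,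
    Real.norm_eq_abs, sq_abs]
  linarith

/- Zarantonello: for `t = ε / M²` the map `x ↦ x - t • B x` is a contraction. -/
theorem exists_eq_zero_of_stronglyMonotone [CompleteSpace H] {B : H → H} (hB : LipschitzWith K B)
    (hε : 0 < ε) (hmono : ∀ x y, ε * ‖x - y‖ ^ 2 ≤ ⟪B x - B y, x - y⟫) : ∃ x, B x = 0 := by
  set M : ℝ := K + ε
  have hM : 0 < M := by positivity
  have hεM : ε ^ 2 / M ^ 2 ≤ 1 := by
    rw [div_le_one (by positivity)]
    gcongr
    exact le_add_of_nonneg_left K.coe_nonneg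
  have hlip (x y : H) : ‖B x - B y‖ ≤ M * ‖x - y‖ :=
    (hB.norm_sub_le x y).trans (by gcongr; exact le_add_of_nonneg_right hε.le)
  have hcontr : ContractingWith (Real.toNNReal √(1 - ε ^ 2 / M ^ 2))
      fun x => x - (ε / M ^ 2) • B x := by
    refine ⟨?_, LipschitzWith.of_dist_le_mul fun x y => ?_⟩
    · rw [Real.toNNReal_lt_one, Real.sqrt_lt' one_pos, one_pow, sub_lt_self_iff]
      positivity
    · rw [dist_eq_norm, dist_eq_norm, Real.coe_toNNReal _ (Real.sqrt_nonneg _),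
        sub_sub_sub_comm, ← smul_sub, ← Real.sqrt_sq (norm_nonneg (x - y)),
        ← Real.sqrt_mul (by linarith)]
      exact Real.le_sqrt_of_sq_le
        (norm_sub_smul_sq_le_of_le_inner hM hε.le (hlip x y) (hmono x y))
  refine ⟨ContractingWith.fixedPoint _ hcontr, ?_⟩
  have hfixed : _ - (ε / M ^ 2) • B _ = _ := hcontr.fixedPoint_isFixedPt
  exact (smul_eq_zero.1 (sub_eq_self.1 hfixed)).resolve_left (by positivity)

theorem exists_mem_forall_inner_add_inner_eq_zero [CompleteSpace H] [CompleteSpace H₂]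
    (S : Submodule ℝ H) [CompleteSpace S] (P : H →L[ℝ] H₂) {B : H₂ → H₂} (hB : LipschitzWith K B)
    (hmono : ∀ x y, 0 ≤ ⟪B x - B y, x - y⟫) (hε : 0 < ε) (p : H) (τ : H₂) :
    ∃ w ∈ S, ∀ ψ ∈ S, ε * ⟪p + w, ψ⟫ + ⟪B (P (p + w)) - τ, P ψ⟫ = 0 := by
  let A : S → S := fun w => S.subtypeL.adjoint
    (ε • (p + w) + P.adjoint (B (P (p + w)) - τ))
  have hA_inner (w ψ : S) :
      ⟪A w, ψ⟫ = ε * ⟪p + w, (ψ : H)⟫ + ⟪B (P (p + w)) - τ, P ψ⟫ := by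
    simp only [A, ContinuousLinearMap.adjoint_inner_left, inner_add_left, real_inner_smul_left,
      Submodule.subtypeL_apply]
  have hshift : LipschitzWith 1 fun w : S => p + (w : H) :=
    .of_dist_le_mul fun x y => by simp [Subtype.dist_eq]
  have hA_lip := S.subtypeL.adjoint.lipschitz.comp
    (((lipschitzWith_smul ε).comp hshift).add (P.adjoint.lipschitz.comp
      ((hB.comp (P.lipschitz.comp hshift)).sub (.const τ))))
  have hA_mono (x y : S) : ε * ‖x - y‖ ^ 2 ≤ ⟪A x - A y, x - y⟫ := by
    have hP := hmono (P (p + x)) (P (p + y))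
    have hsplit : ⟪A x - A y, x - y⟫ = ε * ‖x - y‖ ^ 2 +
        ⟪B (P (p + x)) - B (P (p + y)), P (p + x) - P (p + y)⟫ := by
      rw [inner_sub_left, hA_inner, hA_inner, ← Submodule.norm_coe, ← real_inner_self_eq_norm_sq]
      simp only [Submodule.coe_sub, ← map_sub, add_sub_add_left_eq_sub, inner_sub_left,
        inner_sub_right, inner_add_left]
      ring
    linarith
  obtain ⟨w, hw⟩ := exists_eq_zero_of_stronglyMonotone hA_lip hε hA_mono
  refine ⟨w, w.2, fun ψ hψ => ?_⟩
  rw [← hA_inner w ⟨ψ, hψ⟩]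
  exact (congrArg (fun z => ⟪z, _⟫) hw).trans (inner_zero_left _)

end StronglyMonotone

/-! ### The regularised problem -/

section Regularised

variable {n : ℕ} {ι : Type*} [Fintype ι]

/-- `v ∈ W^{1,2}(ℝⁿ;ℝ^ι)` with weak gradient `g`. -/
structure MemH1 (v : EVec n → EuclideanSpace ℝ ι) (g : EVec n → Jac ι n) : Prop where
  memLp : MemLp v 2
  memLp_grad : MemLp g 2
  hasWeakGradOn : HasWeakGradOn univ v g

/-- `v ∈ W^{1,2}(ℝⁿ;ℝ^ι)` with weak gradient `g`, both vanishing outside `K`. -/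
structure MemH1Supp (K : Set (EVec n)) (v : EVec n → EuclideanSpace ℝ ι) (g : EVec n → Jac ι n) :
    Prop extends MemH1 v g where
  ae_eq_zero : ∀ᵐ x, x ∉ K → v x = 0 ∧ g x = 0

/-- The weak form, tested with `W^{1,2}` functions vanishing outside `K`, of the regularised
Euler–Lagrange equation `-div (∇F(g) + ε g - T) + ε v = 0`, where `F = f(|·|)` and `g = ∇v`. -/
def IsRegularisedSolution (f' : ℝ → ℝ) (ε : ℝ) (T : EVec n → Jac ι n) (K : Set (EVec n))
    (v : EVec n → EuclideanSpace ℝ ι) (g : EVec n → Jac ι n) : Prop :=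
  ∀ ψ Dψ, MemH1Supp K ψ Dψ →
    ∫ x, (⟪radialGrad f' (g x) + ε • g x - T x, Dψ x⟫ + ε * ⟪v x, ψ x⟫) = 0

variable {K : Set (EVec n)} {v v' : EVec n → EuclideanSpace ℝ ι} {g g' : EVec n → Jac ι n}

theorem MemH1.add (h : MemH1 v g) (h' : MemH1 v' g') : MemH1 (v + v') (g + g') where
  memLp := h.memLp.add h'.memLp
  memLp_grad := h.memLp_grad.add h'.memLp_grad
  hasWeakGradOn := h.hasWeakGradOn.add h'.hasWeakGradOn (h.memLp.locallyIntegrable one_le_two)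
    (h'.memLp.locallyIntegrable one_le_two) (h.memLp_grad.locallyIntegrable one_le_two)
    (h'.memLp_grad.locallyIntegrable one_le_two)

theorem MemH1.const_smul (h : MemH1 v g) (c : ℝ) : MemH1 (c • v) (c • g) where
  memLp := h.memLp.const_smul c
  memLp_grad := h.memLp_grad.const_smul c
  hasWeakGradOn := h.hasWeakGradOn.const_smul c

namespace MemH1Supp

theorem congr_ae (h : MemH1Supp K v g) (hv : v =ᵐ[volume] v') (hg : g =ᵐ[volume] g') :
    MemH1Supp K v' g' where
  memLp := h.memLp.ae_eq hv
  memLp_grad := h.memLp_grad.ae_eq hg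
  hasWeakGradOn := h.hasWeakGradOn.congr_ae hv hg
  ae_eq_zero := by
    filter_upwards [h.ae_eq_zero, hv, hg] with x hx hxv hxg
    rwa [← hxv, ← hxg]

theorem add (h : MemH1Supp K v g) (h' : MemH1Supp K v' g') : MemH1Supp K (v + v') (g + g') where
  toMemH1 := h.toMemH1.add h'.toMemH1
  ae_eq_zero := by
    filter_upwards [h.ae_eq_zero, h'.ae_eq_zero] with x hx hx' hxK
    simp [hx hxK, hx' hxK]

theorem const_smul (h : MemH1Supp K v g) (c : ℝ) : MemH1Supp K (c • v) (c • g) where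
  toMemH1 := h.toMemH1.const_smul c
  ae_eq_zero := by
    filter_upwards [h.ae_eq_zero] with x hx hxK
    simp [hx hxK]

theorem zero : MemH1Supp K (0 : EVec n → EuclideanSpace ℝ ι) (0 : EVec n → Jac ι n) where
  memLp := .zero
  memLp_grad := .zero
  hasWeakGradOn := fun φ _ _ _ a i => by simp
  ae_eq_zero := ae_of_all _ fun _ _ => ⟨rfl, rfl⟩

end MemH1Supp

theorem isClosed_setOf_ae_eq_zero {α E : Type*} [MeasurableSpace α] {μ : Measure α}
    [NormedAddCommGroup E] [NormedSpace ℝ E] {s : Set α} (hs : MeasurableSet s) :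
    IsClosed {u : Lp E 2 μ | ∀ᵐ x ∂μ, x ∈ s → u x = 0} := by
  suffices heq : {u : Lp E 2 μ | ∀ᵐ x ∂μ, x ∈ s → u x = 0} =
      LpToLpRestrictCLM α E ℝ μ 2 s ⁻¹' {0} from
    heq ▸ isClosed_singleton.preimage (LpToLpRestrictCLM α E ℝ μ 2 s).continuous
  ext u
  rw [mem_ofPred_eq, mem_preimage, mem_singleton_iff, Lp.eq_zero_iff_ae_eq_zero,
    ← ae_restrict_iff' hs]
  refine eventually_congr ?_
  filter_upwards [LpToLpRestrictCLM_coeFn (F := E) (p := 2) (μ := μ) ℝ s u] with x hx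
  rw [hx, Pi.zero_apply]

theorem continuous_integral_coord_mul {ψ : EVec n → ℝ} (hψ : Continuous ψ)
    (hc : HasCompactSupport ψ) (a : ι) :
    Continuous fun u : Lp (EuclideanSpace ℝ ι) 2 (volume : Measure (EVec n)) =>
      ∫ x, u x a * ψ x := by
  classical
  have hmem : MemLp (fun x => ψ x • EuclideanSpace.single a (1 : ℝ)) 2 :=
    (hψ.smul continuous_const).memLp_of_hasCompactSupport hc.smul_right
  refine (continuous_const (y := hmem.toLp).inner continuous_id).congr fun u => ?_
  rw [L2.inner_def]
  refine integral_congr_ae (hmem.coeFn_toLp.mono fun x hx => ?_)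
  simp only [id_eq, hx, real_inner_smul_left, EuclideanSpace.inner_single_left, map_one, one_mul,
    mul_comm]

theorem isClosed_setOf_hasWeakGradOn (S : Set (EVec n)) :
    IsClosed {p : WithLp 2 (Lp (EuclideanSpace ℝ ι) 2 (volume : Measure (EVec n)) ×
      Lp (Jac ι n) 2 (volume : Measure (EVec n))) | HasWeakGradOn S p.fst p.snd} := by
  simp only [HasWeakGradOn, ofPred_forall]
  refine isClosed_iInter fun φ => isClosed_iInter fun hφ => isClosed_iInter fun hc =>
    isClosed_iInter fun _ => isClosed_iInter fun a => isClosed_iInter fun i => isClosed_eq ?_ ?_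
  · exact (continuous_integral_coord_mul (continuous_fderiv_apply_of_contDiff hφ _)
      (hc.fderiv_apply (𝕜 := ℝ) _) a).comp (WithLp.fstL 2 ℝ _ _).continuous
  · exact ((continuous_integral_coord_mul hφ.continuous hc (a, i)).comp
      (WithLp.sndL 2 ℝ _ _).continuous).neg

/-- The closed subspace of `L²(ℝⁿ;ℝ^ι) × L²(ℝⁿ;ℝ^{ι×n})` of the pairs `(v, ∇v)` vanishing outside
`K`. -/
def h1SuppSubmodule (ι : Type*) [Fintype ι] (K : Set (EVec n)) :
    Submodule ℝ (WithLp 2 (Lp (EuclideanSpace ℝ ι) 2 (volume : Measure (EVec n)) ×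
      Lp (Jac ι n) 2 (volume : Measure (EVec n)))) where
  carrier := {p | MemH1Supp K p.fst p.snd}
  add_mem' h h' := (h.add h').congr_ae (Lp.coeFn_add _ _).symm (Lp.coeFn_add _ _).symm
  smul_mem' c _ h := (h.const_smul c).congr_ae (Lp.coeFn_smul c _).symm (Lp.coeFn_smul c _).symm
  zero_mem' := MemH1Supp.zero.congr_ae (Lp.coeFn_zero _ _ _).symm (Lp.coeFn_zero _ _ _).symm

theorem isClosed_h1SuppSubmodule (hK : MeasurableSet K) :
    IsClosed (h1SuppSubmodule ι K).carrier := by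
  have hclosed := (isClosed_setOf_hasWeakGradOn (ι := ι) (univ : Set (EVec n))).inter
    (((isClosed_setOf_ae_eq_zero hK.compl).preimage (WithLp.fstL 2 ℝ _ _).continuous).inter
      ((isClosed_setOf_ae_eq_zero hK.compl).preimage (WithLp.sndL 2 ℝ _ _).continuous))
  convert! hclosed using 1
  ext p
  refine ⟨fun h => ⟨h.hasWeakGradOn, ?_, ?_⟩, fun ⟨hgrad, hv, hg⟩ => ⟨⟨Lp.memLp _, Lp.memLp _,
    hgrad⟩, ?_⟩⟩
  · exact h.ae_eq_zero.mono fun x hx hxK => (hx hxK).1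
  · exact h.ae_eq_zero.mono fun x hx hxK => (hx hxK).2
  · filter_upwards [hv, hg] with x hxv hxg hxK using ⟨hxv hxK, hxg hxK⟩

theorem inner_compLp_sub_nonneg {α E : Type*} [MeasurableSpace α] {μ : Measure α}
    [NormedAddCommGroup E] [InnerProductSpace ℝ E] {c : NNReal} {A : E → E}
    (hA : LipschitzWith c A) (hA0 : A 0 = 0) (hmono : ∀ a b, 0 ≤ ⟪A a - A b, a - b⟫)
    (u w : Lp E 2 μ) : 0 ≤ ⟪hA.compLp hA0 u - hA.compLp hA0 w, u - w⟫ := by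
  rw [L2.inner_def]
  refine integral_nonneg_of_ae ?_
  filter_upwards [hA.coeFn_compLp hA0 u, hA.coeFn_compLp hA0 w, Lp.coeFn_sub u w,
    Lp.coeFn_sub (hA.compLp hA0 u) (hA.compLp hA0 w)] with x hu hw huw hAuw
  simpa only [hAuw, huw, Pi.sub_apply, hu, hw, Function.comp_apply] using! hmono (u x) (w x)

theorem L2_inner_eq_integral_of_ae_eq {α E : Type*} [MeasurableSpace α] {μ : Measure α}
    [NormedAddCommGroup E] [InnerProductSpace ℝ E] {u w : Lp E 2 μ} {u' w' : α → E}
    (hu : u =ᵐ[μ] u') (hw : w =ᵐ[μ] w') :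
    Integrable (fun x => ⟪u' x, w' x⟫) μ ∧ ⟪u, w⟫ = ∫ x, ⟪u' x, w' x⟫ ∂μ := by
  have heq : (fun x => ⟪u x, w x⟫) =ᵐ[μ] fun x => ⟪u' x, w' x⟫ := by
    filter_upwards [hu, hw] with x hux hwx using by rw [hux, hwx]
  exact ⟨(L2.integrable_inner u w).congr heq, (L2.inner_def u w).trans (integral_congr_ae heq)⟩

theorem IsLinearGrowthIntegrand.exists_isRegularisedSolution {f f' : ℝ → ℝ} {L ε : ℝ}
    (h : IsLinearGrowthIntegrand f f' L) (hε : 0 < ε) (hK : MeasurableSet K)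
    {U : EVec n → EuclideanSpace ℝ ι} {G T : EVec n → Jac ι n} (hU : MemH1 U G) (hT : MemLp T 2) :
    ∃ v g, MemH1 v g ∧ (∀ᵐ x, x ∉ K → v x = U x ∧ g x = G x) ∧
      IsRegularisedSolution f' ε T K v g := by
  let S := h1SuppSubmodule ι K
  have : CompleteSpace S := (isClosed_h1SuppSubmodule hK).completeSpace_coe
  let A := (h.lipschitzWith_radialGrad (E := Jac ι n)).compLp (μ := volume (α := EVec n)) (p := 2)
    (radialGrad_zero _)
  obtain ⟨w, hwS, hw⟩ := exists_mem_forall_inner_add_inner_eq_zero S (WithLp.sndL 2 ℝ _ _)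
    (B := A) (LipschitzWith.lipschitzWith_compLp _ _)
    (inner_compLp_sub_nonneg _ _ fun a b => h.radialGrad_monotone b a) hε
    (WithLp.toLp 2 (hU.memLp.toLp, hU.memLp_grad.toLp)) hT.toLp
  have hwS : MemH1Supp K w.fst w.snd := hwS
  refine ⟨U + w.fst, G + w.snd, hU.add hwS.toMemH1, ?_, fun ψ Dψ hψ => ?_⟩
  · filter_upwards [hwS.ae_eq_zero] with x hx hxK
    simp [hx hxK]
  have hv_ae : ⇑(hU.memLp.toLp + w.fst) =ᵐ[volume] U + w.fst :=
    (Lp.coeFn_add _ _).trans (hU.memLp.coeFn_toLp.add .rfl)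
  have hg_ae : ⇑(hU.memLp_grad.toLp + w.snd) =ᵐ[volume] G + w.snd :=
    (Lp.coeFn_add _ _).trans (hU.memLp_grad.coeFn_toLp.add .rfl)
  have hA_ae : ⇑(A (hU.memLp_grad.toLp + w.snd) - hT.toLp) =ᵐ[volume]
      fun x => radialGrad f' ((G + w.snd) x) - T x := by
    filter_upwards [Lp.coeFn_sub (A (hU.memLp_grad.toLp + w.snd)) hT.toLp, hT.coeFn_toLp, hg_ae,
      LipschitzWith.coeFn_compLp _ (radialGrad_zero f') (hU.memLp_grad.toLp + w.snd)]
      with x hsub hTx hgx hAx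
    rw [hsub, Pi.sub_apply, hTx, hAx, Function.comp_apply, hgx]
  obtain ⟨hint_v, hinner_v⟩ := L2_inner_eq_integral_of_ae_eq hv_ae hψ.memLp.coeFn_toLp
  obtain ⟨hint_g, hinner_g⟩ := L2_inner_eq_integral_of_ae_eq hg_ae hψ.memLp_grad.coeFn_toLp
  obtain ⟨hint_A, hinner_A⟩ := L2_inner_eq_integral_of_ae_eq hA_ae hψ.memLp_grad.coeFn_toLp
  have hweak : ε * (⟪hU.memLp.toLp + w.fst, hψ.memLp.toLp⟫ +
      ⟪hU.memLp_grad.toLp + w.snd, hψ.memLp_grad.toLp⟫) +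
      ⟪A (hU.memLp_grad.toLp + w.snd) - hT.toLp, hψ.memLp_grad.toLp⟫ = 0 :=
    hw (WithLp.toLp 2 (hψ.memLp.toLp, hψ.memLp_grad.toLp))
      (hψ.congr_ae hψ.memLp.coeFn_toLp.symm hψ.memLp_grad.coeFn_toLp.symm)
  rw [hinner_v, hinner_g, hinner_A, ← integral_add hint_v hint_g, ← integral_const_mul,
    ← integral_add (by exact (hint_v.add hint_g).const_mul ε) hint_A] at hweak
  rw [← hweak]
  congr 1 with x
  rw [add_sub_right_comm, inner_add_left, real_inner_smul_left]
  ring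

end Regularised

/-! ### Translations and difference quotients in `L²` -/

section DifferenceQuotient

theorem norm_le_of_dense_of_abs_inner_le {H : Type*} [NormedAddCommGroup H] [InnerProductSpace ℝ H]
    {S : Set H} (hS : Dense S) {x : H} {ω : ℝ} (hω : 0 ≤ ω)
    (h : ∀ k ∈ S, |⟪x, k⟫| ≤ ω * ‖k‖) : ‖x‖ ≤ ω := by
  have hclosed : IsClosed {k : H | |⟪x, k⟫| ≤ ω * ‖k‖} := isClosed_le (by fun_prop) (by fun_prop)
  have hx : |⟪x, x⟫| ≤ ω * ‖x‖ := closure_minimal h hclosed (hS x)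
  rw [real_inner_self_eq_norm_sq, abs_of_nonneg (sq_nonneg _), sq] at hx
  rcases (norm_nonneg x).eq_or_lt with hx0 | hx0
  · rwa [← hx0]
  · exact le_of_mul_le_mul_right hx hx0

section LpNorm

variable {α : Type*} [MeasurableSpace α] {μ : Measure α} {a b φ : α → ℝ}

theorem abs_integral_mul_le_lpNorm_mul_lpNorm (ha : MemLp a 2 μ) (hb : MemLp b 2 μ) :
    |∫ x, a x * b x ∂μ| ≤ lpNorm a 2 μ * lpNorm b 2 μ := by
  have hinner := (L2_inner_eq_integral_of_ae_eq ha.coeFn_toLp hb.coeFn_toLp).2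
  have hle := abs_real_inner_le_norm ha.toLp hb.toLp
  rw [hinner, Lp.norm_toLp, Lp.norm_toLp, toReal_eLpNorm ha.1, toReal_eLpNorm hb.1] at hle
  simpa [mul_comm] using hle

theorem integral_sub_mul_eq_sub (ha : MemLp a 2 μ) (hb : MemLp b 2 μ) (hφ : MemLp φ 2 μ) :
    ∫ x, (a x - b x) * φ x ∂μ = (∫ x, a x * φ x ∂μ) - ∫ x, b x * φ x ∂μ := by
  simp only [sub_mul]
  exact integral_sub (ha.integrable_mul hφ) (hb.integrable_mul hφ)

theorem lpNorm_two_sq_eq_integral_sq (ha : MemLp a 2 μ) : lpNorm a 2 μ ^ 2 = ∫ x, a x ^ 2 ∂μ := by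
  rw [← toReal_eLpNorm ha.1, ← Lp.norm_toLp a ha, ← real_inner_self_eq_norm_sq,
    (L2_inner_eq_integral_of_ae_eq ha.coeFn_toLp ha.coeFn_toLp).2]
  simp [sq]

end LpNorm

/-- The difference quotient of `a` with step `t` in direction `e`. -/
noncomputable def diffQuot {X E : Type*} [AddCommGroup X] [Module ℝ X] [AddCommGroup E] [Module ℝ E]
    (t : ℝ) (e : X) (a : X → E) (x : X) : E :=
  t⁻¹ • (a (x + t • e) - a x)

theorem memLp_comp_add_right {X E : Type*} [AddGroup X] [MeasurableSpace X] [MeasurableAdd X]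
    [NormedAddCommGroup E] {μ : Measure X} [μ.IsAddRightInvariant] {p : ℝ≥0∞} {g : X → E}
    (hg : MemLp g p μ) (c : X) : MemLp (fun x => g (x + c)) p μ :=
  hg.comp_measurePreserving (measurePreserving_add_right μ c)

theorem memLp_diffQuot {X E : Type*} [AddCommGroup X] [Module ℝ X] [MeasurableSpace X]
    [MeasurableAdd X] [NormedAddCommGroup E] [NormedSpace ℝ E] {μ : Measure X}
    [μ.IsAddRightInvariant] {p : ℝ≥0∞} {a : X → E} (ha : MemLp a p μ) (t : ℝ) (e : X) :
    MemLp (diffQuot t e a) p μ :=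
  ((memLp_comp_add_right ha (t • e)).sub ha).const_smul t⁻¹

theorem integral_comp_add_right_mul {X : Type*} [AddGroup X] [MeasurableSpace X] [MeasurableAdd X]
    {μ : Measure X} [μ.IsAddRightInvariant] (v φ : X → ℝ) (c : X) :
    ∫ x, v (x + c) * φ x ∂μ = ∫ x, v x * φ (x - c) ∂μ := by
  rw [← integral_sub_right_eq_self (fun x => v (x + c) * φ x) c]
  simp only [sub_add_cancel]

theorem integral_diffQuot_mul {X : Type*} [AddCommGroup X] [Module ℝ X] [MeasurableSpace X]
    [MeasurableAdd X] {μ : Measure X} [μ.IsAddRightInvariant] {v φ : X → ℝ} (hv : MemLp v 2 μ)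
    (hφ : MemLp φ 2 μ) (t : ℝ) (e : X) :
    ∫ x, diffQuot t e v x * φ x ∂μ =
      t⁻¹ * ((∫ x, v x * φ (x - t • e) ∂μ) - ∫ x, v x * φ x ∂μ) := by
  rw [← integral_comp_add_right_mul, ← integral_sub_mul_eq_sub (memLp_comp_add_right hv _) hv hφ,
    ← integral_const_mul]
  congr 1 with x
  simp only [diffQuot, smul_eq_mul]
  ring

theorem exists_integrable_bound_mul_comp_sub_smul {X : Type*} [NormedAddCommGroup X]
    [NormedSpace ℝ X] [MeasurableSpace X] [BorelSpace X] {μ : Measure X} {v ψ : X → ℝ}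
    (hv : LocallyIntegrable v μ) (hψ : Continuous ψ)
    (hc : HasCompactSupport ψ) (e : X) (t₀ : ℝ) :
    ∃ b : X → ℝ, Integrable b μ ∧
      ∀ x, ∀ t ∈ Metric.ball t₀ 1, ‖v x * ψ (x - t • e)‖ ≤ b x := by
  obtain ⟨C, hC⟩ := hψ.bounded_above_of_compact_support hc
  let S : Set X := (fun q : X × ℝ => q.1 + q.2 • e) '' (tsupport ψ ×ˢ Icc (t₀ - 1) (t₀ + 1))
  have hS : IsCompact S := (hc.isCompact.prod isCompact_Icc).image (by fun_prop)
  have hψ_zero : ∀ x ∉ S, ∀ t ∈ Metric.ball t₀ 1, ψ (x - t • e) = 0 := by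
    refine fun x hx t ht => image_eq_zero_of_notMem_tsupport fun hmem => hx ?_
    rw [Real.ball_eq_Ioo] at ht
    exact ⟨(x - t • e, t), ⟨hmem, Ioo_subset_Icc_self ht⟩, sub_add_cancel _ _⟩
  refine ⟨S.indicator fun x => ‖v x‖ * C, ?_, fun x t ht => ?_⟩
  · exact IntegrableOn.integrable_indicator ((hv.integrableOn_isCompact hS).norm.mul_const C)
      hS.measurableSet
  · by_cases hx : x ∈ S
    · rw [indicator_of_mem hx, norm_mul]
      gcongr
      exact hC _
    · simp [hψ_zero x hx t ht, hx]

variable {X E : Type*} [NormedAddCommGroup X] [NormedSpace ℝ X] [MeasurableSpace X] [BorelSpace X]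
  [FiniteDimensional ℝ X] [NormedAddCommGroup E] {μ : Measure X}

theorem hasDerivAt_integral_mul_comp_sub_smul {v φ : X → ℝ} (hv : LocallyIntegrable v μ)
    (hφ : ContDiff ℝ 1 φ) (hc : HasCompactSupport φ) (e : X) (t₀ : ℝ) :
    HasDerivAt (fun t : ℝ => ∫ x, v x * φ (x - t • e) ∂μ)
      (-∫ x, v x * fderiv ℝ φ (x - t₀ • e) e ∂μ) t₀ := by
  have hφ' := continuous_fderiv_apply_of_contDiff hφ e
  obtain ⟨b, hb, hvb⟩ := exists_integrable_bound_mul_comp_sub_smul hv hφ'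
    (hc.fderiv_apply (𝕜 := ℝ) e) e t₀
  have hint (t : ℝ) : Integrable (fun x => v x * φ (x - t • e)) μ := by
    simpa only [Function.comp_apply, smul_eq_mul, mul_comm] using
      hv.integrable_smul_left_of_hasCompactSupport
      (hφ.continuous.comp (continuous_sub_right (t • e)))
      (hc.comp_homeomorph (Homeomorph.subRight (t • e)))
  have hderiv (x : X) (t : ℝ) :
      HasDerivAt (fun t : ℝ => v x * φ (x - t • e)) (-(v x * fderiv ℝ φ (x - t • e) e)) t := by
    have hline : HasDerivAt (fun t : ℝ => x - t • e) (-e) t := by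
      simpa using ((hasDerivAt_id t).smul_const e).const_sub x
    simpa using ((hφ.differentiable one_ne_zero _).hasFDerivAt.comp_hasDerivAt t hline).const_mul
      (v x)
  rw [← integral_neg]
  refine (hasDerivAt_integral_of_dominated_loc_of_deriv_le (Metric.ball_mem_nhds t₀ one_pos)
    (Eventually.of_forall fun t => (hint t).aestronglyMeasurable) (hint t₀) ?_
    (ae_of_all _ fun x t ht => (norm_neg _).trans_le (hvb x t ht)) hb
    (ae_of_all _ fun x t _ => hderiv x t)).2
  exact (hv.aestronglyMeasurable.mul
    (hφ'.comp (continuous_sub_right (t₀ • e))).aestronglyMeasurable).neg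

variable [μ.IsAddHaarMeasure]

theorem lpNorm_two_le_of_abs_integral_mul_le {q : X → ℝ} (hq : MemLp q 2 μ) {ω : ℝ} (hω : 0 ≤ ω)
    (h : ∀ φ : X → ℝ, ContDiff ℝ 1 φ → HasCompactSupport φ →
      |∫ x, q x * φ x ∂μ| ≤ ω * lpNorm φ 2 μ) :
    lpNorm q 2 μ ≤ ω := by
  rw [← toReal_eLpNorm hq.1, ← Lp.norm_toLp q hq]
  refine norm_le_of_dense_of_abs_inner_le (Lp.dense_hasCompactSupport_contDiff (F := ℝ) (p := 2)
    (by norm_num)) hω ?_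
  rintro k ⟨φ, hk, hc, hφ⟩
  rw [Lp.norm_def, eLpNorm_congr_ae hk, toReal_eLpNorm hφ.continuous.aestronglyMeasurable,
    (L2_inner_eq_integral_of_ae_eq hq.coeFn_toLp hk).2]
  simpa [mul_comm] using h φ (hφ.of_le (by exact_mod_cast le_top)) hc

theorem tendsto_lpNorm_comp_add_right_sub {p : ℝ≥0∞} [Fact (1 ≤ p)] (hp : p ≠ ∞) {g : X → E}
    (hg : MemLp g p μ) :
    Tendsto (fun y => lpNorm (fun x => g (x + y) - g x) p μ) (𝓝 0) (𝓝 0) := by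
  let τ : X → C(X, X) := fun y => ⟨fun x => x + y, by fun_prop⟩
  have hτ : Continuous τ := ContinuousMap.continuous_of_continuous_uncurry _
    (by simpa only [Function.uncurry] using! continuous_snd.add continuous_fst)
  have hτ_mp (y : X) : MeasurePreserving (τ y) μ μ := measurePreserving_add_right μ y
  have htendsto := tendsto_iff_dist_tendsto_zero.1 <| Filter.Tendsto.compMeasurePreservingLp
    (tendsto_const_nhds (x := hg.toLp)) (hτ.tendsto 0) hτ_mp (hτ_mp 0) hp
  refine htendsto.congr fun y => ?_
  have hsub := (hg.comp_measurePreserving (hτ_mp y)).sub (hg.comp_measurePreserving (hτ_mp 0))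
  rw [Lp.toLp_compMeasurePreserving, Lp.toLp_compMeasurePreserving, dist_eq_norm,
    ← MemLp.toLp_sub, Lp.norm_toLp, toReal_eLpNorm hsub.1]
  congr 1 with x
  simp [τ]

/-- `γ` is the distributional derivative of `v` in direction `e`, tested with `C¹` functions
compactly supported in `S`. -/
def HasWeakDirDerivOn (μ : Measure X) (e : X) (v γ : X → ℝ) (S : Set X) : Prop :=
  ∀ φ : X → ℝ, ContDiff ℝ 1 φ → HasCompactSupport φ → tsupport φ ⊆ S →
    ∫ x, v x * fderiv ℝ φ x e ∂μ = -∫ x, γ x * φ x ∂μ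

section WeakDirDeriv

variable {v γ φ : X → ℝ} {e : X}

theorem HasWeakDirDerivOn.hasDerivAt_integral (hw : HasWeakDirDerivOn μ e v γ univ)
    (hv : MemLp v 2 μ)
    (hφ : ContDiff ℝ 1 φ) (hc : HasCompactSupport φ) (t : ℝ) :
    HasDerivAt (fun t : ℝ => ∫ x, v x * φ (x - t • e) ∂μ) (∫ x, γ (x + t • e) * φ x ∂μ) t := by
  convert hasDerivAt_integral_mul_comp_sub_smul (hv.locallyIntegrable one_le_two) hφ hc e t using 1
  have hshift := hw (fun x => φ (x - t • e)) (hφ.comp (contDiff_id.sub contDiff_const))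
    (hc.comp_homeomorph (Homeomorph.subRight (t • e))) (subset_univ _)
  simp only [fderiv_comp_sub] at hshift
  rw [hshift, neg_neg, integral_comp_add_right_mul]

/- The mean value inequality for `s ↦ ∫ v(x) φ(x - s e) dx - s ∫ γ φ` on `[0, t]`. -/
theorem HasWeakDirDerivOn.abs_integral_diffQuot_sub_mul_le (hw : HasWeakDirDerivOn μ e v γ univ)
    (hv : MemLp v 2 μ) (hγ : MemLp γ 2 μ) (hφ : ContDiff ℝ 1 φ) (hc : HasCompactSupport φ)
    {t ω : ℝ} (ht : 0 < t)
    (hω : ∀ s ∈ Icc 0 t, lpNorm (fun x => γ (x + s • e) - γ x) 2 μ ≤ ω) :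
    |∫ x, (diffQuot t e v x - γ x) * φ x ∂μ| ≤ ω * lpNorm φ 2 μ := by
  have hφ2 : MemLp φ 2 μ := hφ.continuous.memLp_of_hasCompactSupport hc
  let m : ℝ → ℝ := fun s => (∫ x, v x * φ (x - s • e) ∂μ) - s * ∫ x, γ x * φ x ∂μ
  have hm (s : ℝ) : HasDerivAt m (∫ x, (γ (x + s • e) - γ x) * φ x ∂μ) s := by
    rw [integral_sub_mul_eq_sub (memLp_comp_add_right hγ _) hγ hφ2]
    simpa using! (hw.hasDerivAt_integral hv hφ hc s).sub ((hasDerivAt_id s).mul_const _)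
  have hm' : ∀ s ∈ Icc 0 t, ‖∫ x, (γ (x + s • e) - γ x) * φ x ∂μ‖ ≤ ω * lpNorm φ 2 μ :=
    fun s hs => (abs_integral_mul_le_lpNorm_mul_lpNorm ((memLp_comp_add_right hγ _).sub hγ)
      hφ2).trans (mul_le_mul_of_nonneg_right (hω s hs) lpNorm_nonneg)
  have hmean := (convex_Icc 0 t).norm_image_sub_le_of_norm_hasDerivWithin_le
    (fun s _ => (hm s).hasDerivWithinAt) hm' (left_mem_Icc.2 ht.le) (right_mem_Icc.2 ht.le)
  have heq : ∫ x, (diffQuot t e v x - γ x) * φ x ∂μ = t⁻¹ * (m t - m 0) := by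
    rw [integral_sub_mul_eq_sub (memLp_diffQuot hv t e) hγ hφ2, integral_diffQuot_mul hv hφ2]
    simp only [m, zero_smul, sub_zero, zero_mul]
    field_simp
    ring
  rw [sub_zero, Real.norm_eq_abs, Real.norm_eq_abs, abs_of_pos ht] at hmean
  rwa [heq, abs_mul, abs_of_pos (inv_pos.2 ht), inv_mul_le_iff₀ ht, mul_comm t]

theorem HasWeakDirDerivOn.tendsto_lpNorm_diffQuot_sub (hw : HasWeakDirDerivOn μ e v γ univ)
    (hv : MemLp v 2 μ) (hγ : MemLp γ 2 μ) :
    Tendsto (fun t : ℝ => lpNorm (fun x => diffQuot t e v x - γ x) 2 μ) (𝓝[>] 0) (𝓝 0) := by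
  have hcont : Tendsto (fun s : ℝ => lpNorm (fun x => γ (x + s • e) - γ x) 2 μ) (𝓝 0) (𝓝 0) :=
    (tendsto_lpNorm_comp_add_right_sub (by norm_num) hγ).comp
      ((continuous_id.smul continuous_const).tendsto' 0 0 (zero_smul ℝ e))
  refine tendsto_order.2 ⟨fun c hc => Eventually.of_forall fun t => hc.trans_le lpNorm_nonneg,
    fun c hc => ?_⟩
  obtain ⟨δ, hδ, hball⟩ := Metric.eventually_nhds_iff.1 (hcont.eventually_lt_const (half_pos hc))
  filter_upwards [Ioo_mem_nhdsGT hδ] with t ht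
  refine (lpNorm_two_le_of_abs_integral_mul_le ((memLp_diffQuot hv t e).sub hγ) (half_pos hc).le
    fun φ hφ hφc => ?_).trans_lt (half_lt_self hc)
  refine hw.abs_integral_diffQuot_sub_mul_le hv hγ hφ hφc ht.1 fun s hs => (hball ?_).le
  rw [Real.dist_eq, sub_zero, abs_of_nonneg hs.1]
  exact hs.2.trans_lt ht.2

end WeakDirDeriv

section Column

variable {n : ℕ} {ι : Type*}

/-- The `s`-th column of a Jacobian, i.e. the partial derivatives in direction `stdVec s`. -/
noncomputable def col (s : Fin n) (m : Jac ι n) : EuclideanSpace ℝ ι :=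
  WithLp.toLp 2 fun a => m (a, s)

theorem continuous_col (s : Fin n) : Continuous (col s : Jac ι n → EuclideanSpace ℝ ι) :=
  (PiLp.continuous_toLp 2 _).comp (continuous_pi fun a => by fun_prop)

variable [Fintype ι]

theorem norm_col_le (s : Fin n) (m : Jac ι n) : ‖col s m‖ ≤ ‖m‖ := by
  rw [EuclideanSpace.norm_eq, EuclideanSpace.norm_eq, Fintype.sum_prod_type]
  exact Real.sqrt_le_sqrt <| Finset.sum_le_sum fun a _ =>
    Finset.single_le_sum (f := fun i => ‖m (a, i)‖ ^ 2) (fun i _ => by positivity)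
      (Finset.mem_univ s)

theorem memLp_col {g : EVec n → Jac ι n} {p : ℝ≥0∞} (hg : MemLp g p) (s : Fin n) :
    MemLp (fun x => col s (g x)) p :=
  hg.of_le ((continuous_col s).comp_aestronglyMeasurable hg.1)
    (ae_of_all _ fun x => norm_col_le s (g x))

theorem MemH1.tendsto_integral_sq_norm_diffQuot_sub_col {v : EVec n → EuclideanSpace ℝ ι}
    {g : EVec n → Jac ι n} (hv : MemH1 v g) (s : Fin n) :
    Tendsto (fun t : ℝ => ∫ x, ‖diffQuot t (stdVec s) v x - col s (g x)‖ ^ 2) (𝓝[>] 0) (𝓝 0) := by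
  let w (a : ι) (x : EVec n) : ℝ := v x a
  have hw (a : ι) : MemLp (w a) 2 := (EuclideanSpace.proj (𝕜 := ℝ) a).comp_memLp' hv.memLp
  have hgc (a : ι) : MemLp (fun x => g x (a, s)) 2 :=
    (EuclideanSpace.proj (𝕜 := ℝ) (a, s)).comp_memLp' hv.memLp_grad
  have hcoord (a : ι) : Tendsto
      (fun t : ℝ => lpNorm (fun x => diffQuot t (stdVec s) (w a) x - g x (a, s)) 2 volume ^ 2)
      (𝓝[>] 0) (𝓝 0) := by
    have hweak : HasWeakDirDerivOn volume (stdVec s) (w a) (fun x => g x (a, s)) univ :=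
      fun φ hφ hc hφs => hv.hasWeakGradOn φ hφ hc hφs a s
    simpa using (hweak.tendsto_lpNorm_diffQuot_sub (hw a) (hgc a)).pow 2
  have hsum := tendsto_finsetSum Finset.univ fun a _ => hcoord a
  rw [Finset.sum_const_zero] at hsum
  refine hsum.congr fun t => ?_
  have hmem (a : ι) : MemLp (fun x => diffQuot t (stdVec s) (w a) x - g x (a, s)) 2 :=
    (memLp_diffQuot (hw a) t _).sub (hgc a)
  calc ∑ a, lpNorm (fun x => diffQuot t (stdVec s) (w a) x - g x (a, s)) 2 volume ^ 2
      = ∑ a, ∫ x, (diffQuot t (stdVec s) (w a) x - g x (a, s)) ^ 2 :=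
        Finset.sum_congr rfl fun a _ => lpNorm_two_sq_eq_integral_sq (hmem a)
    _ = ∫ x, ∑ a, (diffQuot t (stdVec s) (w a) x - g x (a, s)) ^ 2 :=
        (integral_finsetSum _ fun a _ => (hmem a).integrable_sq).symm
    _ = ∫ x, ‖diffQuot t (stdVec s) v x - col s (g x)‖ ^ 2 := by
        simp [EuclideanSpace.norm_sq_eq, diffQuot, col, w]

end Column

end DifferenceQuotient

/-! ### Mollification -/

section Mollification

theorem norm_convolution_sub_le {X E : Type*} [AddGroup X] [MeasurableSpace X] {μ : Measure X}
    [NormedAddCommGroup E] [NormedSpace ℝ E] [CompleteSpace E] {ρ : X → ℝ} {G : X → E}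
    (hρ : Integrable ρ μ) (hρ0 : 0 ≤ ρ) (hρ1 : ∫ t, ρ t ∂μ = 1) (x : X)
    (hG : Integrable (fun t => ρ t • G (x - t)) μ) :
    ‖(∫ t, ρ t • G (x - t) ∂μ) - G x‖ ≤ ∫ t, ρ t * ‖G (x - t) - G x‖ ∂μ := by
  have hGx : G x = ∫ t, ρ t • G x ∂μ := by rw [integral_smul_const, hρ1, one_smul]
  calc ‖(∫ t, ρ t • G (x - t) ∂μ) - G x‖ = ‖∫ t, ρ t • (G (x - t) - G x) ∂μ‖ := by
        simp only [smul_sub]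
        rw [integral_sub hG (hρ.smul_const _), ← hGx]
    _ ≤ ∫ t, ρ t * ‖G (x - t) - G x‖ ∂μ := (norm_integral_le_integral_norm _).trans_eq <| by
        simp only [norm_smul, Real.norm_eq_abs, abs_of_nonneg (hρ0 _)]

section Group

variable {X : Type*} [NormedAddCommGroup X] [MeasurableSpace X] [BorelSpace X]
  [SecondCountableTopology X] {μ : Measure X} [SFinite μ] [μ.IsAddLeftInvariant]

theorem integral_convolution_mul {ρ V ψ : X → ℝ} (hρ : Integrable ρ μ) (hV : Integrable V μ)
    (hψ : Continuous ψ) (hc : HasCompactSupport ψ) :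
    ∫ x, (∫ t, ρ t * V (x - t) ∂μ) * ψ x ∂μ = ∫ t, ρ t * ∫ x, V (x - t) * ψ x ∂μ ∂μ := by
  obtain ⟨C, hC⟩ := hψ.bounded_above_of_compact_support hc
  have hint : Integrable (fun p : X × X => ρ p.2 * V (p.1 - p.2) * ψ p.1) (μ.prod μ) :=
    Integrable.mul_bdd (c := C) (hρ.convolution_integrand (ContinuousLinearMap.mul ℝ ℝ) hV)
      (hψ.comp continuous_fst).aestronglyMeasurable (ae_of_all _ fun p => hC p.1)
  simp only [← integral_mul_const, ← integral_const_mul, ← mul_assoc]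
  exact integral_integral_swap hint

variable {E : Type*} [NormedAddCommGroup E] [NormedSpace ℝ E] {ρ : X → ℝ} {G : X → E} {δ : ℝ}

theorem integrable_prod_mul_norm_comp_sub_sub (hρ : Integrable ρ μ) (hρ0 : 0 ≤ ρ)
    (hG : Integrable G μ) :
    Integrable (fun p : X × X => ρ p.2 * ‖G (p.1 - p.2) - G p.1‖) (μ.prod μ) := by
  refine ((hρ.convolution_integrand (ContinuousLinearMap.lsmul ℝ ℝ) hG).sub
    (hρ.smul_prod hG).swap).norm.congr (ae_of_all _ fun p => ?_)
  simp [← smul_sub, norm_smul, abs_of_nonneg (hρ0 p.2)]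

theorem integral_norm_convolution_sub_le [CompleteSpace E] (hρ : Integrable ρ μ) (hρ0 : 0 ≤ ρ)
    (hρ1 : ∫ t, ρ t ∂μ = 1) (hG : Integrable G μ)
    (hGρ : ∀ x, Integrable (fun t => ρ t • G (x - t)) μ)
    (hδ : ∀ t, ρ t ≠ 0 → ∫ x, ‖G (x - t) - G x‖ ∂μ ≤ δ) :
    ∫ x, ‖(∫ t, ρ t • G (x - t) ∂μ) - G x‖ ∂μ ≤ δ := by
  have hprod := integrable_prod_mul_norm_comp_sub_sub hρ hρ0 hG
  calc ∫ x, ‖(∫ t, ρ t • G (x - t) ∂μ) - G x‖ ∂μ ≤ ∫ x, ∫ t, ρ t * ‖G (x - t) - G x‖ ∂μ ∂μ :=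
        integral_mono_of_nonneg (ae_of_all _ fun x => norm_nonneg _) hprod.integral_prod_left
          (ae_of_all _ fun x => norm_convolution_sub_le hρ hρ0 hρ1 x (hGρ x))
    _ = ∫ t, ∫ x, ρ t * ‖G (x - t) - G x‖ ∂μ ∂μ :=
        integral_integral_swap (f := fun x t => ρ t * ‖G (x - t) - G x‖) hprod
    _ ≤ ∫ t, ρ t * δ ∂μ := by
        refine integral_mono hprod.integral_prod_right (hρ.mul_const δ) fun t => ?_
        simp only [integral_const_mul]
        by_cases ht : ρ t = 0
        · simp [ht]
        · exact mul_le_mul_of_nonneg_left (hδ t ht) (hρ0 t)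
    _ = δ := by rw [integral_mul_const, hρ1, one_mul]

end Group

theorem convolution_coord {X κ : Type*} [NormedAddCommGroup X] [MeasurableSpace X] [BorelSpace X]
    {μ : Measure X} [μ.IsAddLeftInvariant] [μ.IsNegInvariant] [Fintype κ]
    {W : X → EuclideanSpace ℝ κ} (hW : Integrable W μ) {ρ : X → ℝ} (hρ : Continuous ρ)
    (hρc : HasCompactSupport ρ) (k : κ) (x : X) :
    (∫ t, ρ t • W (x - t) ∂μ) k = ∫ t, ρ t * W (x - t) k ∂μ := by
  have hint : Integrable (fun t => ρ t • W (x - t)) μ :=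
    (hW.comp_sub_left x).locallyIntegrable.integrable_smul_left_of_hasCompactSupport hρ hρc
  simpa using ((EuclideanSpace.proj (𝕜 := ℝ) k).integral_comp_comm hint).symm

theorem continuous_convolution_and_hasCompactSupport {X E : Type*} [NormedAddCommGroup X]
    [MeasurableSpace X] [BorelSpace X] {μ : Measure X} [μ.IsAddLeftInvariant]
    [μ.IsNegInvariant] [NormedAddCommGroup E] [NormedSpace ℝ E] {W : X → E}
    (hW : LocallyIntegrable W μ) (hWc : HasCompactSupport W) {ρ : X → ℝ} (hρ : Continuous ρ)
    (hρc : HasCompactSupport ρ) :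
    Continuous (fun x => ∫ t, ρ t • W (x - t) ∂μ) ∧
      HasCompactSupport fun x => ∫ t, ρ t • W (x - t) ∂μ :=
  ⟨hρc.continuous_convolution_left (ContinuousLinearMap.lsmul ℝ ℝ) hρ hW,
    hρc.convolution (ContinuousLinearMap.lsmul ℝ ℝ) hWc⟩

variable {n : ℕ} {ι : Type*} [Fintype ι] {U : EVec n → EuclideanSpace ℝ ι} {G : EVec n → Jac ι n}

theorem HasWeakGradOn.convolution (hw : HasWeakGradOn univ U G) (hU : Integrable U)
    (hG : Integrable G) {ρ : EVec n → ℝ} (hρ : Continuous ρ) (hρc : HasCompactSupport ρ) :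
    HasWeakGradOn univ (fun x => ∫ t, ρ t • U (x - t)) (fun x => ∫ t, ρ t • G (x - t)) := by
  intro φ hφ hc _ a i
  have hρi : Integrable ρ := hρ.integrable_of_hasCompactSupport hρc
  simp only [convolution_coord hU hρ hρc, convolution_coord hG hρ hρc]
  have hUa : Integrable fun x => U x a := (EuclideanSpace.proj (𝕜 := ℝ) a).integrable_comp hU
  have hGa : Integrable fun x => G x (a, i) :=
    (EuclideanSpace.proj (𝕜 := ℝ) (a, i)).integrable_comp hG
  rw [integral_convolution_mul hρi hUa (continuous_fderiv_apply_of_contDiff hφ _)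
      (hc.fderiv_apply (𝕜 := ℝ) _),
    integral_convolution_mul hρi hGa hφ.continuous hc, ← integral_neg]
  congr 1 with t
  have hshift := (hw.comp_add_right (-t)) φ hφ hc (subset_univ _) a i
  simp only [← sub_eq_add_neg] at hshift
  simp [hshift]

theorem exists_mollifier_integral_norm_comp_sub_sub_le {E : Type*} [NormedAddCommGroup E]
    {G : EVec n → E} (hG : Integrable G) {δ : ℝ} (hδ : 0 < δ) :
    ∃ ρ : EVec n → ℝ, Continuous ρ ∧ HasCompactSupport ρ ∧ 0 ≤ ρ ∧ ∫ t, ρ t = 1 ∧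
      ∀ t, ρ t ≠ 0 → ∫ x, ‖G (x - t) - G x‖ ≤ δ := by
  have : Fact ((1 : ℝ≥0∞) ≤ 1) := ⟨le_rfl⟩
  have hcont := tendsto_lpNorm_comp_add_right_sub ENNReal.one_ne_top
    (memLp_one_iff_integrable.2 hG)
  obtain ⟨r, hr, hball⟩ := Metric.eventually_nhds_iff.1 (hcont.eventually_lt_const hδ)
  let b : ContDiffBump (0 : EVec n) := ⟨r / 4, r / 2, by positivity, by linarith⟩
  refine ⟨b.normed volume, b.continuous_normed, b.hasCompactSupport_normed, b.nonneg_normed,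
    b.integral_normed, fun t ht => ?_⟩
  have htr : t ∈ Metric.closedBall (0 : EVec n) (r / 2) :=
    b.tsupport_normed_eq (μ := volume) ▸ subset_tsupport _ ht
  rw [mem_closedBall_zero_iff] at htr
  have hlt := hball (y := -t) (by simpa using htr.trans_lt (half_lt_self hr))
  rw [lpNorm_one_eq_integral_norm (by exact ((hG.comp_add_right (-t)).sub hG).1)] at hlt
  simpa only [← sub_eq_add_neg] using hlt.le

theorem HasWeakGradOn.exists_memH1_integral_norm_sub_le (hw : HasWeakGradOn univ U G)
    (hU : Integrable U) (hG : Integrable G) (hUc : HasCompactSupport U) (hGc : HasCompactSupport G)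
    {δ : ℝ} (hδ : 0 < δ) :
    ∃ (U' : EVec n → EuclideanSpace ℝ ι) (G' : EVec n → Jac ι n),
      MemH1 U' G' ∧ Integrable G' ∧ ∫ x, ‖G' x - G x‖ ≤ δ := by
  obtain ⟨ρ, hρ, hρc, hρ0, hρ1, hclose⟩ := exists_mollifier_integral_norm_comp_sub_sub_le hG hδ
  obtain ⟨hU', hUc'⟩ :=
    continuous_convolution_and_hasCompactSupport hU.locallyIntegrable hUc hρ hρc
  obtain ⟨hG', hGc'⟩ :=
    continuous_convolution_and_hasCompactSupport hG.locallyIntegrable hGc hρ hρc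
  refine ⟨_, _, ⟨hU'.memLp_of_hasCompactSupport hUc', hG'.memLp_of_hasCompactSupport hGc',
    hw.convolution hU hG hρ hρc⟩, hG'.integrable_of_hasCompactSupport hGc', ?_⟩
  exact integral_norm_convolution_sub_le (hρ.integrable_of_hasCompactSupport hρc) hρ0 hρ1 hG
    (fun x => (hG.comp_sub_left x).locallyIntegrable.integrable_smul_left_of_hasCompactSupport
      hρ hρc) hclose

end Mollification

/-! ### Approximation by regularised solutions -/

section Approximation

theorem half_sq_norm_sub_half_sq_norm_le_inner {E : Type*} [NormedAddCommGroup E]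
    [InnerProductSpace ℝ E] (a b : E) : ‖a‖ ^ 2 / 2 - ‖b‖ ^ 2 / 2 ≤ ⟪a, a - b⟫ := by
  rw [inner_sub_right, real_inner_self_eq_norm_sq]
  linarith [real_inner_le_norm a b, two_mul_le_add_sq ‖a‖ ‖b‖]

section Measure

variable {α V E : Type*} [MeasurableSpace α] {μ : Measure α} [NormedAddCommGroup E]
  [InnerProductSpace ℝ E] [NormedAddCommGroup V] [InnerProductSpace ℝ V]

theorem integrable_inner_of_memLp_two {a b : α → E} (ha : MemLp a 2 μ) (hb : MemLp b 2 μ) :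
    Integrable (fun x => ⟪a x, b x⟫) μ :=
  (show Integrable (fun x => ‖a x‖ * ‖b x‖) μ from ha.norm.integrable_mul hb.norm).mono'
    (ha.1.inner hb.1) (ae_of_all _ fun _ => norm_inner_le_norm _ _)

theorem integrable_sq_norm_of_memLp_two {F : Type*} [NormedAddCommGroup F] {a : α → F}
    (ha : MemLp a 2 μ) : Integrable (fun x => ‖a x‖ ^ 2) μ :=
  (memLp_two_iff_integrable_sq_norm ha.1).1 ha

theorem integral_le_integral_of_ae_le_add {a b e : α → ℝ} (ha : Integrable a μ)
    (hb : Integrable b μ) (he : Integrable e μ) (he0 : ∫ x, e x ∂μ = 0)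
    (hab : ∀ᵐ x ∂μ, a x ≤ e x + b x) : ∫ x, a x ∂μ ≤ ∫ x, b x ∂μ :=
  (integral_mono_ae ha (he.add hb) hab).trans_eq <| by
    rw [integral_add' he hb, he0, zero_add]

namespace IsLinearGrowthIntegrand

variable {f f' : ℝ → ℝ} {L ε θ θ' C : ℝ}

theorem memLp_two_radialGrad (h : IsLinearGrowthIntegrand f f' L) {a : α → E} (ha : MemLp a 2 μ) :
    MemLp (fun x => radialGrad f' (a x)) 2 μ :=
  h.lipschitzWith_radialGrad.comp_memLp (radialGrad_zero f') ha

theorem coercive_le_inner_add (h : IsLinearGrowthIntegrand f f' L) (hε : 0 ≤ ε) (hθ : 0 ≤ θ)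
    (hC : ∀ t, 0 ≤ t → θ' * t - C ≤ f t) {g G T : E} (hT : ‖T‖ ≤ θ) (v U : V) :
    (θ' - θ) * ‖g‖ + ε / 2 * ‖g‖ ^ 2 ≤
      ⟪radialGrad f' g + ε • g - T, g - G⟫ + ε * ⟪v, v - U⟫ +
        (C + (L + θ) * ‖G‖ + ε / 2 * (‖U‖ ^ 2 + ‖G‖ ^ 2)) := by
  have htangent := h.radialGrad_tangent_le g G
  have hcoercive := hC ‖g‖ (norm_nonneg g)
  have hgrowth := h.map_norm_sub_le (0 : E) G
  have hTinner : ⟪T, g - G⟫ ≤ θ * (‖g‖ + ‖G‖) :=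
    (real_inner_le_norm _ _).trans (mul_le_mul hT (norm_sub_le _ _) (norm_nonneg _) hθ)
  have hg := mul_le_mul_of_nonneg_left (half_sq_norm_sub_half_sq_norm_le_inner g G) hε
  have hv := mul_le_mul_of_nonneg_left (half_sq_norm_sub_half_sq_norm_le_inner v U) hε
  have hv0 : 0 ≤ ε * ‖v‖ ^ 2 := by positivity
  rw [norm_zero, h.map_zero, sub_zero, sub_zero] at hgrowth
  rw [← neg_sub g G, inner_neg_right] at htangent
  simp only [inner_add_left, inner_sub_left, real_inner_smul_left]
  linarith

theorem sq_norm_radialGrad_sub_le_inner_add (h : IsLinearGrowthIntegrand f f' L) (hε : 0 ≤ ε)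
    (g G G₀ T : E) (v U : V) :
    ‖radialGrad f' g - radialGrad f' G₀‖ ^ 2 / (12 * L) ≤
      (⟪radialGrad f' g + ε • g - T, g - G⟫ + ε * ⟪v, v - U⟫ - ⟪radialGrad f' G₀ - T, g - G⟫) +
        (2 * L * ‖G - G₀‖ + ε / 2 * (‖U‖ ^ 2 + ‖G‖ ^ 2)) := by
  have hL := h.pos
  set D := radialGrad f' g - radialGrad f' G₀ with hD
  have hcoco : ‖D‖ ^ 2 / (12 * L) ≤ ⟪D, g - G₀⟫ := by
    refine le_trans ?_ (h.radialGrad_cocoercive G₀ g)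
    gcongr
    exact le_mul_of_one_le_left (sq_nonneg _) (by linarith [norm_nonneg G₀])
  have hD_le : ‖D‖ ≤ 2 * L := (norm_sub_le _ _).trans
    (by linarith [h.norm_radialGrad_le g, h.norm_radialGrad_le G₀])
  have hDG : ⟪D, G - G₀⟫ ≤ 2 * L * ‖G - G₀‖ := (real_inner_le_norm _ _).trans (by gcongr)
  have hg := mul_le_mul_of_nonneg_left (half_sq_norm_sub_half_sq_norm_le_inner g G) hε
  have hv := mul_le_mul_of_nonneg_left (half_sq_norm_sub_half_sq_norm_le_inner v U) hε
  have hv0 : 0 ≤ ε * ‖v‖ ^ 2 := by positivity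
  have hg0 : 0 ≤ ε * ‖g‖ ^ 2 := by positivity
  have hsplit : ⟪radialGrad f' g + ε • g - T, g - G⟫ - ⟪radialGrad f' G₀ - T, g - G⟫ =
      ⟪D, g - G₀⟫ - ⟪D, G - G₀⟫ + ε * ⟪g, g - G⟫ := by
    simp only [hD, inner_add_left, inner_sub_left, real_inner_smul_left, inner_sub_right]
    ring
  linarith

variable [IsFiniteMeasure μ] {v U : α → V} {g G G₀ T : α → E}

theorem integral_norm_le_of_integral_eq_zero (h : IsLinearGrowthIntegrand f f' L) (hε : 0 ≤ ε)
    (hθ : 0 ≤ θ) (hC : ∀ t, 0 ≤ t → θ' * t - C ≤ f t) (hv : MemLp v 2 μ) (hg : MemLp g 2 μ)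
    (hU : MemLp U 2 μ) (hG : MemLp G 2 μ) (hT : MemLp T 2 μ) (hTθ : ∀ᵐ x ∂μ, ‖T x‖ ≤ θ)
    (heq : ∫ x, (⟪radialGrad f' (g x) + ε • g x - T x, g x - G x⟫ +
      ε * ⟪v x, v x - U x⟫) ∂μ = 0) :
    (θ' - θ) * (∫ x, ‖g x‖ ∂μ) + ε / 2 * ∫ x, ‖g x‖ ^ 2 ∂μ ≤
      C * μ.real univ + (L + θ) * (∫ x, ‖G x‖ ∂μ) +
        ε / 2 * ((∫ x, ‖U x‖ ^ 2 ∂μ) + ∫ x, ‖G x‖ ^ 2 ∂μ) := by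
  have hg1 := ((hg.integrable one_le_two).norm.const_mul (θ' - θ))
  have hg2 := (integrable_sq_norm_of_memLp_two hg).const_mul (ε / 2)
  have hG1 := ((hG.integrable one_le_two).norm.const_mul (L + θ))
  have hUG := (integrable_sq_norm_of_memLp_two hU).add (integrable_sq_norm_of_memLp_two hG)
  have he := (integrable_inner_of_memLp_two
    (((h.memLp_two_radialGrad hg).add (hg.const_smul ε)).sub hT) (hg.sub hG)).add
    ((integrable_inner_of_memLp_two hv (hv.sub hU)).const_mul ε)
  have hmono := integral_le_integral_of_ae_le_add (hg1.add hg2)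
    (((integrable_const C).add hG1).add (hUG.const_mul (ε / 2))) he heq
    (hTθ.mono fun x hx => h.coercive_le_inner_add hε hθ hC hx (v x) (U x))
  rw [integral_add' hg1 hg2, integral_add' ((integrable_const C).add hG1) (hUG.const_mul (ε / 2)),
    integral_add' (integrable_const C) hG1, integral_const_mul, integral_const_mul,
    integral_const_mul, integral_const_mul, integral_add'
    (integrable_sq_norm_of_memLp_two hU) (integrable_sq_norm_of_memLp_two hG)] at hmono
  simpa [mul_comm] using hmono

theorem integral_sq_norm_radialGrad_sub_le_of_integral_eq_zero (h : IsLinearGrowthIntegrand f f' L)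
    (hε : 0 ≤ ε) (hv : MemLp v 2 μ) (hg : MemLp g 2 μ) (hU : MemLp U 2 μ) (hG : MemLp G 2 μ)
    (hG₀ : Integrable G₀ μ) (hT : MemLp T 2 μ)
    (heq : ∫ x, (⟪radialGrad f' (g x) + ε • g x - T x, g x - G x⟫ +
      ε * ⟪v x, v x - U x⟫) ∂μ = 0)
    (heq₀ : ∫ x, ⟪radialGrad f' (G₀ x) - T x, g x - G x⟫ ∂μ = 0) :
    ∫ x, ‖radialGrad f' (g x) - radialGrad f' (G₀ x)‖ ^ 2 ∂μ ≤
      12 * L * (2 * L * (∫ x, ‖G x - G₀ x‖ ∂μ) +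
        ε / 2 * ((∫ x, ‖U x‖ ^ 2 ∂μ) + ∫ x, ‖G x‖ ^ 2 ∂μ)) := by
  have hL := h.pos
  have hA₀ : MemLp (fun x => radialGrad f' (G₀ x)) 2 μ :=
    .of_bound (h.aestronglyMeasurable_radialGrad hG₀.1) L
      (ae_of_all _ fun x => h.norm_radialGrad_le _)
  have hA := integrable_sq_norm_of_memLp_two ((h.memLp_two_radialGrad hg).sub hA₀)
  have hGG := (((hG.integrable one_le_two).sub hG₀).norm.const_mul (2 * L))
  have hUG := (integrable_sq_norm_of_memLp_two hU).add (integrable_sq_norm_of_memLp_two hG)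
  have he := (integrable_inner_of_memLp_two
    (((h.memLp_two_radialGrad hg).add (hg.const_smul ε)).sub hT) (hg.sub hG)).add
    ((integrable_inner_of_memLp_two hv (hv.sub hU)).const_mul ε)
  have he₀ := integrable_inner_of_memLp_two (hA₀.sub hT) (hg.sub hG)
  have hmono := integral_le_integral_of_ae_le_add (hA.div_const (12 * L))
    (hGG.add (hUG.const_mul (ε / 2))) (he.sub he₀)
    ((integral_sub' he he₀).trans (by exact (congrArg₂ (· - ·) heq heq₀).trans (sub_zero 0)))
    (ae_of_all _ fun x => h.sq_norm_radialGrad_sub_le_inner_add hε (g x) (G x) (G₀ x) (T x) (v x)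
      (U x))
  rw [integral_add' hGG (hUG.const_mul (ε / 2)), integral_div, integral_const_mul,
    integral_const_mul, integral_add' (integrable_sq_norm_of_memLp_two hU)
    (integrable_sq_norm_of_memLp_two hG), div_le_iff₀' (by positivity)] at hmono
  exact hmono

end IsLinearGrowthIntegrand

end Measure

variable {n : ℕ} {ι : Type*} [Fintype ι] {K : Set (EVec n)} {f f' : ℝ → ℝ} {L ε : ℝ}
  {v U : EVec n → EuclideanSpace ℝ ι} {g G G₀ T : EVec n → Jac ι n}

theorem MemH1.memH1Supp_sub (hv : MemH1 v g) (hU : MemH1 U G)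
    (heq : ∀ᵐ x, x ∉ K → v x = U x ∧ g x = G x) : MemH1Supp K (v - U) (g - G) where
  toMemH1 := by simpa [sub_eq_add_neg] using hv.add (hU.const_smul (-1))
  ae_eq_zero := by
    filter_upwards [heq] with x hx hxK
    simp [hx hxK]

theorem IsRegularisedSolution.setIntegral_eq_zero (hsol : IsRegularisedSolution f' ε T K v g)
    {ψ : EVec n → EuclideanSpace ℝ ι} {Dψ : EVec n → Jac ι n} (hψ : MemH1Supp K ψ Dψ) :
    ∫ x in K, (⟪radialGrad f' (g x) + ε • g x - T x, Dψ x⟫ + ε * ⟪v x, ψ x⟫) = 0 := by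
  rw [setIntegral_eq_integral_of_ae_compl_eq_zero, hsol ψ Dψ hψ]
  filter_upwards [hψ.ae_eq_zero] with x hx hxK
  simp [hx hxK]

theorem exists_pos_le_one_mul_le {δ S : ℝ} (hδ : 0 < δ) (hδ1 : δ ≤ 1) (hS : 0 ≤ S) :
    ∃ ε, 0 < ε ∧ ε ≤ 1 ∧ ε * S ≤ δ := by
  refine ⟨δ / (1 + S), by positivity, ?_, ?_⟩
  · rw [div_le_one (by positivity)]
    linarith
  · rw [div_mul_eq_mul_div, div_le_iff₀ (by positivity)]
    nlinarith

theorem integral_norm_le_integral_norm_add_of_integral_norm_sub_le {α E : Type*}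
    [MeasurableSpace α] {μ : Measure α} [NormedAddCommGroup E] {G G₀ : α → E} {δ : ℝ}
    (hG : Integrable G μ) (hG₀ : Integrable G₀ μ) (hδ : ∫ x, ‖G x - G₀ x‖ ∂μ ≤ δ) :
    ∫ x, ‖G x‖ ∂μ ≤ (∫ x, ‖G₀ x‖ ∂μ) + δ := by
  have hsub : Integrable (fun x => ‖G x - G₀ x‖) μ := (hG.sub hG₀).norm
  calc ∫ x, ‖G x‖ ∂μ ≤ ∫ x, (‖G₀ x‖ + ‖G x - G₀ x‖) ∂μ :=
        integral_mono hG.norm (hG₀.norm.add hsub) fun x => norm_le_norm_add_norm_sub' _ _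
    _ ≤ (∫ x, ‖G₀ x‖ ∂μ) + δ := by
        rw [integral_add hG₀.norm hsub]
        gcongr

theorem setIntegral_sq_norm_add_le {α E F : Type*} [MeasurableSpace α] {μ : Measure α}
    [NormedAddCommGroup E] [NormedAddCommGroup F] {U : α → E} {G : α → F} (hU : MemLp U 2 μ)
    (hG : MemLp G 2 μ) (s : Set α) :
    (∫ x in s, ‖U x‖ ^ 2 ∂μ) + ∫ x in s, ‖G x‖ ^ 2 ∂μ ≤
      (∫ x, ‖U x‖ ^ 2 ∂μ) + ∫ x, ‖G x‖ ^ 2 ∂μ :=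
  add_le_add
    (setIntegral_le_integral (integrable_sq_norm_of_memLp_two hU)
      (ae_of_all _ fun _ => sq_nonneg _))
    (setIntegral_le_integral (integrable_sq_norm_of_memLp_two hG)
      (ae_of_all _ fun _ => sq_nonneg _))

section BoundaryData

variable {δ θ θ' C : ℝ}

theorem IsRegularisedSolution.energy_le (hsol : IsRegularisedSolution f' ε T K v g)
    (h : IsLinearGrowthIntegrand f f' L) (hK : IsCompact K) (hε : 0 < ε) (hv : MemH1 v g)
    (hU : MemH1 U G) (hbdry : ∀ᵐ x, x ∉ K → v x = U x ∧ g x = G x) (hG : Integrable G)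
    (hδ : δ ≤ 1) (hεU : ε * ((∫ x, ‖U x‖ ^ 2) + ∫ x, ‖G x‖ ^ 2) ≤ δ) (hT : MemLp T 2)
    (hθ : 0 ≤ θ) (hTθ : ∀ᵐ x ∂volume.restrict K, ‖T x‖ ≤ θ)
    (hC : ∀ t, 0 ≤ t → θ' * t - C ≤ f t) :
    (θ' - θ) * (∫ x in K, ‖g x‖) + ε / 2 * ∫ x in K, ‖g x‖ ^ 2 ≤
      C * (volume.restrict K).real univ + (L + θ) * (∫ x, ‖G x‖) + 1 := by
  have hL := h.pos
  have : IsFiniteMeasure (volume.restrict K) := ⟨by simpa using hK.measure_lt_top⟩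
  refine (h.integral_norm_le_of_integral_eq_zero hε.le hθ hC (hv.memLp.restrict K)
    (hv.memLp_grad.restrict K) (hU.memLp.restrict K) (hU.memLp_grad.restrict K) (hT.restrict K)
    hTθ (hsol.setIntegral_eq_zero (hv.memH1Supp_sub hU hbdry))).trans ?_
  have hGK : ∫ x in K, ‖G x‖ ≤ ∫ x, ‖G x‖ :=
    setIntegral_le_integral hG.norm (ae_of_all _ fun x => norm_nonneg _)
  have hUK := mul_le_mul_of_nonneg_left (setIntegral_sq_norm_add_le hU.memLp hU.memLp_grad K) hε.le
  gcongr
  linarith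

theorem IsRegularisedSolution.integral_sq_norm_radialGrad_sub_le
    (hsol : IsRegularisedSolution f' ε T K v g)
    (h : IsLinearGrowthIntegrand f f' L) (hK : IsCompact K) (hε : 0 < ε) (hv : MemH1 v g)
    (hU : MemH1 U G) (hbdry : ∀ᵐ x, x ∉ K → v x = U x ∧ g x = G x) (hG : Integrable G)
    (hG₀ : Integrable G₀) (hclose : ∫ x, ‖G x - G₀ x‖ ≤ δ)
    (hεU : ε * ((∫ x, ‖U x‖ ^ 2) + ∫ x, ‖G x‖ ^ 2) ≤ δ) (hT : MemLp T 2)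
    (hEL : ∫ x, ⟪radialGrad f' (G₀ x) - T x, g x - G x⟫ = 0) :
    ∫ x in K, ‖radialGrad f' (g x) - radialGrad f' (G₀ x)‖ ^ 2 ≤ 12 * L * (2 * L + 1) * δ := by
  have hL := h.pos
  have : IsFiniteMeasure (volume.restrict K) := ⟨by simpa using hK.measure_lt_top⟩
  have heq₀ : ∫ x in K, ⟪radialGrad f' (G₀ x) - T x, g x - G x⟫ = 0 := by
    rw [setIntegral_eq_integral_of_ae_compl_eq_zero, hEL]
    filter_upwards [hbdry] with x hx hxK
    simp [hx hxK]
  refine (h.integral_sq_norm_radialGrad_sub_le_of_integral_eq_zero hε.le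
    (hv.memLp.restrict K) (hv.memLp_grad.restrict K) (hU.memLp.restrict K)
    (hU.memLp_grad.restrict K) hG₀.restrict (hT.restrict K)
    (hsol.setIntegral_eq_zero (hv.memH1Supp_sub hU hbdry)) heq₀).trans ?_
  have hGK : ∫ x in K, ‖G x - G₀ x‖ ≤ δ :=
    (setIntegral_le_integral (hG.sub hG₀).norm (ae_of_all _ fun x => norm_nonneg _)).trans hclose
  have hUK := mul_le_mul_of_nonneg_left (setIntegral_sq_norm_add_le hU.memLp hU.memLp_grad K) hε.le
  have hpos : 0 ≤ ε * ((∫ x in K, ‖U x‖ ^ 2) + ∫ x in K, ‖G x‖ ^ 2) := by positivity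
  rw [mul_assoc (12 * L), add_mul, one_mul]
  gcongr
  linarith

end BoundaryData

/- The boundary data `U` mollifies the `W^{1,1}` function `U₀` up to `δ`, and `ε` is so small that
the quadratic energy of `U` is at most `δ`. -/
theorem IsLinearGrowthIntegrand.exists_regularised_approximation
    (h : IsLinearGrowthIntegrand f f' L) (hK : IsCompact K)
    {U₀ : EVec n → EuclideanSpace ℝ ι} (hw : HasWeakGradOn univ U₀ G₀) (hU₀ : Integrable U₀)
    (hG₀ : Integrable G₀) (hU₀c : HasCompactSupport U₀) (hG₀c : HasCompactSupport G₀)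
    (hT : MemLp T 2) {θ θ' C : ℝ} (hθ : 0 ≤ θ) (hTθ : ∀ᵐ x ∂volume.restrict K, ‖T x‖ ≤ θ)
    (hθ' : θ < θ') (hC0 : 0 ≤ C) (hC : ∀ t, 0 ≤ t → θ' * t - C ≤ f t)
    (hEL : ∀ (ψ : EVec n → EuclideanSpace ℝ ι) (Dψ : EVec n → Jac ι n), MemH1Supp K ψ Dψ →
      ∫ x, ⟪radialGrad f' (G₀ x) - T x, Dψ x⟫ = 0) :
    ∃ Q, 0 ≤ Q ∧ ∀ δ, 0 < δ → δ ≤ 1 → ∃ ε, 0 < ε ∧ ε ≤ 1 ∧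
      ∃ (v : EVec n → EuclideanSpace ℝ ι) (g : EVec n → Jac ι n),
        MemH1 v g ∧ IsRegularisedSolution f' ε T K v g ∧
        ∫ x in K, ‖g x‖ ≤ Q ∧ ε * ∫ x in K, ‖g x‖ ^ 2 ≤ Q ∧
        ∫ x in K, ‖radialGrad f' (g x) - radialGrad f' (G₀ x)‖ ^ 2 ≤ Q * δ := by
  have hL := h.pos
  have : IsFiniteMeasure (volume.restrict K) := ⟨by simpa using hK.measure_lt_top⟩
  set M := ∫ x, ‖G₀ x‖
  have : 0 ≤ M := integral_nonneg fun x => norm_nonneg _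
  set Q₀ := C * (volume.restrict K).real univ + (L + θ) * (M + 1) + 1 with hQ₀
  have hQ₀0 : 0 ≤ Q₀ := by positivity
  have hgap : 0 < θ' - θ := sub_pos.2 hθ'
  refine ⟨Q₀ / (θ' - θ) + 2 * Q₀ + 12 * L * (2 * L + 1), by positivity, fun δ hδ hδ1 => ?_⟩
  obtain ⟨U, G, hUG, hG, hclose⟩ := hw.exists_memH1_integral_norm_sub_le hU₀ hG₀ hU₀c hG₀c hδ
  obtain ⟨ε, hε, hε1, hεS⟩ := exists_pos_le_one_mul_le hδ hδ1
    (S := (∫ x, ‖U x‖ ^ 2) + ∫ x, ‖G x‖ ^ 2) (by positivity)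
  obtain ⟨v, g, hvg, hbdry, hsol⟩ := h.exists_isRegularisedSolution hε hK.measurableSet hUG hT
  have henergy := hsol.energy_le h hK hε hvg hUG hbdry hG hδ1 hεS hT hθ hTθ hC
  have hGM := integral_norm_le_integral_norm_add_of_integral_norm_sub_le hG hG₀ hclose
  have henergy' : (θ' - θ) * (∫ x in K, ‖g x‖) + ε / 2 * ∫ x in K, ‖g x‖ ^ 2 ≤ Q₀ :=
    henergy.trans (by
      rw [hQ₀]
      gcongr
      linarith)
  have hg1 : 0 ≤ (θ' - θ) * (∫ x in K, ‖g x‖) := by positivity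
  have hg2 : 0 ≤ ε / 2 * ∫ x in K, ‖g x‖ ^ 2 := by positivity
  have hQ : 0 ≤ Q₀ / (θ' - θ) := by positivity
  have hc : 0 ≤ 12 * L * (2 * L + 1) := by positivity
  refine ⟨ε, hε, hε1, v, g, hvg, hsol, ?_, by linarith, ?_⟩
  · have hg1' : ∫ x in K, ‖g x‖ ≤ Q₀ / (θ' - θ) := by
      rw [le_div_iff₀' hgap]
      linarith
    linarith
  · exact (hsol.integral_sq_norm_radialGrad_sub_le h hK hε hvg hUG hbdry hG hG₀ hclose hεS hT
      (hEL _ _ (hvg.memH1Supp_sub hUG hbdry))).trans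
        (mul_le_mul_of_nonneg_right (by linarith) hδ.le)

end Approximation

/-! ### The Caccioppoli inequality -/

section Caccioppoli

section Pointwise

variable {E V : Type*} [NormedAddCommGroup E] [InnerProductSpace ℝ E] [NormedAddCommGroup V]
  [InnerProductSpace ℝ V] {L ε η c m p γ ρ τ : ℝ}

theorem neg_inner_le_of_norm_le_two_mul {a b : E} (hp : 0 < p) (hb : ‖b‖ ≤ 2 * η * m) :
    -⟪a, b⟫ ≤ p * (η ^ 2 * ‖a‖ ^ 2) + m ^ 2 / p := by
  have hinner : -⟪a, b⟫ ≤ ‖a‖ * (2 * η * m) := calc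
    -⟪a, b⟫ ≤ ‖a‖ * ‖b‖ := (neg_le_abs _).trans (abs_real_inner_le_norm a b)
    _ ≤ ‖a‖ * (2 * η * m) := by gcongr
  have hsq : p * (η ^ 2 * ‖a‖ ^ 2) + m ^ 2 / p - ‖a‖ * (2 * η * m) =
      p * (η * ‖a‖ - m / p) ^ 2 := by
    field_simp
    ring
  have : 0 ≤ p * (η * ‖a‖ - m / p) ^ 2 := by positivity
  linarith

theorem sq_mul_sq_norm_le_inner_add_of_cocoercive (hL : 0 < L) (hε : 0 ≤ ε) (hγ : 0 ≤ γ)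
    {dA dg b : E} (hb : ‖b‖ ≤ 2 * η * m) (hco : (1 + γ) * ‖dA‖ ^ 2 / (12 * L) ≤ ⟪dA, dg⟫) :
    η ^ 2 * ‖dA‖ ^ 2 / (24 * L) ≤
      ⟪dA + ε • dg, η ^ 2 • dg + b⟫ + (24 * L * (m ^ 2 / (1 + γ)) + ε * m ^ 2) := by
  have : 0 < 1 + γ := by linarith
  have hexpand : ⟪dA + ε • dg, η ^ 2 • dg + b⟫ =
      η ^ 2 * ⟪dA, dg⟫ + ε * (η ^ 2 * ‖dg‖ ^ 2) + ⟪dA, b⟫ + ε * ⟪dg, b⟫ := by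
    simp only [inner_add_left, inner_add_right, real_inner_smul_left, real_inner_smul_right,
      real_inner_self_eq_norm_sq]
    ring
  have hdA := neg_inner_le_of_norm_le_two_mul (a := dA) (p := (1 + γ) / (24 * L)) (by positivity) hb
  have hdg := mul_le_mul_of_nonneg_left
    (neg_inner_le_of_norm_le_two_mul (a := dg) one_pos hb) hε
  have hco' := mul_le_mul_of_nonneg_left hco (sq_nonneg η)
  have hhalf : η ^ 2 * ((1 + γ) * ‖dA‖ ^ 2 / (12 * L)) =
      2 * ((1 + γ) / (24 * L) * (η ^ 2 * ‖dA‖ ^ 2)) := by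
    field_simp
    ring
  have hm : m ^ 2 / ((1 + γ) / (24 * L)) = 24 * L * (m ^ 2 / (1 + γ)) := by
    field_simp
  have hdrop : η ^ 2 * ‖dA‖ ^ 2 / (24 * L) ≤ (1 + γ) / (24 * L) * (η ^ 2 * ‖dA‖ ^ 2) := by
    rw [div_mul_eq_mul_div]
    exact div_le_div_of_nonneg_right (le_mul_of_one_le_left (by positivity) (by linarith))
      (by positivity)
  rw [hm] at hdA
  rw [hexpand]
  linarith

theorem sq_div_one_add_le {x : ℝ} (hγ : 0 ≤ γ) (hx : x ^ 2 ≤ 2 * γ ^ 2 + 2 * ρ ^ 2) :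
    x ^ 2 / (1 + γ) ≤ 2 * γ + 2 * ρ ^ 2 := by
  rw [div_le_iff₀ (by linarith)]
  linarith [mul_nonneg hγ (sq_nonneg ρ)]

theorem caccioppoli_pointwise (hL : 0 < L) (hε : 0 ≤ ε) (hε1 : ε ≤ 1) (hη : 0 ≤ η) (hη1 : η ≤ 1)
    (hγ : 0 ≤ γ) {dA dg b : E} {dv d : V} (hb : ‖b‖ ≤ 2 * η * (c * ‖dv‖))
    (hco : (1 + γ) * ‖dA‖ ^ 2 / (12 * L) ≤ ⟪dA, dg⟫) (hd : ‖d‖ ≤ τ) (hdv : ‖dv‖ ≤ γ + ρ) :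
    η ^ 2 * ‖dA‖ ^ 2 / (24 * L) ≤
      ⟪dA + ε • dg, η ^ 2 • dg + b⟫ + ⟪d, η ^ 2 • dv⟫ + ε * ⟪dv, η ^ 2 • dv⟫ +
        (τ + 48 * L * c ^ 2 + 2 * c ^ 2) * (γ + 1 + ρ ^ 2 + ε * γ ^ 2) := by
  have hτ : 0 ≤ τ := (norm_nonneg d).trans hd
  have hdv2 : ‖dv‖ ^ 2 ≤ 2 * γ ^ 2 + 2 * ρ ^ 2 :=
    (pow_le_pow_left₀ (norm_nonneg dv) hdv 2).trans (by linarith [sq_nonneg (γ - ρ)])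
  have hmain := sq_mul_sq_norm_le_inner_add_of_cocoercive hL hε hγ hb hco
  have hweighted : 24 * L * ((c * ‖dv‖) ^ 2 / (1 + γ)) ≤ 24 * L * c ^ 2 * (2 * γ + 2 * ρ ^ 2) := by
    rw [mul_pow, mul_div_assoc, ← mul_assoc]
    gcongr
    exact sq_div_one_add_le hγ hdv2
  have hquad : ε * (c * ‖dv‖) ^ 2 ≤ c ^ 2 * (2 * (ε * γ ^ 2) + 2 * ρ ^ 2) := calc
    ε * (c * ‖dv‖) ^ 2 = c ^ 2 * (ε * ‖dv‖ ^ 2) := by ring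
    _ ≤ c ^ 2 * (ε * (2 * γ ^ 2 + 2 * ρ ^ 2)) := by gcongr
    _ ≤ c ^ 2 * (2 * (ε * γ ^ 2) + 2 * ρ ^ 2) := by
      gcongr
      linarith [mul_le_mul_of_nonneg_right hε1 (sq_nonneg ρ)]
  have hload : -⟪d, η ^ 2 • dv⟫ ≤ τ * (γ + 1 + ρ ^ 2) := calc
    -⟪d, η ^ 2 • dv⟫ ≤ ‖d‖ * ‖η ^ 2 • dv‖ := (neg_le_abs _).trans (abs_real_inner_le_norm _ _)
    _ ≤ τ * ‖dv‖ := by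
      rw [norm_smul, Real.norm_of_nonneg (sq_nonneg η)]
      exact mul_le_mul hd (mul_le_of_le_one_left (norm_nonneg dv) (pow_le_one₀ hη hη1))
        (by positivity) hτ
    _ ≤ τ * (γ + 1 + ρ ^ 2) := by
      gcongr
      linarith [sq_nonneg (ρ - 1 / 2)]
  have hzero : 0 ≤ ε * ⟪dv, η ^ 2 • dv⟫ := by
    rw [real_inner_smul_right, real_inner_self_eq_norm_sq]
    positivity
  have hslack : 0 ≤ τ * (ε * γ ^ 2) + 48 * L * c ^ 2 * (1 + ε * γ ^ 2) + 2 * c ^ 2 * (γ + 1) := by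
    positivity
  linarith

end Pointwise

theorem integral_inner_diffQuot_neg {X E : Type*} [AddCommGroup X] [Module ℝ X] [MeasurableSpace X]
    [MeasurableAdd X] [NormedAddCommGroup E] [InnerProductSpace ℝ E] {μ : Measure X}
    [μ.IsAddRightInvariant] {a b : X → E} (ha : MemLp a 2 μ) (hb : MemLp b 2 μ) (t : ℝ) (e : X) :
    ∫ x, ⟪a x, diffQuot (-t) e b x⟫ ∂μ = -∫ x, ⟪diffQuot t e a x, b x⟫ ∂μ := by
  simp only [diffQuot, real_inner_smul_right, real_inner_smul_left, inner_sub_left, inner_sub_right,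
    integral_const_mul]
  rw [integral_sub (integrable_inner_of_memLp_two ha (memLp_comp_add_right hb _))
      (integrable_inner_of_memLp_two ha hb),
    integral_sub (integrable_inner_of_memLp_two (memLp_comp_add_right ha _) hb)
      (integrable_inner_of_memLp_two ha hb),
    ← integral_add_right_eq_self (fun x => ⟪a x, b (x + -t • e)⟫) (t • e)]
  simp only [neg_smul, add_neg_cancel_right, inv_neg, neg_mul]

variable {n : ℕ}

theorem gradient_sq {η : EVec n → ℝ} (hη : Differentiable ℝ η) (x : EVec n) :
    gradient (fun x => η x ^ 2) x = (2 * η x) • gradient η x := by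
  ext i
  rw [PiLp.smul_apply, gradient_apply_coord, gradient_apply_coord, fderiv_fun_pow 2 (hη x)]
  simp

/-- A `C¹` cutoff function with values in `[0, 1]`, compact support and gradient bounded by `c`. -/
structure IsCutoff (η : EVec n → ℝ) (c : ℝ) : Prop where
  contDiff : ContDiff ℝ 1 η
  hasCompactSupport : HasCompactSupport η
  nonneg : ∀ x, 0 ≤ η x
  le_one : ∀ x, η x ≤ 1
  norm_gradient_le : ∀ x, ‖gradient η x‖ ≤ c

variable {ι : Type*} [Fintype ι] {v : EVec n → EuclideanSpace ℝ ι} {g : EVec n → Jac ι n}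
  {η : EVec n → ℝ} {c : ℝ}

namespace IsCutoff

theorem bound_nonneg (hη : IsCutoff η c) : 0 ≤ c := (norm_nonneg _).trans (hη.norm_gradient_le 0)

theorem tsupport_sq_subset : tsupport (fun x => η x ^ 2) ⊆ tsupport η :=
  closure_mono fun x hx hx0 => hx (by simp [hx0])

theorem norm_outer_gradient_sq_le (hη : IsCutoff η c) (v : EuclideanSpace ℝ ι) (x : EVec n) :
    ‖outer v (gradient (fun x => η x ^ 2) x)‖ ≤ 2 * η x * (c * ‖v‖) := by
  have hηx := hη.nonneg x
  rw [norm_outer, gradient_sq (hη.contDiff.differentiable one_ne_zero), norm_smul,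
    Real.norm_of_nonneg (by positivity)]
  calc ‖v‖ * (2 * η x * ‖gradient η x‖) ≤ ‖v‖ * (2 * η x * c) := by
        gcongr
        exact hη.norm_gradient_le x
    _ = 2 * η x * (c * ‖v‖) := by ring

theorem memLp_smul {E : Type*} [NormedAddCommGroup E] [NormedSpace ℝ E] (hη : IsCutoff η c)
    {a : EVec n → E} {p : ℝ≥0∞} (ha : MemLp a p) : MemLp (fun x => η x • a x) p :=
  ha.of_le (hη.contDiff.continuous.aestronglyMeasurable.smul ha.1) <| ae_of_all _ fun x => by
    rw [norm_smul, Real.norm_of_nonneg (hη.nonneg x)]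
    exact mul_le_of_le_one_left (norm_nonneg _) (hη.le_one x)

theorem memLp_sq_smul {E : Type*} [NormedAddCommGroup E] [NormedSpace ℝ E] (hη : IsCutoff η c)
    {a : EVec n → E} {p : ℝ≥0∞} (ha : MemLp a p) : MemLp (fun x => η x ^ 2 • a x) p := by
  simpa only [smul_smul, sq] using hη.memLp_smul (hη.memLp_smul ha)

theorem memH1Supp_sq_smul (hη : IsCutoff η c) (hv : MemH1 v g) :
    MemH1Supp (tsupport η) (fun x => η x ^ 2 • v x)
      (fun x => η x ^ 2 • g x + outer (v x) (gradient (fun x => η x ^ 2) x)) where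
  memLp := hη.memLp_sq_smul hv.memLp
  memLp_grad := by
    refine (hη.memLp_sq_smul hv.memLp_grad).add (hv.memLp.of_le_mul (c := 2 * c)
      (continuous_outer.comp_aestronglyMeasurable (hv.memLp.1.prodMk
        (continuous_gradient_of_contDiff (hη.contDiff.pow 2)).aestronglyMeasurable))
      (ae_of_all _ fun x => (hη.norm_outer_gradient_sq_le (v x) x).trans ?_))
    have hcv : 0 ≤ c * ‖v x‖ := mul_nonneg hη.bound_nonneg (norm_nonneg _)
    linarith [mul_le_mul_of_nonneg_right (hη.le_one x) hcv]
  hasWeakGradOn := hv.hasWeakGradOn.smul_of_hasCompactSupport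
    (hv.memLp.locallyIntegrable one_le_two) (hv.memLp_grad.locallyIntegrable one_le_two)
    (hη.contDiff.pow 2)
    (hη.hasCompactSupport.of_isClosed_subset (isClosed_tsupport _) tsupport_sq_subset)
    (subset_univ _)
  ae_eq_zero := ae_of_all _ fun x hx => by
    have hx0 : η x = 0 := image_eq_zero_of_notMem_tsupport hx
    rw [gradient_sq (hη.contDiff.differentiable one_ne_zero), hx0]
    refine ⟨by simp, ?_⟩
    ext p
    simp

end IsCutoff

theorem MemH1.diffQuot (hv : MemH1 v g) (t : ℝ) (e : EVec n) :
    MemH1 (diffQuot t e v) (diffQuot t e g) := by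
  have hshift : MemH1 (fun x => v (x + t • e)) (fun x => g (x + t • e)) :=
    ⟨memLp_comp_add_right hv.memLp _, memLp_comp_add_right hv.memLp_grad _,
      hv.hasWeakGradOn.comp_add_right _⟩
  simpa only [neg_one_smul, ← sub_eq_add_neg] using!
    (hshift.add (hv.const_smul (-1))).const_smul t⁻¹

theorem MemH1Supp.diffQuot_neg {S K : Set (EVec n)} (hv : MemH1Supp S v g) {t : ℝ} {e : EVec n}
    (hSK : S ⊆ K) (hshift : ∀ x ∈ S, x + t • e ∈ K) :
    MemH1Supp K (diffQuot (-t) e v) (diffQuot (-t) e g) where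
  toMemH1 := hv.toMemH1.diffQuot (-t) e
  ae_eq_zero := by
    filter_upwards [hv.ae_eq_zero, (measurePreserving_add_right volume
      (-t • e)).quasiMeasurePreserving.ae hv.ae_eq_zero] with x hx hx' hxK
    have hxS : x + -t • e ∉ S := fun hmem => hxK <| by
      simpa only [neg_smul, neg_add_cancel_right] using hshift _ hmem
    simp only [_root_.diffQuot, hx fun hmem => hxK (hSK hmem), hx' hxS, sub_self, smul_zero,
      and_self]

/-- `D` is the weak (row-wise) divergence of `T` on `ℝⁿ`, tested with `W^{1,2}` functions. -/
def HasWeakDiv (T : EVec n → Jac ι n) (D : EVec n → EuclideanSpace ℝ ι) : Prop :=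
  ∀ ψ Dψ, MemH1 ψ Dψ → ∫ x, ⟪T x, Dψ x⟫ = -∫ x, ⟪D x, ψ x⟫

section Regularised

variable {f f' : ℝ → ℝ} {L ε t : ℝ} {K : Set (EVec n)} {T : EVec n → Jac ι n}
  {D : EVec n → EuclideanSpace ℝ ι}

/- The difference quotient of the regularised equation: test it with `diffQuot (-t) e w` and sum by
parts. -/
theorem IsRegularisedSolution.integral_diffQuot_eq_zero (hsol : IsRegularisedSolution f' ε T K v g)
    (h : IsLinearGrowthIntegrand f f' L) (hv : MemH1 v g) (hT : MemLp T 2) (hD : MemLp D 2)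
    (hTD : HasWeakDiv T D) {S : Set (EVec n)} {w : EVec n → EuclideanSpace ℝ ι}
    {Dw : EVec n → Jac ι n} (hw : MemH1Supp S w Dw) {e : EVec n} (hSK : S ⊆ K)
    (hshift : ∀ x ∈ S, x + t • e ∈ K) :
    ∫ x, (⟪diffQuot t e (fun x => radialGrad f' (g x) + ε • g x) x, Dw x⟫ +
      ⟪diffQuot t e D x, w x⟫ + ε * ⟪diffQuot t e v x, w x⟫) = 0 := by
  have hψ := hw.diffQuot_neg hSK hshift
  have hX : MemLp (fun x => radialGrad f' (g x) + ε • g x) 2 :=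
    (h.memLp_two_radialGrad hv.memLp_grad).add (hv.memLp_grad.const_smul ε)
  have heq := hsol _ _ hψ
  simp only [inner_sub_left (radialGrad f' _ + _)] at heq
  have hXψ := integrable_inner_of_memLp_two hX hψ.memLp_grad
  have hTψ := integrable_inner_of_memLp_two hT hψ.memLp_grad
  have hXTψ : Integrable fun x => ⟪radialGrad f' (g x) + ε • g x, diffQuot (-t) e Dw x⟫ -
      ⟪T x, diffQuot (-t) e Dw x⟫ := hXψ.sub hTψ
  rw [integral_add hXTψ ((integrable_inner_of_memLp_two hv.memLp hψ.memLp).const_mul ε),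
    integral_sub hXψ hTψ, integral_const_mul, hTD _ _ hψ.toMemH1,
    integral_inner_diffQuot_neg hX hw.memLp_grad, integral_inner_diffQuot_neg hD hw.memLp,
    integral_inner_diffQuot_neg hv.memLp hw.memLp] at heq
  have hXw := integrable_inner_of_memLp_two (memLp_diffQuot hX t e) hw.memLp_grad
  have hDw := integrable_inner_of_memLp_two (memLp_diffQuot hD t e) hw.memLp
  have hXDw : Integrable fun x => ⟪diffQuot t e (fun x => radialGrad f' (g x) + ε • g x) x, Dw x⟫ +
      ⟪diffQuot t e D x, w x⟫ := hXw.add hDw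
  rw [integral_add hXDw
    ((integrable_inner_of_memLp_two (memLp_diffQuot hv.memLp t e) hw.memLp).const_mul ε),
    integral_add hXw hDw, integral_const_mul]
  linarith

theorem IsLinearGrowthIntegrand.diffQuot_cocoercive {X E : Type*} [AddCommGroup X] [Module ℝ X]
    [NormedAddCommGroup E] [InnerProductSpace ℝ E] (h : IsLinearGrowthIntegrand f f' L) (g : X → E)
    (t : ℝ) (e x : X) :
    (1 + ‖g x‖) * ‖diffQuot t e (fun x => radialGrad f' (g x)) x‖ ^ 2 / (12 * L) ≤
      ⟪diffQuot t e (fun x => radialGrad f' (g x)) x, diffQuot t e g x⟫ := by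
  have hco := mul_le_mul_of_nonneg_left (h.radialGrad_cocoercive (g x) (g (x + t • e)))
    (sq_nonneg t⁻¹)
  simp only [diffQuot, norm_smul, real_inner_smul_left, real_inner_smul_right, mul_pow,
    Real.norm_eq_abs, sq_abs]
  calc _ = t⁻¹ ^ 2 * ((1 + ‖g x‖) * ‖radialGrad f' (g (x + t • e)) - radialGrad f' (g x)‖ ^ 2 /
        (12 * L)) := by ring
    _ ≤ t⁻¹ ^ 2 * ⟪radialGrad f' (g (x + t • e)) - radialGrad f' (g x), g (x + t • e) - g x⟫ := hco
    _ = _ := by ring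

theorem caccioppoli_pointwise_diffQuot (h : IsLinearGrowthIntegrand f f' L) (hε : 0 ≤ ε)
    (hε1 : ε ≤ 1) (hη : IsCutoff η c) (hηK : tsupport η ⊆ K) (s : Fin n) {τ : ℝ} (hτ : 0 ≤ τ)
    (hDτ : ∀ x ∈ tsupport η, ‖diffQuot t (stdVec s) D x‖ ≤ τ) (x : EVec n) :
    η x ^ 2 * ‖diffQuot t (stdVec s) (fun x => radialGrad f' (g x)) x‖ ^ 2 / (24 * L) ≤
      ⟪diffQuot t (stdVec s) (fun x => radialGrad f' (g x) + ε • g x) x,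
        η x ^ 2 • diffQuot t (stdVec s) g x +
          outer (diffQuot t (stdVec s) v x) (gradient (fun x => η x ^ 2) x)⟫ +
      ⟪diffQuot t (stdVec s) D x, η x ^ 2 • diffQuot t (stdVec s) v x⟫ +
      ε * ⟪diffQuot t (stdVec s) v x, η x ^ 2 • diffQuot t (stdVec s) v x⟫ +
      K.indicator (fun x => (τ + 48 * L * c ^ 2 + 2 * c ^ 2) * (‖g x‖ + 1 +
        ‖diffQuot t (stdVec s) v x - col s (g x)‖ ^ 2 + ε * ‖g x‖ ^ 2)) x := by
  have hL := h.pos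
  have hsplit : diffQuot t (stdVec s) (fun x => radialGrad f' (g x) + ε • g x) x =
      diffQuot t (stdVec s) (fun x => radialGrad f' (g x)) x + ε • diffQuot t (stdVec s) g x := by
    simp only [diffQuot]
    module
  have hb := hη.norm_outer_gradient_sq_le (diffQuot t (stdVec s) v x) x
  by_cases hx : x ∈ tsupport η
  · have hdv : ‖diffQuot t (stdVec s) v x‖ ≤
        ‖g x‖ + ‖diffQuot t (stdVec s) v x - col s (g x)‖ := calc
      _ ≤ ‖col s (g x)‖ + ‖diffQuot t (stdVec s) v x - col s (g x)‖ :=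
        norm_le_norm_add_norm_sub' _ _
      _ ≤ _ := by grw [norm_col_le s (g x)]
    rw [indicator_of_mem (hηK hx), hsplit]
    exact caccioppoli_pointwise hL hε hε1 (hη.nonneg x) (hη.le_one x) (norm_nonneg _) hb
      (h.diffQuot_cocoercive g t (stdVec s) x) (hDτ x hx) hdv
  · have hx0 : η x = 0 := image_eq_zero_of_notMem_tsupport hx
    have hb0 : outer (diffQuot t (stdVec s) v x) (gradient (fun x => η x ^ 2) x) = 0 := by
      rw [hx0, mul_zero, zero_mul] at hb
      exact norm_le_zero_iff.1 hb
    rw [hb0, hx0]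
    simpa using indicator_nonneg (fun x _ => by positivity) x

theorem setIntegral_norm_add_one_add_le {V E : Type*} [NormedAddCommGroup E] [NormedAddCommGroup V]
    {X : Type*} [MeasurableSpace X] {μ : Measure X} {K : Set X} [IsFiniteMeasure (μ.restrict K)]
    {g : X → E} {ρ : X → V} (hg : MemLp g 2 μ) (hρ : MemLp ρ 2 μ) {Q : ℝ}
    (hρ1 : ∫ x, ‖ρ x‖ ^ 2 ∂μ ≤ 1) (hQ : ∫ x in K, ‖g x‖ ∂μ ≤ Q)
    (hQ2 : ε * ∫ x in K, ‖g x‖ ^ 2 ∂μ ≤ Q) :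
    Integrable (fun x => ‖g x‖ + 1 + ‖ρ x‖ ^ 2 + ε * ‖g x‖ ^ 2) (μ.restrict K) ∧
      ∫ x in K, (‖g x‖ + 1 + ‖ρ x‖ ^ 2 + ε * ‖g x‖ ^ 2) ∂μ ≤
        2 * Q + (μ.restrict K).real univ + 1 := by
  have hg1 : Integrable (fun x => ‖g x‖ + 1) (μ.restrict K) :=
    ((hg.restrict K).integrable one_le_two).norm.add (integrable_const 1)
  have hρ2 := integrable_sq_norm_of_memLp_two hρ
  have hg1ρ : Integrable (fun x => ‖g x‖ + 1 + ‖ρ x‖ ^ 2) (μ.restrict K) := hg1.add hρ2.restrict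
  have hg2 : Integrable (fun x => ε * ‖g x‖ ^ 2) (μ.restrict K) :=
    (integrable_sq_norm_of_memLp_two hg).restrict.const_mul ε
  refine ⟨hg1ρ.add hg2, ?_⟩
  have hρK : ∫ x in K, ‖ρ x‖ ^ 2 ∂μ ≤ 1 :=
    (setIntegral_le_integral hρ2 (ae_of_all _ fun x => by positivity)).trans hρ1
  rw [integral_add hg1ρ hg2, integral_add hg1 hρ2.restrict,
    integral_add ((hg.restrict K).integrable one_le_two).norm (integrable_const 1), integral_const,
    smul_eq_mul, mul_one, integral_const_mul]
  linarith

variable {τ Q : ℝ}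

theorem IsRegularisedSolution.integral_sq_mul_sq_norm_diffQuot_le
    (hsol : IsRegularisedSolution f' ε T K v g) (h : IsLinearGrowthIntegrand f f' L)
    (hK : IsCompact K) (hε : 0 ≤ ε) (hε1 : ε ≤ 1) (hv : MemH1 v g) (hT : MemLp T 2)
    (hD : MemLp D 2) (hTD : HasWeakDiv T D) (hη : IsCutoff η c) (hηK : tsupport η ⊆ K) (s : Fin n)
    (hτ : 0 ≤ τ) (hshift : ∀ x ∈ tsupport η, x + t • stdVec s ∈ K)
    (hDτ : ∀ x ∈ tsupport η, ‖diffQuot t (stdVec s) D x‖ ≤ τ)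
    (hvt : ∫ x, ‖diffQuot t (stdVec s) v x - col s (g x)‖ ^ 2 ≤ 1)
    (hQ : ∫ x in K, ‖g x‖ ≤ Q) (hQ2 : ε * ∫ x in K, ‖g x‖ ^ 2 ≤ Q) :
    ∫ x, η x ^ 2 * ‖diffQuot t (stdVec s) (fun x => radialGrad f' (g x)) x‖ ^ 2 ≤
      24 * L * ((τ + 48 * L * c ^ 2 + 2 * c ^ 2) *
        (2 * Q + (volume.restrict K).real univ + 1)) := by
  have hL := h.pos
  have : IsFiniteMeasure (volume.restrict K) := ⟨by simpa using hK.measure_lt_top⟩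
  have hdA := memLp_diffQuot (h.memLp_two_radialGrad hv.memLp_grad) t (stdVec s)
  have hX := memLp_diffQuot ((h.memLp_two_radialGrad hv.memLp_grad).add
    (hv.memLp_grad.const_smul ε)) t (stdVec s)
  have hw := hη.memH1Supp_sq_smul (hv.diffQuot t (stdVec s))
  obtain ⟨hR, hRQ⟩ := setIntegral_norm_add_one_add_le hv.memLp_grad
    ((memLp_diffQuot hv.memLp t (stdVec s)).sub (memLp_col hv.memLp_grad s)) hvt hQ hQ2
  have hlhs : Integrable fun x => η x ^ 2 *
      ‖diffQuot t (stdVec s) (fun x => radialGrad f' (g x)) x‖ ^ 2 / (24 * L) := by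
    simpa only [norm_smul, mul_pow, Real.norm_eq_abs, sq_abs] using
      (integrable_sq_norm_of_memLp_two (hη.memLp_smul hdA)).div_const (24 * L)
  have hmain := integral_le_integral_of_ae_le_add hlhs
    (IntegrableOn.integrable_indicator (hR.const_mul (τ + 48 * L * c ^ 2 + 2 * c ^ 2))
      hK.measurableSet)
    (((integrable_inner_of_memLp_two hX hw.memLp_grad).add (integrable_inner_of_memLp_two
      (memLp_diffQuot hD t _) hw.memLp)).add ((integrable_inner_of_memLp_two
      (memLp_diffQuot hv.memLp t _) hw.memLp).const_mul ε))
    (hsol.integral_diffQuot_eq_zero h hv hT hD hTD hw hηK hshift)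
    (ae_of_all _ (caccioppoli_pointwise_diffQuot h hε hε1 hη hηK s hτ hDτ))
  rw [integral_indicator hK.measurableSet, integral_const_mul, integral_div,
    div_le_iff₀' (by positivity)] at hmain
  refine hmain.trans ?_
  gcongr

theorem IsRegularisedSolution.eventually_integral_sq_mul_sq_norm_diffQuot_le
    (hsol : IsRegularisedSolution f' ε T K v g) (h : IsLinearGrowthIntegrand f f' L)
    (hK : IsCompact K) (hε : 0 ≤ ε) (hε1 : ε ≤ 1) (hv : MemH1 v g) (hT : MemLp T 2)
    (hD : MemLp D 2) (hTD : HasWeakDiv T D) (hη : IsCutoff η c) (hηK : tsupport η ⊆ K) (s : Fin n)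
    (hτ : 0 ≤ τ) (hshift : ∀ᶠ t in 𝓝[>] (0 : ℝ), ∀ x ∈ tsupport η,
      x + t • stdVec s ∈ K ∧ ‖diffQuot t (stdVec s) D x‖ ≤ τ)
    (hQ : ∫ x in K, ‖g x‖ ≤ Q) (hQ2 : ε * ∫ x in K, ‖g x‖ ^ 2 ≤ Q) :
    ∀ᶠ t in 𝓝[>] (0 : ℝ),
      ∫ x, η x ^ 2 * ‖diffQuot t (stdVec s) (fun x => radialGrad f' (g x)) x‖ ^ 2 ≤
        24 * L * ((τ + 48 * L * c ^ 2 + 2 * c ^ 2) *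
          (2 * Q + (volume.restrict K).real univ + 1)) := by
  filter_upwards [hshift, (hv.tendsto_integral_sq_norm_diffQuot_sub_col s).eventually_le_const
    one_pos] with t ht hvt
  exact hsol.integral_sq_mul_sq_norm_diffQuot_le h hK hε hε1 hv hT hD hTD hη hηK s hτ
    (fun x hx => (ht x hx).1) (fun x hx => (ht x hx).2) hvt hQ hQ2

end Regularised

end Caccioppoli

/-! ### Weak differentiability of the stress field -/

section StressEstimate

theorem abs_integral_mul_le_lpNorm_restrict_mul_lpNorm {α : Type*} [MeasurableSpace α]
    {μ : Measure α} {S : Set α} {a φ : α → ℝ} (ha : MemLp a 2 (μ.restrict S)) (hφ : MemLp φ 2 μ)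
    (hφS : ∀ x ∉ S, φ x = 0) :
    |∫ x, a x * φ x ∂μ| ≤ lpNorm a 2 (μ.restrict S) * lpNorm φ 2 μ := by
  rw [← setIntegral_eq_integral_of_ae_compl_eq_zero
    (ae_of_all μ fun x hx => by rw [hφS x hx, mul_zero])]
  refine (abs_integral_mul_le_lpNorm_mul_lpNorm ha (hφ.restrict S)).trans ?_
  gcongr
  · exact lpNorm_nonneg
  · rw [← toReal_eLpNorm hφ.1, ← toReal_eLpNorm hφ.1.restrict]
    exact ENNReal.toReal_mono hφ.2.ne (eLpNorm_mono_measure φ Measure.restrict_le_self)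

theorem lpNorm_two_coord_le {α κ : Type*} [MeasurableSpace α] {μ : Measure α} [Fintype κ]
    {A : α → EuclideanSpace ℝ κ} (hA : MemLp A 2 μ) (p : κ) :
    lpNorm (fun x => A x p) 2 μ ≤ √(∫ x, ‖A x‖ ^ 2 ∂μ) := by
  have hAp : MemLp (fun x => A x p) 2 μ := (EuclideanSpace.proj (𝕜 := ℝ) p).comp_memLp' hA
  refine Real.le_sqrt_of_sq_le ?_
  rw [lpNorm_two_sq_eq_integral_sq hAp]
  refine integral_mono hAp.integrable_sq (integrable_sq_norm_of_memLp_two hA) fun x => ?_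
  rw [← sq_abs]
  gcongr
  exact PiLp.norm_apply_le (A x) p

theorem abs_integral_mul_fderiv_le_of_eventually_lpNorm_diffQuot_le {X : Type*}
    [NormedAddCommGroup X] [NormedSpace ℝ X] [MeasurableSpace X] [BorelSpace X]
    [FiniteDimensional ℝ X] {μ : Measure X} [μ.IsAddHaarMeasure] {a φ : X → ℝ} {e : X} {C : ℝ}
    (ha : MemLp a 2 μ) (hφ : ContDiff ℝ 1 φ) (hc : HasCompactSupport φ)
    (hC : ∀ᶠ t in 𝓝[>] (0 : ℝ), lpNorm (diffQuot t e a) 2 (μ.restrict (tsupport φ)) ≤ C) :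
    |∫ x, a x * fderiv ℝ φ x e ∂μ| ≤ C * lpNorm φ 2 μ := by
  have hφ2 : MemLp φ 2 μ := hφ.continuous.memLp_of_hasCompactSupport hc
  have hslope := (hasDerivAt_iff_tendsto_slope_zero.1 (hasDerivAt_integral_mul_comp_sub_smul
    (ha.locallyIntegrable one_le_two) hφ hc e 0)).mono_left (y := 𝓝[>] (0 : ℝ))
      (nhdsWithin_mono 0 fun t (ht : 0 < t) => ht.ne')
  simp only [zero_smul, sub_zero, zero_add, smul_eq_mul, ← integral_diffQuot_mul ha hφ2] at hslope
  rw [← abs_neg]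
  refine le_of_tendsto hslope.abs ?_
  filter_upwards [hC] with t ht
  refine (abs_integral_mul_le_lpNorm_restrict_mul_lpNorm ((memLp_diffQuot ha t e).restrict _) hφ2
    fun x => image_eq_zero_of_notMem_tsupport).trans ?_
  gcongr
  exact lpNorm_nonneg

variable {n : ℕ} {ι : Type*} [Fintype ι] {η : EVec n → ℝ} {c : ℝ}

theorem IsCutoff.lpNorm_restrict_coord_le (hη : IsCutoff η c) {S : Set (EVec n)}
    (hS : MeasurableSet S) (hηS : ∀ x ∈ S, η x = 1) {A : EVec n → EuclideanSpace ℝ ι}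
    (hA : MemLp A 2) (p : ι) :
    lpNorm (fun x => A x p) 2 (volume.restrict S) ≤ √(∫ x, η x ^ 2 * ‖A x‖ ^ 2) := by
  refine (lpNorm_two_coord_le (hA.restrict S) p).trans (Real.sqrt_le_sqrt ?_)
  have hηA : Integrable fun x => η x ^ 2 * ‖A x‖ ^ 2 := by
    simpa only [norm_smul, mul_pow, Real.norm_eq_abs, sq_abs] using
      integrable_sq_norm_of_memLp_two (hη.memLp_smul hA)
  calc ∫ x in S, ‖A x‖ ^ 2 = ∫ x in S, η x ^ 2 * ‖A x‖ ^ 2 :=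
        setIntegral_congr_fun hS fun x hx => by simp [hηS x hx]
    _ ≤ ∫ x, η x ^ 2 * ‖A x‖ ^ 2 := setIntegral_le_integral hηA (ae_of_all _ fun x => by positivity)

theorem IsCutoff.abs_integral_coord_mul_fderiv_le (hη : IsCutoff η c)
    {A : EVec n → EuclideanSpace ℝ ι} (hA : MemLp A 2) {e : EVec n} {C : ℝ}
    (hC : ∀ᶠ t in 𝓝[>] (0 : ℝ), ∫ x, η x ^ 2 * ‖diffQuot t e A x‖ ^ 2 ≤ C) {φ : EVec n → ℝ}
    (hφ : ContDiff ℝ 1 φ) (hc : HasCompactSupport φ) (hηφ : ∀ x ∈ tsupport φ, η x = 1) (p : ι) :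
    |∫ x, A x p * fderiv ℝ φ x e| ≤ √C * lpNorm φ 2 volume := by
  refine abs_integral_mul_fderiv_le_of_eventually_lpNorm_diffQuot_le
    ((EuclideanSpace.proj (𝕜 := ℝ) p).comp_memLp' hA) hφ hc ?_
  filter_upwards [hC] with t ht
  exact (hη.lpNorm_restrict_coord_le (isClosed_tsupport φ).measurableSet hηφ
    (memLp_diffQuot hA t e) p).trans (Real.sqrt_le_sqrt ht)

theorem abs_integral_coord_mul_le_add {K : Set (EVec n)} {A A₀ : EVec n → EuclideanSpace ℝ ι}
    (hA : LocallyIntegrable A) (hA₀ : LocallyIntegrable A₀)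
    (hsub : MemLp (fun x => A x - A₀ x) 2 (volume.restrict K)) {ψ : EVec n → ℝ} (hψ : Continuous ψ)
    (hc : HasCompactSupport ψ) (hψK : ∀ x ∉ K, ψ x = 0) (p : ι) :
    |∫ x, A₀ x p * ψ x| ≤
      |∫ x, A x p * ψ x| + √(∫ x in K, ‖A x - A₀ x‖ ^ 2) * lpNorm ψ 2 volume := by
  have hsplit : ∫ x, (A x - A₀ x) p * ψ x = (∫ x, A x p * ψ x) - ∫ x, A₀ x p * ψ x := by
    rw [← integral_sub (integrable_coord_mul_of_hasCompactSupport hA hψ hc p)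
      (integrable_coord_mul_of_hasCompactSupport hA₀ hψ hc p)]
    simp only [PiLp.sub_apply, sub_mul]
  have hdiff : |∫ x, (A x - A₀ x) p * ψ x| ≤
      √(∫ x in K, ‖A x - A₀ x‖ ^ 2) * lpNorm ψ 2 volume :=
    (abs_integral_mul_le_lpNorm_restrict_mul_lpNorm
      ((EuclideanSpace.proj (𝕜 := ℝ) p).comp_memLp' hsub)
      (hψ.memLp_of_hasCompactSupport hc) hψK).trans
      (mul_le_mul_of_nonneg_right (lpNorm_two_coord_le hsub p) lpNorm_nonneg)
  rw [hsplit, abs_sub_comm] at hdiff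
  linarith [abs_sub_abs_le_abs_sub (∫ x, A₀ x p * ψ x) (∫ x, A x p * ψ x)]

section Regularised

variable {f f' : ℝ → ℝ} {L : ℝ} {K : Set (EVec n)} {G₀ T : EVec n → Jac ι n}
  {D : EVec n → EuclideanSpace ℝ ι} {τ : ℝ}

theorem IsRegularisedSolution.abs_integral_radialGrad_mul_fderiv_le {ε Q : ℝ}
    {v : EVec n → EuclideanSpace ℝ ι} {g : EVec n → Jac ι n}
    (hsol : IsRegularisedSolution f' ε T K v g) (h : IsLinearGrowthIntegrand f f' L)
    (hK : IsCompact K) (hε : 0 ≤ ε) (hε1 : ε ≤ 1) (hv : MemH1 v g)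
    (hG₀ : AEStronglyMeasurable G₀ volume) (hT : MemLp T 2) (hD : MemLp D 2) (hTD : HasWeakDiv T D)
    (hη : IsCutoff η c) (hηK : tsupport η ⊆ K) (s : Fin n) (hτ : 0 ≤ τ)
    (hshift : ∀ᶠ t in 𝓝[>] (0 : ℝ), ∀ x ∈ tsupport η,
      x + t • stdVec s ∈ K ∧ ‖diffQuot t (stdVec s) D x‖ ≤ τ)
    (hQ : ∫ x in K, ‖g x‖ ≤ Q) (hQ2 : ε * ∫ x in K, ‖g x‖ ^ 2 ≤ Q) {φ : EVec n → ℝ}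
    (hφ : ContDiff ℝ 1 φ) (hc : HasCompactSupport φ) (hηφ : ∀ x ∈ tsupport φ, η x = 1)
    (p : ι × Fin n) :
    |∫ x, radialGrad f' (G₀ x) p * fderiv ℝ φ x (stdVec s)| ≤
      √(24 * L * ((τ + 48 * L * c ^ 2 + 2 * c ^ 2) *
        (2 * Q + (volume.restrict K).real univ + 1))) * lpNorm φ 2 volume +
      √(∫ x in K, ‖radialGrad f' (g x) - radialGrad f' (G₀ x)‖ ^ 2) *
        lpNorm (fun x => fderiv ℝ φ x (stdVec s)) 2 volume := by
  have : IsFiniteMeasure (volume.restrict K) := ⟨by simpa using hK.measure_lt_top⟩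
  have hφK : tsupport φ ⊆ K := fun x hx => hηK (subset_tsupport _ (by simp [hηφ x hx]))
  have hA := h.memLp_two_radialGrad hv.memLp_grad
  have hA₀ : MemLp (fun x => radialGrad f' (G₀ x)) ∞ :=
    memLp_top_of_bound (h.continuous_radialGrad.comp_aestronglyMeasurable hG₀) L
      (ae_of_all _ fun x => h.norm_radialGrad_le _)
  have hcompare := abs_integral_coord_mul_le_add (hA.locallyIntegrable one_le_two)
    (hA₀.locallyIntegrable le_top)
    ((hA.restrict K).sub ((hA₀.restrict K).mono_exponent le_top))
    (continuous_fderiv_apply_of_contDiff hφ _) (hc.fderiv_apply (𝕜 := ℝ) (stdVec s))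
    (fun x hx => by simp [fderiv_of_notMem_tsupport (𝕜 := ℝ) fun hxφ => hx (hφK hxφ)]) p
  grw [hcompare, hη.abs_integral_coord_mul_fderiv_le hA
    (hsol.eventually_integral_sq_mul_sq_norm_diffQuot_le h hK hε hε1 hv hT hD hTD hη hηK s hτ
      hshift hQ hQ2) hφ hc hηφ p]

/- The Caccioppoli bound for the regularised stresses does not depend on `ε`, so it survives the
limit in which they converge to the stress of `G₀` in `L²(K)`. -/
theorem IsLinearGrowthIntegrand.exists_abs_integral_radialGrad_mul_fderiv_le
    (h : IsLinearGrowthIntegrand f f' L) (hK : IsCompact K) {U₀ : EVec n → EuclideanSpace ℝ ι}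
    (hw : HasWeakGradOn univ U₀ G₀)
    (hU₀ : Integrable U₀) (hG₀ : Integrable G₀) (hU₀c : HasCompactSupport U₀)
    (hG₀c : HasCompactSupport G₀)
    (hT : MemLp T 2) {θ θ' C : ℝ} (hθ : 0 ≤ θ) (hTθ : ∀ᵐ x ∂volume.restrict K, ‖T x‖ ≤ θ)
    (hθ' : θ < θ') (hC0 : 0 ≤ C) (hC : ∀ t, 0 ≤ t → θ' * t - C ≤ f t)
    (hEL : ∀ (ψ : EVec n → EuclideanSpace ℝ ι) (Dψ : EVec n → Jac ι n), MemH1Supp K ψ Dψ →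
      ∫ x, ⟪radialGrad f' (G₀ x) - T x, Dψ x⟫ = 0)
    (hD : MemLp D 2) (hTD : HasWeakDiv T D) (hη : IsCutoff η c) (hηK : tsupport η ⊆ K) (s : Fin n)
    (hτ : 0 ≤ τ) (hshift : ∀ᶠ t in 𝓝[>] (0 : ℝ), ∀ x ∈ tsupport η,
      x + t • stdVec s ∈ K ∧ ‖diffQuot t (stdVec s) D x‖ ≤ τ) :
    ∃ B, ∀ φ : EVec n → ℝ, ContDiff ℝ 1 φ → HasCompactSupport φ → (∀ x ∈ tsupport φ, η x = 1) →
      ∀ p, |∫ x, radialGrad f' (G₀ x) p * fderiv ℝ φ x (stdVec s)| ≤ B * lpNorm φ 2 volume := by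
  obtain ⟨Q, -, happrox⟩ := h.exists_regularised_approximation hK hw hU₀ hG₀ hU₀c hG₀c hT hθ hTθ hθ'
    hC0 hC hEL
  set B := √(24 * L * ((τ + 48 * L * c ^ 2 + 2 * c ^ 2) *
    (2 * Q + (volume.restrict K).real univ + 1)))
  refine ⟨B, fun φ hφ hc hηφ p => ?_⟩
  set M := lpNorm (fun x => fderiv ℝ φ x (stdVec s)) 2 volume
  refine ge_of_tendsto (x := 𝓝[>] (0 : ℝ))
    (f := fun δ => B * lpNorm φ 2 volume + √(Q * δ) * M) ?_ ?_
  · exact tendsto_nhdsWithin_of_tendsto_nhds (Continuous.tendsto' (by fun_prop) _ _ (by simp))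
  · filter_upwards [Ioc_mem_nhdsGT one_pos] with δ ⟨hδ, hδ1⟩
    obtain ⟨ε, hε, hε1, v, g, hv, hsol, hQ, hQ2, hclose⟩ := happrox δ hδ hδ1
    grw [hsol.abs_integral_radialGrad_mul_fderiv_le h hK hε.le hε1 hv hG₀.1 hT hD hTD hη hηK s hτ
      hshift hQ hQ2 hφ hc hηφ p, hclose]
    exact lpNorm_nonneg

end Regularised

end StressEstimate

/-! ### Localisation -/

section Cutoff

variable {n : ℕ} {ι : Type*} {ζ : EVec n → ℝ} {c : ℝ}

theorem gradient_of_notMem_tsupport {x : EVec n} (hx : x ∉ tsupport ζ) : gradient ζ x = 0 := by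
  rw [gradient, fderiv_of_notMem_tsupport ℝ hx, map_zero]

theorem hasCompactSupport_gradient (hζ : HasCompactSupport ζ) : HasCompactSupport (gradient ζ) :=
  hζ.mono' fun _ hx => not_imp_comm.1 gradient_of_notMem_tsupport hx

theorem exists_isCutoff_eventuallyEq_one {K K' : Set (EVec n)} (hK : IsClosed K)
    (hK' : IsCompact K') (hKK' : K ⊆ interior K') :
    ∃ η c, IsCutoff η c ∧ (∀ x ∈ K, ∀ᶠ y in 𝓝 x, η y = 1) ∧ tsupport η ⊆ K' := by
  obtain ⟨η, hη1, hη0, hη01⟩ := exists_contMDiffMap_one_nhds_of_subset_interior (n := 1)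
    (modelWithCornersSelf ℝ (EVec n)) hK hKK'
  have hη : ContDiff ℝ 1 η := η.contMDiff.contDiff
  have hηK' : tsupport η ⊆ K' :=
    closure_minimal (fun x hx => not_imp_comm.1 (hη0 x) hx) hK'.isClosed
  have hηc : HasCompactSupport η := hK'.of_isClosed_subset (isClosed_tsupport η) hηK'
  obtain ⟨c, hc⟩ := (continuous_gradient_of_contDiff hη).bounded_above_of_compact_support
    (hasCompactSupport_gradient hηc)
  exact ⟨η, c, ⟨hη, hηc, fun x => (hη01 x).1, fun x => (hη01 x).2, hc⟩,
    fun x hx => hη1.filter_mono (nhds_le_nhdsSet hx), hηK'⟩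

/- `η` localises the estimate to `K`, while `ζ` extends the data from `K'` to the whole space. -/
theorem exists_nested_isCutoff {K Ω : Set (EVec n)} (hK : IsCompact K) (hΩ : IsOpen Ω)
    (hKΩ : K ⊆ Ω) :
    ∃ K' ⊆ Ω, IsCompact K' ∧ (∃ η c, IsCutoff η c ∧ (∀ x ∈ K, η x = 1) ∧ tsupport η ⊆ interior K') ∧
      ∃ ζ c, IsCutoff ζ c ∧ (∀ x ∈ K', ∀ᶠ y in 𝓝 x, ζ y = 1) ∧ tsupport ζ ⊆ Ω := by
  obtain ⟨K₁, hK₁, hKK₁, hK₁Ω⟩ := exists_compact_between hK hΩ hKΩ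
  obtain ⟨K', hK', hK₁K', hK'Ω⟩ := exists_compact_between hK₁ hΩ hK₁Ω
  obtain ⟨K₃, hK₃, hK'K₃, hK₃Ω⟩ := exists_compact_between hK' hΩ hK'Ω
  obtain ⟨η, c, hη, hη1, hηK₁⟩ := exists_isCutoff_eventuallyEq_one hK.isClosed hK₁ hKK₁
  obtain ⟨ζ, c', hζ, hζ1, hζK₃⟩ := exists_isCutoff_eventuallyEq_one hK'.isClosed hK₃ hK'K₃
  exact ⟨K', hK'Ω, hK', ⟨η, c, hη, fun x hx => (hη1 x hx).self_of_nhds, hηK₁.trans hK₁K'⟩,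
    ζ, c', hζ, hζ1, hζK₃.trans hK₃Ω⟩

variable {U : EVec n → EuclideanSpace ℝ ι} {G : EVec n → Jac ι n}

theorem IsCutoff.integrable_smul_add_outer [Fintype ι] (hζ : IsCutoff ζ c) (hU : Integrable U)
    (hG : LocallyIntegrable G) :
    Integrable fun x => ζ x • G x + outer (U x) (gradient ζ x) := by
  refine (hG.integrable_smul_left_of_hasCompactSupport hζ.contDiff.continuous
    hζ.hasCompactSupport).add ((hU.norm.mul_const c).mono' ?_ (ae_of_all _ fun x => ?_))
  · exact continuous_outer.comp_aestronglyMeasurable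
      (hU.1.prodMk (continuous_gradient_of_contDiff hζ.contDiff).aestronglyMeasurable)
  · rw [norm_outer]
    gcongr
    exact hζ.norm_gradient_le x

theorem hasCompactSupport_smul_add_outer (hζ : HasCompactSupport ζ) :
    HasCompactSupport fun x => ζ x • G x + outer (U x) (gradient ζ x) := by
  refine hζ.mono' fun x => not_imp_comm.1 fun hx => ?_
  ext p
  simp [image_eq_zero_of_notMem_tsupport hx, gradient_of_notMem_tsupport hx]

theorem smul_add_outer_eq_of_eventually_eq_one {x : EVec n} (hx : ∀ᶠ y in 𝓝 x, ζ y = 1) :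
    ζ x • G x + outer (U x) (gradient ζ x) = G x := by
  have hgrad : gradient ζ x = 0 := by
    rw [gradient, EventuallyEq.fderiv_eq (f := fun _ => (1 : ℝ)) hx]
    simp
  ext p
  simp [hx.self_of_nhds, hgrad]

end Cutoff

section Divergence

theorem contDiff_smul_of_tsupport_subset {X E : Type*} [NormedAddCommGroup X] [NormedSpace ℝ X]
    [NormedAddCommGroup E] [NormedSpace ℝ E] {Ω : Set X} (hΩ : IsOpen Ω) {k : WithTop ℕ∞}
    {ζ : X → ℝ} (hζ : ContDiff ℝ k ζ) (hζΩ : tsupport ζ ⊆ Ω) {T : X → E}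
    (hT : ContDiffOn ℝ k T Ω) : ContDiff ℝ k fun x => ζ x • T x := by
  rw [contDiff_iff_contDiffAt]
  intro x
  by_cases hx : x ∈ tsupport ζ
  · exact hζ.contDiffAt.smul (hT.contDiffAt (hΩ.mem_nhds (hζΩ hx)))
  · refine contDiffAt_const (c := (0 : E)) |>.congr_of_eventuallyEq ?_
    filter_upwards [notMem_tsupport_iff_eventuallyEq.1 hx] with y hy
    simp [hy]

variable {n : ℕ} {ι : Type*} [Fintype ι] {T : EVec n → Jac ι n}

/-- The contraction of the derivative of a matrix field that produces its row-wise divergence. -/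
noncomputable def rowTrace : (EVec n →L[ℝ] Jac ι n) →L[ℝ] EuclideanSpace ℝ ι :=
  LinearMap.toContinuousLinearMap
    { toFun := fun B => WithLp.toLp 2 fun a => ∑ i, B (stdVec i) (a, i)
      map_add' := fun B B' => by ext a; simp [Finset.sum_add_distrib]
      map_smul' := fun c B => by ext a; simp [Finset.mul_sum] }

/-- The classical row-wise divergence of a differentiable matrix field. -/
noncomputable def divergence (T : EVec n → Jac ι n) (x : EVec n) : EuclideanSpace ℝ ι :=
  rowTrace (fderiv ℝ T x)

theorem fderiv_coord_apply (hT : ContDiff ℝ 1 T) (x e : EVec n) (p : ι × Fin n) :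
    fderiv ℝ (fun x => T x p) x e = fderiv ℝ T x e p := by
  have hT' := (hT.differentiable one_ne_zero x).hasFDerivAt
  exact congrArg (· e) ((EuclideanSpace.proj (𝕜 := ℝ) p).hasFDerivAt.comp x hT').fderiv

theorem divergence_apply (hT : ContDiff ℝ 1 T) (x : EVec n) (a : ι) :
    divergence T x a = ∑ i, fderiv ℝ (fun x => T x (a, i)) x (stdVec i) := by
  simp only [fderiv_coord_apply hT]
  rfl

theorem memLp_divergence (hT : ContDiff ℝ 1 T) (hTc : HasCompactSupport T) {q : ℝ≥0∞} :
    MemLp (divergence T) q :=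
  (rowTrace.continuous.comp (hT.continuous_fderiv one_ne_zero)).memLp_of_hasCompactSupport
    ((hTc.fderiv ℝ).comp_left rowTrace.map_zero)

theorem hasWeakDiv_divergence (hT : ContDiff ℝ 1 T) (hTc : HasCompactSupport T) :
    HasWeakDiv T (divergence T) := by
  intro ψ Dψ hψ
  have hTp (p : ι × Fin n) : ContDiff ℝ 1 fun x => T x p := by fun_prop
  have hTpc (p : ι × Fin n) : HasCompactSupport fun x => T x p :=
    hTc.comp_left (g := fun m : Jac ι n => m p) rfl
  have hint (a : ι) (i : Fin n) : Integrable fun x => Dψ x (a, i) * T x (a, i) :=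
    integrable_coord_mul_of_hasCompactSupport (hψ.memLp_grad.locallyIntegrable one_le_two)
      (hTp _).continuous (hTpc _) _
  have hint' (a : ι) (i : Fin n) :
      Integrable fun x => ψ x a * fderiv ℝ (fun x => T x (a, i)) x (stdVec i) :=
    integrable_coord_mul_fderiv (hψ.memLp.locallyIntegrable one_le_two) (hTp _) (hTpc _) _ _
  calc ∫ x, ⟪T x, Dψ x⟫
      = ∫ x, ∑ a, ∑ i, Dψ x (a, i) * T x (a, i) := by
        simp only [PiLp.inner_apply, Fintype.sum_prod_type, Real.inner_apply, mul_comm]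
    _ = ∑ a, ∑ i, ∫ x, Dψ x (a, i) * T x (a, i) := by
        rw [integral_finsetSum _ fun a _ => integrable_finsetSum _ fun i _ => hint a i]
        exact Finset.sum_congr rfl fun a _ => integral_finsetSum _ fun i _ => hint a i
    _ = -∑ a, ∑ i, ∫ x, ψ x a * fderiv ℝ (fun x => T x (a, i)) x (stdVec i) := by
        simp only [hψ.hasWeakGradOn _ (hTp _) (hTpc _) (subset_univ _), Finset.sum_neg_distrib,
          neg_neg]
    _ = -∫ x, ∑ a, ∑ i, ψ x a * fderiv ℝ (fun x => T x (a, i)) x (stdVec i) := by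
        rw [integral_finsetSum _ fun a _ => integrable_finsetSum _ fun i _ => hint' a i]
        exact congrArg _ (Finset.sum_congr rfl fun a _ =>
          (integral_finsetSum _ fun i _ => hint' a i).symm)
    _ = -∫ x, ⟪divergence T x, ψ x⟫ := by
        simp only [PiLp.inner_apply, Real.inner_apply, divergence_apply hT, Finset.mul_sum,
          mul_comm]

theorem norm_diffQuot_le_of_lipschitzOnWith {X E : Type*} [NormedAddCommGroup X] [NormedSpace ℝ X]
    [NormedAddCommGroup E] [NormedSpace ℝ E] {C : NNReal} {a : X → E} {S : Set X}
    (ha : LipschitzOnWith C a S) {x e : X} {t : ℝ} (hx : x ∈ S) (hxt : x + t • e ∈ S) :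
    ‖diffQuot t e a x‖ ≤ C * ‖e‖ := by
  rcases eq_or_ne t 0 with rfl | ht
  · simpa [diffQuot] using (by positivity : 0 ≤ C * ‖e‖)
  · rw [diffQuot, norm_smul, norm_inv]
    grw [ha.norm_sub_le hxt hx]
    rw [add_sub_cancel_left, norm_smul]
    field_simp [norm_ne_zero_iff.2 ht]
    rfl

theorem lipschitzOnWith_divergence {C : NNReal} {S : Set (EVec n)} {T' : EVec n → Jac ι n}
    (hT : LipschitzOnWith C (fderiv ℝ T) S) (hTT' : ∀ x ∈ S, T' =ᶠ[𝓝 x] T) :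
    LipschitzOnWith (‖rowTrace (n := n) (ι := ι)‖₊ * C) (divergence T') S := by
  intro x hx y hy
  simpa [divergence, (hTT' x hx).fderiv_eq, (hTT' y hy).fderiv_eq] using
    rowTrace.lipschitz.comp_lipschitzOnWith hT hx hy

theorem abs_integral_mul_fderiv_le_of_contDiff {τ φ : EVec n → ℝ} (hτ : ContDiff ℝ 1 τ)
    (hτc : HasCompactSupport τ) (hφ : ContDiff ℝ 1 φ) (hφc : HasCompactSupport φ) (e : EVec n) :
    |∫ x, τ x * fderiv ℝ φ x e| ≤
      lpNorm (fun x => fderiv ℝ τ x e) 2 volume * lpNorm φ 2 volume := by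
  have hdτ := continuous_fderiv_apply_of_contDiff hτ e
  have hdφ := continuous_fderiv_apply_of_contDiff hφ e
  rw [integral_mul_fderiv_eq_neg_fderiv_mul_of_integrable
    ((hdτ.mul hφ.continuous).integrable_of_hasCompactSupport hφc.mul_left)
    ((hτ.continuous.mul hdφ).integrable_of_hasCompactSupport hτc.mul_right)
    ((hτ.continuous.mul hφ.continuous).integrable_of_hasCompactSupport hτc.mul_right)
    (fun x _ => hτ.differentiable one_ne_zero x) (fun x _ => hφ.differentiable one_ne_zero x),
    abs_neg]
  exact abs_integral_mul_le_lpNorm_mul_lpNorm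
    (hdτ.memLp_of_hasCompactSupport (hτc.fderiv_apply (𝕜 := ℝ) e))
    (hφ.continuous.memLp_of_hasCompactSupport hφc)

end Divergence

section Shift


theorem eventually_forall_add_smul_mem {X : Type*} [NormedAddCommGroup X] [NormedSpace ℝ X]
    {S K : Set X} (hS : IsCompact S) (hSK : S ⊆ interior K) (e : X) :
    ∀ᶠ t in 𝓝 (0 : ℝ), ∀ x ∈ S, x + t • e ∈ K := by
  refine hS.eventually_forall_of_forall_eventually fun x hx => ?_
  have hcont : Continuous fun q : ℝ × X => q.2 + q.1 • e := by fun_prop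
  have hmem : ∀ᶠ y in 𝓝 (x + (0 : ℝ) • e), y ∈ K := by
    rw [zero_smul, add_zero]
    exact mem_interior_iff_mem_nhds.1 (hSK hx)
  exact hcont.tendsto (0, x) hmem

theorem eventually_forall_add_smul_mem_and_norm_diffQuot_le {X E : Type*} [NormedAddCommGroup X]
    [NormedSpace ℝ X] [NormedAddCommGroup E] [NormedSpace ℝ E] {S K : Set X} (hS : IsCompact S)
    (hSK : S ⊆ interior K) {C : NNReal} {a : X → E} (ha : LipschitzOnWith C a K) (e : X) :
    ∀ᶠ t in 𝓝[>] (0 : ℝ), ∀ x ∈ S, x + t • e ∈ K ∧ ‖diffQuot t e a x‖ ≤ C * ‖e‖ := by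
  filter_upwards [nhdsWithin_le_nhds (eventually_forall_add_smul_mem hS hSK e)] with t ht x hx
  exact ⟨ht x hx,
    norm_diffQuot_le_of_lipschitzOnWith ha (interior_subset (hSK hx)) (ht x hx)⟩

end Shift

section L2BoundedDeriv

theorem integrable_mul_of_integrableOn_tsupport {X : Type*} [TopologicalSpace X] [T2Space X]
    [MeasurableSpace X] [OpensMeasurableSpace X] {μ : Measure X} {a ψ : X → ℝ}
    (ha : IntegrableOn a (tsupport ψ) μ) (hψ : Continuous ψ) (hc : HasCompactSupport ψ) :
    Integrable (fun x => a x * ψ x) μ :=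
  (integrableOn_iff_integrable_of_support_subset
    ((Function.support_mul_subset_right a ψ).trans (subset_tsupport ψ))).1
    (ha.mul_continuousOn hψ.continuousOn hc)

variable {X : Type*} [NormedAddCommGroup X] [NormedSpace ℝ X] [MeasurableSpace X]
  {μ : Measure X} {e : X} {a b : X → ℝ} {K Ω : Set X}

/-- The distributional derivative of `a` in the direction `e` is a bounded functional with respect
to the `L²(μ)` norm of the test functions supported in `K`. -/
def HasL2BoundedDeriv (μ : Measure X) (e : X) (a : X → ℝ) (K : Set X) : Prop :=
  ∃ B, ∀ φ : X → ℝ, ContDiff ℝ 1 φ → HasCompactSupport φ → tsupport φ ⊆ K →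
    |∫ x, a x * fderiv ℝ φ x e ∂μ| ≤ B * lpNorm φ 2 μ

namespace HasL2BoundedDeriv

theorem congr (h : HasL2BoundedDeriv μ e a K) (hab : EqOn a b K) : HasL2BoundedDeriv μ e b K := by
  obtain ⟨B, hB⟩ := h
  refine ⟨B, fun φ hφ hc hφK => ?_⟩
  convert hB φ hφ hc hφK using 4 with x
  by_cases hx : x ∈ tsupport φ
  · rw [hab (hφK hx)]
  · simp [fderiv_of_notMem_tsupport ℝ hx]

theorem sub [OpensMeasurableSpace X] (h : HasL2BoundedDeriv μ e a K)
    (h' : HasL2BoundedDeriv μ e b K) (ha : IntegrableOn a K μ) (hb : IntegrableOn b K μ) :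
    HasL2BoundedDeriv μ e (fun x => a x - b x) K := by
  obtain ⟨B, hB⟩ := h
  obtain ⟨B', hB'⟩ := h'
  refine ⟨B + B', fun φ hφ hc hφK => ?_⟩
  have hdφ := continuous_fderiv_apply_of_contDiff hφ e
  have hdφc := hc.fderiv_apply (𝕜 := ℝ) e
  have hdφK : tsupport (fun x => fderiv ℝ φ x e) ⊆ K :=
    (tsupport_fderiv_apply_subset ℝ e).trans hφK
  simp only [sub_mul]
  rw [integral_sub (integrable_mul_of_integrableOn_tsupport (ha.mono_set hdφK) hdφ hdφc)
    (integrable_mul_of_integrableOn_tsupport (hb.mono_set hdφK) hdφ hdφc)]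
  grw [abs_sub, hB φ hφ hc hφK, hB' φ hφ hc hφK, add_mul]

theorem restrict [OpensMeasurableSpace X] (h : HasL2BoundedDeriv μ e a K) (hKΩ : K ⊆ Ω) :
    HasL2BoundedDeriv (μ.restrict Ω) e a K := by
  obtain ⟨B, hB⟩ := h
  refine ⟨B, fun φ hφ hc hφK => ?_⟩
  have hφΩ : tsupport φ ⊆ Ω := hφK.trans hKΩ
  have hφμ := hφ.continuous.aestronglyMeasurable (μ := μ)
  rw [setIntegral_eq_integral_of_forall_compl_eq_zero fun x hx => by
      simp [fderiv_of_notMem_tsupport ℝ fun h => hx (hφΩ h)], ← toReal_eLpNorm hφμ.restrict,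
    eLpNorm_restrict_eq_of_support_subset ((subset_tsupport φ).trans hφΩ), toReal_eLpNorm hφμ]
  exact hB φ hφ hc hφK

end HasL2BoundedDeriv

end L2BoundedDeriv

section LocalEstimate

variable {n : ℕ} {ι : Type*} [Fintype ι] {Ω K : Set (EVec n)} {T G : EVec n → Jac ι n}

theorem MemH1Supp.integral_inner_congr {ψ : EVec n → EuclideanSpace ℝ ι} {a b Dψ : EVec n → Jac ι n}
    (hψ : MemH1Supp K ψ Dψ) (hab : ∀ x ∈ K, a x = b x) :
    ∫ x, ⟪a x, Dψ x⟫ = ∫ x, ⟪b x, Dψ x⟫ := by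
  refine integral_congr_ae (hψ.ae_eq_zero.mono fun x hx => ?_)
  by_cases hxK : x ∈ K
  · simp only [hab x hxK]
  · simp [(hx hxK).2]

theorem hasL2BoundedDeriv_of_contDiffOn {τ : EVec n → ℝ} (hΩ : IsOpen Ω)
    (hτ : ContDiffOn ℝ 1 τ Ω) (hK : IsCompact K) (hKΩ : K ⊆ Ω) (e : EVec n) :
    HasL2BoundedDeriv volume e τ K := by
  obtain ⟨K', hK', hKK', hK'Ω⟩ := exists_compact_between hK hΩ hKΩ
  obtain ⟨ζ, _, hζ, hζ1, hζK'⟩ := exists_isCutoff_eventuallyEq_one hK.isClosed hK' hKK'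
  have hζτ := contDiff_smul_of_tsupport_subset hΩ hζ.contDiff (hζK'.trans hK'Ω) hτ
  have hbound : HasL2BoundedDeriv volume e (fun x => ζ x • τ x) K :=
    ⟨_, fun φ hφ hc _ => abs_integral_mul_fderiv_le_of_contDiff hζτ
      hζ.hasCompactSupport.smul_right hφ hc e⟩
  exact hbound.congr fun x hx => by simp [(hζ1 x hx).self_of_nhds]

variable {f f' : ℝ → ℝ} {L θ θ' C₀ : ℝ} {C : NNReal} {U : EVec n → EuclideanSpace ℝ ι}

namespace IsLinearGrowthIntegrand

theorem hasL2BoundedDeriv_radialGrad (h : IsLinearGrowthIntegrand f f' L)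
    (hΩ : IsOpen Ω) (hw : HasWeakGradOn Ω U G) (hU : Integrable U) (hG : Integrable G)
    (hT : ContDiffOn ℝ 1 T Ω) (hDT : LipschitzOnWith C (fderiv ℝ T) Ω) (hθ : 0 ≤ θ)
    (hTθ : ∀ᵐ x ∂volume.restrict Ω, ‖T x‖ ≤ θ) (hθ' : θ < θ') (hC₀ : 0 ≤ C₀)
    (hf : ∀ t, 0 ≤ t → θ' * t - C₀ ≤ f t)
    (hEL : ∀ S ⊆ Ω, IsCompact S → ∀ ψ Dψ, MemH1Supp S ψ Dψ →
      ∫ x, ⟪radialGrad f' (G x) - T x, Dψ x⟫ = 0)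
    (hK : IsCompact K) (hKΩ : K ⊆ Ω) (s : Fin n) (p : ι × Fin n) :
    HasL2BoundedDeriv volume (stdVec s) (fun x => radialGrad f' (G x) p) K := by
  obtain ⟨K', hK'Ω, hK', ⟨η, c, hη, hη1, hηK'⟩, ζ, c', hζ, hζ1, hζΩ⟩ :=
    exists_nested_isCutoff hK hΩ hKΩ
  set G₀ : EVec n → Jac ι n := fun x => ζ x • G x + outer (U x) (gradient ζ x)
  set T' : EVec n → Jac ι n := fun x => ζ x • T x
  have hG₀ (x) (hx : x ∈ K') : G₀ x = G x := smul_add_outer_eq_of_eventually_eq_one (hζ1 x hx)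
  have hTT' (x) (hx : x ∈ K') : T' =ᶠ[𝓝 x] T := by
    filter_upwards [hζ1 x hx] with y hy
    simp [T', hy]
  have hT' : ContDiff ℝ 1 T' := contDiff_smul_of_tsupport_subset hΩ hζ.contDiff hζΩ hT
  have hT'c : HasCompactSupport T' := hζ.hasCompactSupport.smul_right
  have hEL' (ψ Dψ) (hψ : MemH1Supp K' ψ Dψ) :
      ∫ x, ⟪radialGrad f' (G₀ x) - T' x, Dψ x⟫ = 0 := by
    rw [← hEL K' hK'Ω hK' ψ Dψ hψ]
    exact hψ.integral_inner_congr fun x hx => by rw [hG₀ x hx, (hTT' x hx).eq_of_nhds]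
  have hT'θ : ∀ᵐ x ∂volume.restrict K', ‖T' x‖ ≤ θ := by
    filter_upwards [ae_restrict_of_ae_restrict_of_subset hK'Ω hTθ,
      ae_restrict_mem hK'.measurableSet] with x hx hxK
    rwa [(hTT' x hxK).eq_of_nhds]
  obtain ⟨B, hB⟩ := h.exists_abs_integral_radialGrad_mul_fderiv_le hK'
    (hw.smul_of_hasCompactSupport hU.locallyIntegrable hG.locallyIntegrable hζ.contDiff
      hζ.hasCompactSupport hζΩ)
    (hU.locallyIntegrable.integrable_smul_left_of_hasCompactSupport hζ.contDiff.continuous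
      hζ.hasCompactSupport)
    (hζ.integrable_smul_add_outer hU hG.locallyIntegrable) hζ.hasCompactSupport.smul_right
    (hasCompactSupport_smul_add_outer hζ.hasCompactSupport)
    (hT'.continuous.memLp_of_hasCompactSupport hT'c) hθ hT'θ hθ' hC₀ hf hEL'
    (memLp_divergence hT' hT'c) (hasWeakDiv_divergence hT' hT'c) hη
    (hηK'.trans interior_subset) s (by positivity)
    (eventually_forall_add_smul_mem_and_norm_diffQuot_le hη.hasCompactSupport hηK'
      (lipschitzOnWith_divergence (hDT.mono hK'Ω) hTT') _)
  have hbound : HasL2BoundedDeriv volume (stdVec s) (fun x => radialGrad f' (G₀ x) p) K :=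
    ⟨B, fun φ hφ hc hφK => hB φ hφ hc (fun x hx => hη1 x (hφK hx)) p⟩
  have hKK' : K ⊆ K' := fun x hx =>
    interior_subset (hηK' (subset_tsupport _ (by simp [hη1 x hx])))
  exact hbound.congr fun x hx => by simp only [hG₀ x (hKK' hx)]

end IsLinearGrowthIntegrand

end LocalEstimate

section Transfer

variable {n : ℕ} {ι : Type*} [Fintype ι] {Ω S : Set (EVec n)}

theorem HasWeakDerivOn.hasWeakGradOn_indicator {u : EVec n → ι → ℝ} {Du : EVec n → ι → Fin n → ℝ}
    (hΩ : MeasurableSet Ω) (hu : HasWeakDerivOn Ω u Du) :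
    HasWeakGradOn Ω (Ω.indicator fun x => WithLp.toLp 2 (u x))
      (Ω.indicator fun x => flatten (Du x)) := by
  intro φ hφ hc hφΩ a i
  have hleft : ∫ x, Ω.indicator (fun x => WithLp.toLp 2 (u x)) x a * fderiv ℝ φ x (stdVec i)
      = ∫ x in Ω, u x a * fderiv ℝ φ x (stdVec i) := by
    rw [← integral_indicator hΩ]
    congr 1 with x
    by_cases hx : x ∈ Ω <;> simp [hx]
  have hright : ∫ x, Ω.indicator (fun x => flatten (Du x)) x (a, i) * φ x
      = ∫ x in Ω, Du x a i * φ x := by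
    rw [← integral_indicator hΩ]
    congr 1 with x
    by_cases hx : x ∈ Ω <;> simp [hx]
  rw [hleft, hright]
  exact hu.2.2 φ hφ hc hφΩ a i

theorem MemH1Supp.hasWeakDerivOn {ψ : EVec n → EuclideanSpace ℝ ι} {Dψ : EVec n → Jac ι n}
    (hψ : MemH1Supp S ψ Dψ) (hS : IsCompact S) :
    HasWeakDerivOn Ω (fun x => (ψ x).ofLp) fun x => flatten.symm (Dψ x) := by
  have : IsFiniteMeasure (volume.restrict S) := ⟨by simpa using hS.measure_lt_top⟩
  have hψi : Integrable ψ := IntegrableOn.integrable_of_ae_notMem_eq_zero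
    ((hψ.memLp.restrict S).integrable one_le_two) (hψ.ae_eq_zero.mono fun x hx hxS => (hx hxS).1)
  have hDψi : Integrable Dψ := IntegrableOn.integrable_of_ae_notMem_eq_zero
    ((hψ.memLp_grad.restrict S).integrable one_le_two)
    (hψ.ae_eq_zero.mono fun x hx hxS => (hx hxS).2)
  refine ⟨((EuclideanSpace.equiv ι ℝ).toContinuousLinearMap.integrable_comp hψi).integrableOn,
    (flatten.symm.toContinuousLinearMap.integrable_comp hDψi).integrableOn,
    fun φ hφ hc hφΩ a i => ?_⟩
  rw [setIntegral_eq_integral_of_forall_compl_eq_zero fun x hx => by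
      simp [fderiv_of_notMem_tsupport ℝ fun h => hx (hφΩ h)],
    setIntegral_eq_integral_of_forall_compl_eq_zero fun x hx => by
      simp [image_eq_zero_of_notMem_tsupport fun h => hx (hφΩ h)]]
  exact hψ.hasWeakGradOn φ hφ hc (subset_univ _) a i

variable {N : ℕ} {T₀ : EVec n → Fin N → Fin n → ℝ}

theorem exists_lipschitzOnWith_fderiv_flatten_of_memW2inf (hΩ : IsOpen Ω) (hT : MemW2inf Ω T₀) :
    ∃ C, LipschitzOnWith C (fderiv ℝ fun x => flatten (T₀ x)) Ω := by
  obtain ⟨C, DT, -, hderiv, -, hLip⟩ := hT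
  let A := (flatten (ι := Fin N) (κ := Fin n)).toContinuousLinearMap
  have hfderiv (x) (hx : x ∈ Ω) : fderiv ℝ (fun x => flatten (T₀ x)) x = A.comp (DT x) :=
    (A.hasFDerivAt.comp x ((hderiv x hx).hasFDerivAt (hΩ.mem_nhds hx))).fderiv
  have hcomp := (ContinuousLinearMap.compL ℝ (EVec n) _ _ A).lipschitz.comp_lipschitzOnWith hLip
  refine ⟨‖ContinuousLinearMap.compL ℝ (EVec n) _ _ A‖₊ * C, fun x hx y hy => ?_⟩
  rw [hfderiv x hx, hfderiv y hy]
  exact hcomp hx hy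

theorem contDiffOn_flatten_of_memW2inf (hΩ : IsOpen Ω) (hT : MemW2inf Ω T₀) :
    ContDiffOn ℝ 1 (fun x => flatten (T₀ x)) Ω := by
  obtain ⟨C, hC⟩ := exists_lipschitzOnWith_fderiv_flatten_of_memW2inf hΩ hT
  obtain ⟨-, DT, -, hderiv, -⟩ := hT
  rw [show (1 : WithTop ℕ∞) = 0 + 1 from (zero_add 1).symm, contDiffOn_succ_iff_fderiv_of_isOpen hΩ]
  exact ⟨fun x hx => (flatten.toContinuousLinearMap.hasFDerivAt.comp_hasFDerivWithinAt x
    (hderiv x hx)).differentiableWithinAt, by simp, contDiffOn_zero.2 hC.continuousOn⟩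

theorem exists_ae_norm_flatten_le_of_linfNormOn_lt {M : ℝ}
    (hT : linfNormOn Ω T₀ < ENNReal.ofReal M) :
    ∃ θ, 0 ≤ θ ∧ θ < M ∧ ∀ᵐ x ∂volume.restrict Ω, ‖flatten (T₀ x)‖ ≤ θ := by
  refine ⟨(linfNormOn Ω T₀).toReal, ENNReal.toReal_nonneg,
    (ENNReal.lt_ofReal_iff_toReal_lt hT.ne_top).1 hT, ?_⟩
  filter_upwards [ENNReal.ae_le_essSup (μ := volume.restrict Ω)
    fun x => ENNReal.ofReal (mnorm (T₀ x))] with x hx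
  rw [← mnorm_eq_norm_flatten]
  exact (ENNReal.ofReal_le_iff_le_toReal hT.ne_top).1 hx

variable {f f' : ℝ → ℝ} {L finf : ℝ} {u : EVec n → Fin N → ℝ} {Du : EVec n → Fin N → Fin n → ℝ}

theorem MemLinfPerp.integral_inner_radialGrad_sub_eq_zero
    (hσ : MemLinfPerp Ω fun x => Amap f' (Du x) - T₀ x) (hS : IsCompact S) (hSΩ : S ⊆ Ω)
    {ψ : EVec n → EuclideanSpace ℝ (Fin N)} {Dψ : EVec n → Jac (Fin N) n}
    (hψ : MemH1Supp S ψ Dψ) :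
    ∫ x, ⟪radialGrad f' (Ω.indicator (fun x => flatten (Du x)) x) - flatten (T₀ x), Dψ x⟫ = 0 := by
  have hperp := hσ.2.2 _ _ (hψ.hasWeakDerivOn hS)
  simp only [mdot_eq_inner_flatten, map_sub, flatten_Amap,
    ContinuousLinearEquiv.apply_symm_apply] at hperp
  rw [← hperp, setIntegral_eq_integral_of_ae_compl_eq_zero]
  · exact hψ.integral_inner_congr fun x hx => by rw [indicator_of_mem (hSΩ hx)]
  · filter_upwards [hψ.ae_eq_zero] with x hx hxΩ
    simp [(hx fun hxS => hxΩ (hSΩ hxS)).2]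

theorem IsLinearGrowthIntegrand.hasL2BoundedDeriv_stress (h : IsLinearGrowthIntegrand f f' L)
    (hΩ : IsOpen Ω) (hfinf : Tendsto (fun t => f t / t) atTop (𝓝 finf)) (hT : MemW2inf Ω T₀)
    (hTfinf : linfNormOn Ω T₀ < ENNReal.ofReal finf) (hu : HasWeakDerivOn Ω u Du)
    (hσ : MemLinfPerp Ω fun x => Amap f' (Du x) - T₀ x) {K : Set (EVec n)} (hK : IsCompact K)
    (hKΩ : K ⊆ Ω) (s : Fin n) (p : Fin N × Fin n) :
    HasL2BoundedDeriv (volume.restrict Ω) (stdVec s)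
      (fun x => (Amap f' (Du x) - T₀ x) p.1 p.2) K := by
  obtain ⟨θ, hθ, hθfinf, hTθ⟩ := exists_ae_norm_flatten_le_of_linfNormOn_lt hTfinf
  obtain ⟨θ', hθθ', hθ'finf⟩ := exists_between hθfinf
  obtain ⟨C₀, hC₀, hf⟩ := h.exists_linear_le hfinf hθ'finf (hθ.trans hθθ'.le)
  obtain ⟨C, hC⟩ := exists_lipschitzOnWith_fderiv_flatten_of_memW2inf hΩ hT
  have hTC1 := contDiffOn_flatten_of_memW2inf hΩ hT
  have hU : Integrable (Ω.indicator fun x => WithLp.toLp 2 (u x)) :=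
    IntegrableOn.integrable_indicator ((EuclideanSpace.equiv (Fin N) ℝ).symm.toContinuousLinearMap
      |>.integrable_comp hu.1) hΩ.measurableSet
  have hG : Integrable (Ω.indicator fun x => flatten (Du x)) :=
    IntegrableOn.integrable_indicator (integrable_flatten hu.2.1) hΩ.measurableSet
  have hA := h.hasL2BoundedDeriv_radialGrad hΩ (hu.hasWeakGradOn_indicator hΩ.measurableSet) hU hG
    hTC1 hC hθ hTθ hθθ' hC₀ hf
    (fun S hSΩ hS ψ Dψ hψ => hσ.integral_inner_radialGrad_sub_eq_zero hS hSΩ hψ) hK hKΩ s p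
  have hTp : ContDiffOn ℝ 1 (fun x => flatten (T₀ x) p) Ω :=
    (EuclideanSpace.proj (𝕜 := ℝ) p).contDiff.comp_contDiffOn hTC1
  have hA' : IntegrableOn (fun x => radialGrad f' (Ω.indicator (fun x => flatten (Du x)) x) p) K :=
    ((EuclideanSpace.proj (𝕜 := ℝ) p).integrable_comp
      (memLp_one_iff_integrable.1 (h.lipschitzWith_radialGrad.comp_memLp (radialGrad_zero f')
        (memLp_one_iff_integrable.2 hG)))).integrableOn
  refine ((hA.sub (hasL2BoundedDeriv_of_contDiffOn hΩ hTp hK hKΩ _) hA'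
    ((hTp.continuousOn.mono hKΩ).integrableOn_compact hK)).congr fun x hx => ?_).restrict hKΩ
  simp [indicator_of_mem (hKΩ hx), ← flatten_Amap]

end Transfer

/-! ### Representation of weak derivatives in `L²_loc` -/

section WeakDerivRepresentation

theorem exists_forall_eq_inner_of_abs_le {M H : Type*} [AddCommGroup M] [Module ℝ M]
    [NormedAddCommGroup H] [InnerProductSpace ℝ H] [CompleteSpace H] (j : M →ₗ[ℝ] H)
    (ℓ : M →ₗ[ℝ] ℝ) {C : ℝ} (h : ∀ m, |ℓ m| ≤ C * ‖j m‖) : ∃ d : H, ∀ m, ℓ m = ⟪d, j m⟫ := by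
  obtain ⟨r, hr⟩ := j.rangeRestrict.exists_rightInverse_of_surjective j.range_rangeRestrict
  have hjr (y) : j (r y) = y := congrArg Subtype.val (LinearMap.congr_fun hr y)
  let g : LinearMap.range j →L[ℝ] ℝ :=
    (ℓ.comp r).mkContinuous C fun y => by simpa [hjr] using h (r y)
  obtain ⟨G, hG, -⟩ := exists_extension_norm_eq (LinearMap.range j) g
  refine ⟨(InnerProductSpace.toDual ℝ H).symm G, fun m => ?_⟩
  have hker := h (m - r (j.rangeRestrict m))
  rw [map_sub, map_sub, hjr, LinearMap.codRestrict_apply, sub_self, norm_zero, mul_zero,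
    abs_nonpos_iff, sub_eq_zero] at hker
  rw [InnerProductSpace.toDual_symm_apply, hker]
  exact (hG (j.rangeRestrict m)).symm

theorem exists_forall_ae_eq_of_forall_le {α β : Type*} [MeasurableSpace α] [Nonempty β]
    {μ : Measure α} {V : ℕ → Set α} {d : ℕ → α → β}
    (h : ∀ i j, i ≤ j → ∀ᵐ x ∂μ, x ∈ V i → d i x = d j x) :
    ∃ D : α → β, ∀ j, ∀ᵐ x ∂μ, x ∈ V j → D x = d j x := by
  classical
  refine ⟨fun x => if hx : ∃ j, x ∈ V j then d (Nat.find hx) x else Classical.arbitrary β,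
    fun j => ?_⟩
  have hle : ∀ᵐ x ∂μ, ∀ i ≤ j, x ∈ V i → d i x = d j x := by
    simpa only [eventually_countable_forall] using fun i hi => h i j hi
  filter_upwards [hle] with x hx hxj
  have hex : ∃ j, x ∈ V j := ⟨j, hxj⟩
  rw [dif_pos hex]
  exact hx _ (Nat.find_min' hex hxj) (Nat.find_spec hex)

theorem exists_monotone_isOpen_subset_isCompact {Y : Type*} [TopologicalSpace Y]
    [LocallyCompactSpace Y] [SecondCountableTopology Y] {Ω : Set Y} (hΩ : IsOpen Ω) :
    ∃ V K : ℕ → Set Y, (∀ j, IsOpen (V j)) ∧ (∀ j, V j ⊆ K j) ∧ (∀ j, IsCompact (K j)) ∧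
      (∀ j, K j ⊆ Ω) ∧ Monotone V ∧ Ω ⊆ ⋃ j, V j := by
  have : LocallyCompactSpace Ω := hΩ.locallyCompactSpace
  let E : CompactExhaustion Ω := CompactExhaustion.choice Ω
  refine ⟨fun j => Subtype.val '' interior (E j), fun j => Subtype.val '' E j,
    fun j => hΩ.isOpenMap_subtype_val _ isOpen_interior, fun j => image_mono interior_subset,
    fun j => (E.isCompact j).image continuous_subtype_val, fun j => Subtype.coe_image_subset Ω _,
    fun i j hij => image_mono (interior_mono (E.subset hij)), fun x hx => ?_⟩
  obtain ⟨j, hj⟩ := E.exists_mem ⟨x, hx⟩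
  exact mem_iUnion.2 ⟨j + 1, ⟨x, hx⟩, E.subset_interior_succ j hj, rfl⟩

variable {X : Type*} [NormedAddCommGroup X] [NormedSpace ℝ X]

/-- The space of compactly supported `C¹` test functions with support in `K`. -/
def testFunctions (K : Set X) : Submodule ℝ (X → ℝ) where
  carrier := {φ | ContDiff ℝ 1 φ ∧ HasCompactSupport φ ∧ tsupport φ ⊆ K}
  add_mem' ha hb := ⟨ha.1.add hb.1, ha.2.1.add hb.2.1,
    (tsupport_add _ _).trans (union_subset ha.2.2 hb.2.2)⟩
  zero_mem' := ⟨contDiff_const, HasCompactSupport.zero, by simp⟩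
  smul_mem' c _ h := ⟨contDiff_const.smul h.1, h.2.1.smul_left (f := fun _ => c),
    (tsupport_smul_subset_right (fun _ => c) _).trans h.2.2⟩

variable [MeasurableSpace X] {μ : Measure X} {e : X} {a g g' : X → ℝ} {K V Ω : Set X}

theorem HasWeakDirDerivOn.mono {V W : Set X} (h : HasWeakDirDerivOn μ e a g W) (hVW : V ⊆ W) :
    HasWeakDirDerivOn μ e a g V :=
  fun φ hφ hc hφV => h φ hφ hc (hφV.trans hVW)

variable [BorelSpace X]

theorem exists_linearMap_integral_mul_fderiv (ha : IntegrableOn a K μ) (e : X) :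
    ∃ ℓ : testFunctions K →ₗ[ℝ] ℝ, ∀ φ, ℓ φ = ∫ x, a x * fderiv ℝ (φ : X → ℝ) x e ∂μ := by
  have hint (φ : testFunctions K) : Integrable (fun x => a x * fderiv ℝ (φ : X → ℝ) x e) μ :=
    integrable_mul_of_integrableOn_tsupport
      (ha.mono_set ((tsupport_fderiv_apply_subset ℝ e).trans φ.2.2.2))
      (continuous_fderiv_apply_of_contDiff φ.2.1 e) (φ.2.2.1.fderiv_apply (𝕜 := ℝ) e)
  have hdiff (φ : testFunctions K) (x) : DifferentiableAt ℝ (φ : X → ℝ) x :=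
    φ.2.1.differentiable one_ne_zero x
  refine ⟨{ toFun := fun φ => ∫ x, a x * fderiv ℝ (φ : X → ℝ) x e ∂μ, map_add' := ?_,
            map_smul' := ?_ }, fun _ => rfl⟩
  · intro φ ψ
    rw [← integral_add (hint φ) (hint ψ)]
    congr 1 with x
    simp [fderiv_add (hdiff φ x) (hdiff ψ x), mul_add]
  · intro c φ
    rw [RingHom.id_apply, smul_eq_mul, ← integral_const_mul]
    congr 1 with x
    simp [fderiv_const_smul (hdiff φ x), mul_left_comm]

variable [IsFiniteMeasureOnCompacts μ]

theorem memLp_of_mem_testFunctions (φ : testFunctions K) : MemLp (φ : X → ℝ) 2 μ :=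
  φ.2.1.continuous.memLp_of_hasCompactSupport φ.2.2.1

theorem HasL2BoundedDeriv.exists_memLp_hasWeakDirDerivOn (h : HasL2BoundedDeriv μ e a K)
    (ha : IntegrableOn a K μ) : ∃ g, MemLp g 2 μ ∧ HasWeakDirDerivOn μ e a g K := by
  obtain ⟨B, hB⟩ := h
  obtain ⟨ℓ, hℓ⟩ := exists_linearMap_integral_mul_fderiv ha e
  let j : testFunctions K →ₗ[ℝ] Lp ℝ 2 μ :=
    { toFun := fun φ => (memLp_of_mem_testFunctions φ).toLp
      map_add' := fun _ _ => rfl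
      map_smul' := fun _ _ => rfl }
  have hj (φ) : j φ =ᵐ[μ] φ := (memLp_of_mem_testFunctions φ).coeFn_toLp
  obtain ⟨d, hd⟩ := exists_forall_eq_inner_of_abs_le j ℓ (C := B) fun φ => by
    rw [hℓ, Lp.norm_def, eLpNorm_congr_ae (hj φ),
      toReal_eLpNorm (memLp_of_mem_testFunctions φ).aestronglyMeasurable]
    exact hB φ φ.2.1 φ.2.2.1 φ.2.2.2
  refine ⟨fun x => -d x, (Lp.memLp d).neg, fun φ hφ hc hφK => ?_⟩
  have hφd := hd ⟨φ, hφ, hc, hφK⟩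
  rw [hℓ, L2.inner_def] at hφd
  rw [hφd, ← integral_neg]
  refine integral_congr_ae ((hj ⟨φ, hφ, hc, hφK⟩).mono fun x hx => ?_)
  simp [hx, mul_comm]

theorem HasWeakDirDerivOn.ae_eq [FiniteDimensional ℝ X] (h : HasWeakDirDerivOn μ e a g V)
    (h' : HasWeakDirDerivOn μ e a g' V) (hV : IsOpen V) (hg : MemLp g 2 μ) (hg' : MemLp g' 2 μ) :
    ∀ᵐ x ∂μ, x ∈ V → g x = g' x := by
  have hzero := hV.ae_eq_zero_of_integral_contDiff_smul_eq_zero (μ := μ) (f := fun x => g x - g' x)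
    (((hg.sub hg').locallyIntegrable one_le_two).locallyIntegrableOn V) fun φ hφ hc hφV => by
      have hφ1 : ContDiff ℝ 1 φ := hφ.of_le (by exact_mod_cast le_top)
      have hφ2 : MemLp φ 2 μ := hφ.continuous.memLp_of_hasCompactSupport hc
      have heq := (h φ hφ1 hc hφV).symm.trans (h' φ hφ1 hc hφV)
      simp only [smul_eq_mul, mul_comm (φ _), sub_mul]
      rw [integral_sub (f := fun x => g x * φ x) (g := fun x => g' x * φ x)
        (hg.integrable_mul hφ2) (hg'.integrable_mul hφ2), sub_eq_zero]
      exact neg_injective heq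
  exact hzero.mono fun x hx hxV => sub_eq_zero.1 (hx hxV)

theorem exists_hasWeakDirDerivOn_of_forall_isCompact [FiniteDimensional ℝ X] (hΩ : IsOpen Ω)
    (h : ∀ K ⊆ Ω, IsCompact K → ∃ g, MemLp g 2 μ ∧ HasWeakDirDerivOn μ e a g K) :
    ∃ g, (∀ K ⊆ Ω, IsCompact K → MemLp g 2 (μ.restrict K)) ∧ HasWeakDirDerivOn μ e a g Ω := by
  obtain ⟨V, K, hV, hVK, hK, hKΩ, hmono, hcover⟩ := exists_monotone_isOpen_subset_isCompact hΩ
  choose d hd hderiv using fun j => h (K j) (hKΩ j) (hK j)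
  obtain ⟨g, hg⟩ := exists_forall_ae_eq_of_forall_le (μ := μ) (V := V) (d := d) fun i j hij =>
    ((hderiv i).mono (hVK i)).ae_eq ((hderiv j).mono ((hmono hij).trans (hVK j))) (hV i) (hd i)
      (hd j)
  have hsub (S) (hSΩ : S ⊆ Ω) (hS : IsCompact S) : ∃ j, S ⊆ V j :=
    hS.elim_directed_cover V hV (hSΩ.trans hcover) hmono.directed_le
  refine ⟨g, fun S hSΩ hS => ?_, fun φ hφ hc hφΩ => ?_⟩
  · obtain ⟨j, hj⟩ := hsub S hSΩ hS
    refine ((hd j).restrict S).ae_eq ((ae_restrict_iff' hS.measurableSet).2 ?_)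
    exact (hg j).mono fun x hx hxS => (hx (hj hxS)).symm
  · obtain ⟨j, hj⟩ := hsub _ hφΩ hc
    rw [hderiv j φ hφ hc (hj.trans (hVK j))]
    congr 1
    refine integral_congr_ae ((hg j).mono fun x hx => ?_)
    by_cases hxφ : x ∈ tsupport φ
    · simp only [hx (hj hxφ)]
    · simp [image_eq_zero_of_notMem_tsupport hxφ]

end WeakDerivRepresentation

section Main

variable {n : ℕ} {Ω K : Set (EVec n)}

theorem MemLinfPerp.integrableOn_apply {N : ℕ} {χ : EVec n → Fin N → Fin n → ℝ}
    (hχ : MemLinfPerp Ω χ) (hΩ : MeasurableSet Ω) (hK : IsCompact K) (p : Fin N × Fin n) :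
    IntegrableOn (fun x => χ x p.1 p.2) K (volume.restrict Ω) := by
  obtain ⟨hmeas, ⟨C, hC⟩, -⟩ := hχ
  refine Measure.integrableOn_of_bounded (M := C) hK.measure_ne_top ?_ ?_
  · exact ((continuous_apply p.2).comp (continuous_apply p.1)).comp_aestronglyMeasurable hmeas
  · refine ae_restrict_of_ae ((ae_restrict_iff' hΩ).2 (ae_of_all _ fun x hx => ?_))
    calc ‖χ x p.1 p.2‖ = ‖flatten (χ x) p‖ := by simp
      _ ≤ ‖flatten (χ x)‖ := PiLp.norm_apply_le _ p
      _ ≤ C := mnorm_eq_norm_flatten (χ x) ▸ hC x hx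

theorem integrableOn_mnorm_sq {ι κ : Type*} [Fintype ι] [Fintype κ] {D : EVec n → ι → κ → ℝ}
    (hD : ∀ i k, MemLp (fun x => D x i k) 2 (volume.restrict K)) :
    IntegrableOn (fun x => mnorm (D x) ^ 2) K := by
  simp only [mnorm_eq_norm_flatten, EuclideanSpace.norm_sq_eq, Real.norm_eq_abs, sq_abs]
  exact integrable_finsetSum _ fun p _ => (hD p.1 p.2).integrable_sq

theorem exists_hasLocWeakDerivOn_of_hasL2BoundedDeriv {ι : Type*} [Fintype ι]
    {a : EVec n → ι → ℝ} (hΩ : IsOpen Ω)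
    (ha : ∀ K ⊆ Ω, IsCompact K → ∀ i, IntegrableOn (fun x => a x i) K (volume.restrict Ω))
    (h : ∀ K ⊆ Ω, IsCompact K → ∀ i s,
      HasL2BoundedDeriv (volume.restrict Ω) (stdVec s) (fun x => a x i) K) :
    ∃ Da : EVec n → ι → Fin n → ℝ, HasLocWeakDerivOn Ω a Da ∧
      ∀ K, IsCompact K → K ⊆ Ω → IntegrableOn (fun x => mnorm (Da x) ^ 2) K := by
  choose D hD hderiv using fun i s => exists_hasWeakDirDerivOn_of_forall_isCompact hΩ
    fun K hKΩ hK => (h K hKΩ hK i s).exists_memLp_hasWeakDirDerivOn (ha K hKΩ hK i)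
  have hDK (K) (hK : IsCompact K) (hKΩ : K ⊆ Ω) (i s) : MemLp (D i s) 2 (volume.restrict K) := by
    simpa only [Measure.restrict_restrict_of_subset hKΩ] using hD i s K hKΩ hK
  refine ⟨fun x i s => D i s x, ⟨fun K hK hKΩ => ?_, fun φ hφ hc hφΩ i s => hderiv i s φ hφ hc hφΩ⟩,
    fun K hK hKΩ => integrableOn_mnorm_sq (hDK K hK hKΩ)⟩
  have : IsFiniteMeasure (volume.restrict K) := ⟨by simpa using hK.measure_lt_top⟩
  exact Integrable.of_eval fun i => Integrable.of_eval fun s =>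
    (hDK K hK hKΩ i s).integrable one_le_two

end Main

theorem dual_solution_regularity_general
    {n N : ℕ} {Ω : Set (EVec n)} (hΩ : IsOpen Ω) {L : ℝ} (hL : 0 < L) {f f' f'' : ℝ → ℝ}
    (hderiv : ∀ t ∈ Set.Ici (0 : ℝ), HasDerivWithinAt f (f' t) (Set.Ici 0) t)
    (hderiv' : ∀ t ∈ Set.Ici (0 : ℝ), HasDerivWithinAt f' (f'' t) (Set.Ici 0) t)
    (hconv : ConvexOn ℝ (Set.Ici 0) f) (hf0 : f 0 = 0) (hf'0 : f' 0 = 0)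
    (hgrowth : ∀ t ∈ Set.Ici (0 : ℝ), f t ≤ L * (t + 1))
    (hsec : ∀ t ∈ Set.Ici (0 : ℝ), f'' t ≤ L * (1 + t)⁻¹)
    {finf : ℝ} (hfinf : Tendsto (fun t => f t / t) atTop (𝓝 finf))
    {T₀ : EVec n → Fin N → Fin n → ℝ} (hT : MemW2inf Ω T₀)
    (hTsmall : linfNormOn Ω T₀ < ENNReal.ofReal finf)
    {u : EVec n → Fin N → ℝ} {Du : EVec n → Fin N → Fin n → ℝ} (hu : HasWeakDerivOn Ω u Du)
    (hmin : ∀ (w : EVec n → Fin N → ℝ) (Dw : EVec n → Fin N → Fin n → ℝ), HasWeakDerivOn Ω w Dw →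
      FFgen Ω (fun z => f (mnorm z)) T₀ Du ≤ FFgen Ω (fun z => f (mnorm z)) T₀ Dw) :
    MemLinfPerp Ω (fun x => Amap f' (Du x) - T₀ x) ∧
    (∀ χ, MemLinfPerp Ω χ → Rdual Ω (fun z => f (mnorm z)) T₀ χ ≤
      Rdual Ω (fun z => f (mnorm z)) T₀ fun x => Amap f' (Du x) - T₀ x) ∧
    (∀ χ, MemLinfPerp Ω χ → Rdual Ω (fun z => f (mnorm z)) T₀ χ =
        Rdual Ω (fun z => f (mnorm z)) T₀ (fun x => Amap f' (Du x) - T₀ x) →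
      χ =ᵐ[volume.restrict Ω] fun x => Amap f' (Du x) - T₀ x) ∧
    ∃ Dσ : EVec n → (Fin N × Fin n) → Fin n → ℝ,
      HasLocWeakDerivOn Ω (fun x (p : Fin N × Fin n) => (Amap f' (Du x) - T₀ x) p.1 p.2) Dσ ∧
      ∀ K, IsCompact K → K ⊆ Ω → IntegrableOn (fun x => mnorm (Dσ x) ^ 2) K := by
  have h : IsLinearGrowthIntegrand f f' L :=
    isLinearGrowthIntegrand_of_secondDeriv_le hL hderiv hderiv' hconv hf0 hf'0 hgrowth hsec
  have hσ : MemLinfPerp Ω fun x => Amap f' (Du x) - T₀ x := h.memLinfPerp_of_minimal hΩ hT hu hmin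
  exact ⟨hσ, fun χ hχ => h.Rdual_le hΩ hT hu hσ hχ,
    fun χ hχ heq => h.ae_eq_of_Rdual_eq hΩ hT hu hσ hχ heq,
    exists_hasLocWeakDerivOn_of_hasL2BoundedDeriv hΩ
      (fun K _ hK p => hσ.integrableOn_apply hΩ.measurableSet hK p)
      fun K hKΩ hK p s => h.hasL2BoundedDeriv_stress hΩ hfinf hT hTsmall hu hσ hK hKΩ s p⟩

/-- **Theorem 4.13 (regularity of the dual solution).** Under the assumptions of the
main theorem, the dual problem for `F(·) = f(|·|)` has a unique solution
`σ ∈ W^{1,2}_loc(Ω;ℝ^{N×n}) ∩ L^∞_⊥(Ω;ℝ^{N×n})`, given by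
`σ = f'(|∇u|)|∇u|⁻¹∇u − T₀` a.e. in `Ω`, where `u` is the `W^{1,1}`-minimiser of `𝔉`. -/
theorem dual_solution_regularity
    {n N : ℕ} (Ω : Set (EVec n))
    (hΩ : IsLipschitzDomain Ω) (hΩbdd : Bornology.IsBounded Ω)
    (hΩsc : SimplyConnectedSpace Ω)
    (ν L : ℝ) (hν : 0 < ν) (hνL : ν ≤ L)
    (f f' f'' : ℝ → ℝ)
    (hderiv : ∀ t ∈ Set.Ici (0:ℝ), HasDerivWithinAt f (f' t) (Set.Ici 0) t)
    (hderiv' : ∀ t ∈ Set.Ici (0:ℝ), HasDerivWithinAt f' (f'' t) (Set.Ici 0) t)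
    (hf''cont : ContinuousOn f'' (Set.Ici 0))
    (hstrict : StrictConvexOn ℝ (Set.Ici 0) f)
    (hf0 : f 0 = 0) (hf'0 : f' 0 = 0)
    (hgrowth : ∀ t ∈ Set.Ici (0:ℝ), ν * t - L ≤ f t ∧ f t ≤ L * (t + 1))
    (hsec : ∀ t ∈ Set.Ici (0:ℝ), f'' t ≤ L * (1 + t)⁻¹)
    (finf : ℝ) (hfinf : Filter.Tendsto (fun t => f t / t) Filter.atTop (nhds finf))
    (T₀ : EVec n → Fin N → Fin n → ℝ)
    (hT : MemW2inf Ω T₀)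
    (hTsmall : linfNormOn Ω T₀ < ENNReal.ofReal finf)
    (u : EVec n → Fin N → ℝ) (Du : EVec n → Fin N → Fin n → ℝ)
    (hu : HasWeakDerivOn Ω u Du)
    (hmin : ∀ (w : EVec n → Fin N → ℝ) (Dw : EVec n → Fin N → Fin n → ℝ),
      HasWeakDerivOn Ω w Dw →
        FFgen Ω (fun z => f (mnorm z)) T₀ Du ≤ FFgen Ω (fun z => f (mnorm z)) T₀ Dw) :
    MemLinfPerp Ω (fun x => Amap f' (Du x) - T₀ x) ∧
    (∀ χ : EVec n → Fin N → Fin n → ℝ, MemLinfPerp Ω χ →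
      Rdual Ω (fun z => f (mnorm z)) T₀ χ ≤
        Rdual Ω (fun z => f (mnorm z)) T₀ (fun x => Amap f' (Du x) - T₀ x)) ∧
    (∀ χ : EVec n → Fin N → Fin n → ℝ, MemLinfPerp Ω χ →
      Rdual Ω (fun z => f (mnorm z)) T₀ χ =
        Rdual Ω (fun z => f (mnorm z)) T₀ (fun x => Amap f' (Du x) - T₀ x) →
      χ =ᵐ[volume.restrict Ω] fun x => Amap f' (Du x) - T₀ x) ∧
    -- `σ ∈ W^{1,2}_loc(Ω;ℝ^{N×n})`
    (∃ Dσ : EVec n → (Fin N × Fin n) → Fin n → ℝ,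
      HasLocWeakDerivOn Ω
        (fun x (p : Fin N × Fin n) => (Amap f' (Du x) - T₀ x) p.1 p.2) Dσ ∧
      ∀ K : Set (EVec n), IsCompact K → K ⊆ Ω →
        IntegrableOn (fun x => mnorm (Dσ x) ^ 2) K volume) :=
  dual_solution_regularity_general hΩ.1 (hν.trans_le hνL) hderiv hderiv' hstrict.convexOn hf0 hf'0
    (fun t ht => (hgrowth t ht).2) hsec hfinf hT hTsmall hu hmin
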